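/- arXiv:2208.04111 — 4 statements merged into one kernel-verified Lean document; each statement's English description precedes it below -/
import Mathlib

section
/- Let d ≥ 2 be an integer and let ε > 0 be fixed. For every choice of integers t = t(n) and b = b(n) with (1+ε)·n·log n/2 ≤ t ≤ n(n-1)/2 and b ≥ (1+ε)·d·n/2, Builder has a (t,b)-strategy such that the graph G_t is asymptotically almost surely d-connected. -/
open Filter SimpleGraph
open scoped Classical

noncomputable section

/-- The number of edges of the complete graph on `Fin n`. -/
def numEdges (n : ℕ) : ℕ := Fintype.card ((completeGraph (Fin n)).edgeSet)

/-- A uniformly random ordering of the edges of `K_n` is modelled as a uniformly random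
bijection from the edge set of `K_n` to `Fin (numEdges n)`; the edge proposed at the
(0-indexed) round `r` is the preimage of `r`. -/
abbrev EdgeOrdering (n : ℕ) : Type := ((completeGraph (Fin n)).edgeSet) ≃ Fin (numEdges n)

/-- The list `(e_1, …, e_t)` of the first `t` proposed edges, in the order of proposal. -/
def history {n : ℕ} (σ : EdgeOrdering n) (t : ℕ) : List (Sym2 (Fin n)) :=
  ((List.finRange (numEdges n)).filter (fun (r : Fin (numEdges n)) => decide ((r : ℕ) < t))).map
    (fun r => ((σ.symm r : ((completeGraph (Fin n)).edgeSet)) : Sym2 (Fin n)))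

/-- The probability of an event under the uniform measure on a finite type. -/
def Pr {α : Type*} [Fintype α] (P : α → Prop) : ℝ :=
  ((Finset.univ.filter P).card : ℝ) / (Fintype.card α : ℝ)

/-- A strategy of Builder: given the history `(e_1, …, e_s)` of edges proposed so far
(the current proposal `e_s` being the last entry), decide whether to accept `e_s`. -/
abbrev Strategy (n : ℕ) : Type := List (Sym2 (Fin n)) → Bool

/-- The graph `G_t` built by Builder after the first `t` rounds: its edges are the
edges proposed at some round `r ≤ t` and accepted by the strategy at that round. -/
def builderGraph {n : ℕ} (strat : Strategy n) (σ : EdgeOrdering n) (t : ℕ) :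
    SimpleGraph (Fin n) :=
  SimpleGraph.fromEdgeSet
    {e | ∃ r : Fin (numEdges n), (r : ℕ) < t ∧
        ((σ.symm r : ((completeGraph (Fin n)).edgeSet)) : Sym2 (Fin n)) = e ∧
        strat (history σ ((r : ℕ) + 1)) = true}

/-- The number of edges accepted by Builder during the first `t` rounds. -/
def numAccepted {n : ℕ} (strat : Strategy n) (σ : EdgeOrdering n) (t : ℕ) : ℕ :=
  (Finset.univ.filter (fun e : Sym2 (Fin n) => e ∈ (builderGraph strat σ t).edgeSet)).card

/-- A graph `G` is `d`-connected if it has at least `d + 1` vertices and removing any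
set of at most `d - 1` vertices leaves a connected graph. -/
def IsKConnected {V : Type*} [Fintype V] (d : ℕ) (G : SimpleGraph V) : Prop :=
  d + 1 ≤ Fintype.card V ∧
    ∀ S : Finset V, S.card ≤ d - 1 → (G.induce ((↑S : Set V)ᶜ)).Connected

set_option linter.unusedSectionVars false

namespace BG

section det
variable {V : Type*} [Fintype V] [DecidableEq V]

/-- external neighbourhood -/
def nb (E : Finset (Sym2 V)) (A : Finset V) : Finset V :=
  Finset.univ.filter (fun y => y ∉ A ∧ ∃ x ∈ A, s(x, y) ∈ E)

def eIn (E : Finset (Sym2 V)) (X : Finset V) : Finset (Sym2 V) :=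
  E.filter (fun e => ∀ v ∈ e, v ∈ X)

def dg (E : Finset (Sym2 V)) (v : V) : ℕ := (E.filter (fun e => v ∈ e)).card

def Sparse (g : ℕ) (H : Finset (Sym2 V)) : Prop :=
  ∀ X : Finset V, X.Nonempty → X.card ≤ g → (eIn H X).card + 1 ≤ X.card


lemma mem_nb {E : Finset (Sym2 V)} {A : Finset V} {y : V} :
    y ∈ nb E A ↔ y ∉ A ∧ ∃ x ∈ A, s(x, y) ∈ E := by
  simp [nb]

lemma nb_mono {E F : Finset (Sym2 V)} (h : E ⊆ F) (A : Finset V) : nb E A ⊆ nb F A := by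
  intro y hy
  rw [mem_nb] at *
  obtain ⟨h1, x, hx, h2⟩ := hy
  exact ⟨h1, x, hx, h h2⟩

lemma nb_submod (E : Finset (Sym2 V)) (A B : Finset V) :
    (nb E (A ∩ B)).card + (nb E (A ∪ B)).card ≤ (nb E A).card + (nb E B).card := by
  have h1 := Finset.card_union_add_card_inter (nb E (A ∩ B)) (nb E (A ∪ B))
  have h2 := Finset.card_union_add_card_inter (nb E A) (nb E B)
  have h3 : nb E (A ∩ B) ∪ nb E (A ∪ B) ⊆ nb E A ∪ nb E B := by
    intro y
    simp only [Finset.mem_union, mem_nb, Finset.mem_inter]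
    grind
  have h4 : nb E (A ∩ B) ∩ nb E (A ∪ B) ⊆ nb E A ∩ nb E B := by
    intro y
    simp only [Finset.mem_union, mem_nb, Finset.mem_inter]
    grind
  have := Finset.card_le_card h3
  have := Finset.card_le_card h4
  omega

lemma eIn_mono {E F : Finset (Sym2 V)} (h : E ⊆ F) (X : Finset V) : eIn E X ⊆ eIn F X :=
  Finset.filter_subset_filter _ h

lemma card_mem_nondiag {x : Sym2 V} (hx : ¬ x.IsDiag) :
    (Finset.univ.filter (fun v : V => v ∈ x)).card = 2 := by
  induction x using Sym2.ind with
  | _ a b =>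
    have hab : a ≠ b := by simpa using hx
    have : (Finset.univ.filter (fun v : V => v ∈ s(a, b))) = {a, b} := by
      ext v; simp
    rw [this, Finset.card_pair hab]

/-- small sets expand in locally sparse graphs of min degree `d`. -/
lemma frag {d g : ℕ} (hd : 2 ≤ d) {H : Finset (Sym2 V)} (hH : Sparse g H)
    (hnd : ∀ x ∈ H, ¬ x.IsDiag) (hdeg : ∀ v, d ≤ dg H v) {A : Finset V} (hA : A.Nonempty)
    (hAg : A.card + d ≤ g) : d ≤ (nb H A).card := by
  by_contra hcon
  push Not at hcon
  have hXd : Disjoint A (nb H A) := by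
    rw [Finset.disjoint_left]; intro a ha hb
    exact (mem_nb.1 hb).1 ha
  have hXc : (A ∪ nb H A).card = A.card + (nb H A).card := Finset.card_union_of_disjoint hXd
  have h1 := hH (A ∪ nb H A) (hA.mono Finset.subset_union_left) (by omega)
  have h2 := hH A hA (by omega)
  have h3 : ∑ v ∈ A, dg H v ≤ (eIn H (A ∪ nb H A)).card + (eIn H A).card := by
    have e1 : ∑ v ∈ A, dg H v = ∑ x ∈ H, (A.filter (fun v => v ∈ x)).card := by
      simp only [dg, Finset.card_filter]
      rw [Finset.sum_comm]
    have e2 : ∀ x ∈ H, (A.filter (fun v => v ∈ x)).card ≤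
        (if ∀ v ∈ x, v ∈ A ∪ nb H A then 1 else 0) + (if ∀ v ∈ x, v ∈ A then 1 else 0) := by
      intro x hx
      have hxd := hnd x hx
      induction x using Sym2.ind with
      | _ a b =>
        have hab : a ≠ b := by simpa using hxd
        by_cases ha : a ∈ A <;> by_cases hb : b ∈ A
        · have : (A.filter (fun v => v ∈ s(a, b))).card ≤ 2 := by
            rw [← card_mem_nondiag hxd]
            exact Finset.card_le_card (Finset.filter_subset_filter _ (Finset.subset_univ _))
          simpa [ha, hb] using this
        · have : A.filter (fun v => v ∈ s(a, b)) = {a} := by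
            ext v; simp; grind
          have hb' : b ∈ nb H A := mem_nb.2 ⟨hb, a, ha, hx⟩
          rw [this]; simp [ha, hb, hb']
        · have : A.filter (fun v => v ∈ s(a, b)) = {b} := by
            ext v; simp; grind
          have hb' : a ∈ nb H A := mem_nb.2 ⟨ha, b, hb, by rwa [Sym2.eq_swap]⟩
          rw [this]; simp [ha, hb, hb']
        · have : A.filter (fun v => v ∈ s(a, b)) = ∅ := by
            ext v; simp; grind
          rw [this]; simp
    rw [e1, eIn, eIn, Finset.card_filter, Finset.card_filter, ← Finset.sum_add_distrib]
    exact Finset.sum_le_sum e2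
  have h4 : A.card * d ≤ ∑ v ∈ A, dg H v := by
    rw [← smul_eq_mul]; exact Finset.card_nsmul_le_sum _ _ _ (fun v _ => hdeg v)
  have h5 : 1 ≤ A.card := hA.card_pos
  obtain ⟨d', rfl⟩ := Nat.exists_eq_add_of_le hd
  have h6 : A.card * (2 + d') = 2 * A.card + A.card * d' := by ring
  have h7 : d' ≤ A.card * d' := Nat.le_mul_of_pos_left _ h5
  omega

lemma indep_set {D : ℕ} (P : V → V → Prop) (U : Finset V) (hs : ∀ v w, P v w → P w v)
    (hD : ∀ v ∈ U, (U.filter (fun w => P v w)).card ≤ D) :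
    ∃ I ⊆ U, (∀ v ∈ I, ∀ w ∈ I, v ≠ w → ¬ P v w) ∧ U.card ≤ (D + 1) * I.card := by
  obtain ⟨I, hI, hmax⟩ := Finset.exists_max_image
    (U.powerset.filter (fun I => ∀ v ∈ I, ∀ w ∈ I, v ≠ w → ¬ P v w)) Finset.card
    ⟨∅, by simp⟩
  simp only [Finset.mem_filter, Finset.mem_powerset] at hI hmax
  refine ⟨I, hI.1, hI.2, ?_⟩
  have hsub : U ⊆ I.biUnion (fun v => insert v (U.filter (fun w => P v w))) := by
    intro u hu
    by_contra hcon
    simp only [Finset.mem_biUnion, Finset.mem_insert, Finset.mem_filter, not_exists, not_and,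
      not_or] at hcon
    have huI : u ∉ I := fun h => (hcon u h).1 rfl
    have := hmax (insert u I) ⟨Finset.insert_subset hu hI.1, ?_⟩
    · rw [Finset.card_insert_of_notMem huI] at this; omega
    · intro v hv w hw hvw hP
      rw [Finset.mem_insert] at hv hw
      rcases hv with rfl | hv <;> rcases hw with rfl | hw
      · exact hvw rfl
      · exact (hcon w hw).2 hu (hs _ _ hP)
      · exact (hcon v hv).2 hu hP
      · exact hI.2 v hv w hw hvw hP
  calc U.card ≤ _ := Finset.card_le_card hsub
    _ ≤ I.card * (D + 1) := by
        apply Finset.card_biUnion_le_card_mul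
        intro v hv
        exact (Finset.card_insert_le _ _).trans (by have := hD v (hI.1 hv); omega)
    _ = _ := Nat.mul_comm _ _

def IsCore (d : ℕ) (E : Finset (Sym2 V)) (C : Finset V) : Prop :=
  ∀ X ⊆ C, X.Nonempty → (nb E X ∩ C).card < d → C ⊆ X ∪ nb E X

lemma exists_core {d r : ℕ} (hd : 1 ≤ d) {E : Finset (Sym2 V)} {C0 : Finset V} (hr : 1 ≤ r)
    (hm : 4 * (d + 1) * r ≤ C0.card)
    (hE : ∀ X Y : Finset V, X ⊆ C0 → Y ⊆ C0 → Disjoint X Y → r ≤ X.card → r ≤ Y.card →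
      ∃ x ∈ X, ∃ y ∈ Y, s(x, y) ∈ E) :
    ∃ C ⊆ C0, C0.card ≤ C.card + r ∧ IsCore d E C := by
  obtain ⟨Z, hZ, hmax⟩ := Finset.exists_max_image
    (C0.powerset.filter (fun Z => Z.card ≤ r ∧ (nb E Z ∩ C0).card ≤ (d - 1) * Z.card)) Finset.card
    ⟨∅, by rw [Finset.mem_filter]; simp [nb]⟩
  simp only [Finset.mem_filter, Finset.mem_powerset] at hZ hmax
  obtain ⟨hZ0, hZr, hZn⟩ := hZ
  have key : ∀ X Y N : Finset V, X ∪ Y ∪ N = C0 \ Z → X.Nonempty → X.card ≤ Y.card →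
      Disjoint X Y → N.card < d → nb E X ∩ (C0 \ Z) ⊆ N → False := by
    intro X Y N hun hX hXY hdis hN hnb
    have hXC : X ⊆ C0 \ Z := by rw [← hun]; intro x hx; simp [hx]
    have hYC : Y ⊆ C0 \ Z := by rw [← hun]; intro x hx; simp [hx]
    have hXZ : Disjoint Z X := by
      rw [Finset.disjoint_left]; intro a ha hb
      exact (Finset.mem_sdiff.1 (hXC hb)).2 ha
    have hc : (Z ∪ X).card = Z.card + X.card := Finset.card_union_of_disjoint hXZ
    have hXpos := hX.card_pos
    have hsub : nb E (Z ∪ X) ∩ C0 ⊆ (nb E Z ∩ C0) ∪ N := by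
      intro y hy
      simp only [Finset.mem_inter, mem_nb, Finset.mem_union] at hy ⊢
      obtain ⟨⟨h1, x, hx, hxy⟩, hy0⟩ := hy
      push Not at h1
      rcases hx with hx | hx
      · left; exact ⟨⟨h1.1, x, hx, hxy⟩, hy0⟩
      · right; apply hnb
        simp only [Finset.mem_inter, mem_nb, Finset.mem_sdiff]
        exact ⟨⟨h1.2, x, hx, hxy⟩, hy0, h1.1⟩
    have hcard : (nb E (Z ∪ X) ∩ C0).card ≤ (d - 1) * Z.card + (d - 1) := by
      have := Finset.card_le_card hsub
      have := Finset.card_union_le (nb E Z ∩ C0) N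
      omega
    have hZXC : Z ∪ X ⊆ C0 := Finset.union_subset hZ0 (hXC.trans Finset.sdiff_subset)
    have hle : (d - 1) * Z.card + (d - 1) ≤ (d - 1) * (Z ∪ X).card := by
      rw [hc]
      have : (d - 1) * (Z.card + 1) ≤ (d - 1) * (Z.card + X.card) :=
        Nat.mul_le_mul_left _ (by omega)
      linarith
    have hbig : r < (Z ∪ X).card := by
      by_contra hcon
      push Not at hcon
      have := hmax (Z ∪ X) ⟨hZXC, hcon, hcard.trans hle⟩
      omega
    have hXYc : X.card + Y.card ≤ C0.card := by
      rw [← Finset.card_union_of_disjoint hdis]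
      apply Finset.card_le_card
      exact (Finset.union_subset hXC hYC).trans Finset.sdiff_subset
    have hY' : r ≤ ((C0 \ (Z ∪ X)) \ nb E (Z ∪ X)).card := by
      have e1 : (C0 \ (Z ∪ X)).card = C0.card - (Z ∪ X).card := Finset.card_sdiff_of_subset hZXC
      have e2 : (C0 \ (Z ∪ X)).card ≤ ((C0 \ (Z ∪ X)) \ nb E (Z ∪ X)).card +
          (nb E (Z ∪ X) ∩ C0).card := by
        have : C0 \ (Z ∪ X) ⊆ ((C0 \ (Z ∪ X)) \ nb E (Z ∪ X)) ∪ (nb E (Z ∪ X) ∩ C0) := by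
          intro y; simp only [Finset.mem_sdiff, Finset.mem_union, Finset.mem_inter]; tauto
        exact (Finset.card_le_card this).trans (Finset.card_union_le _ _)
      have e3 : (d - 1) * Z.card ≤ (d - 1) * r := Nat.mul_le_mul_left _ hZr
      have e5 : 4 * (d + 1) * r = 8 * r + 4 * ((d - 1) * r) := by
        obtain ⟨d', rfl⟩ := Nat.exists_eq_add_of_le hd
        rw [Nat.add_sub_cancel_left]; ring
      have e6 : d - 1 ≤ (d - 1) * r := Nat.le_mul_of_pos_right _ hr
      omega
    obtain ⟨x, hx, y, hy, hxy⟩ := hE (Z ∪ X) ((C0 \ (Z ∪ X)) \ nb E (Z ∪ X)) hZXC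
      (Finset.sdiff_subset.trans Finset.sdiff_subset)
      (by rw [Finset.disjoint_left]; intro a ha hb; simp only [Finset.mem_sdiff] at hb; tauto)
      hbig.le hY'
    simp only [Finset.mem_sdiff, mem_nb] at hy
    exact hy.2 ⟨hy.1.2, x, hx, hxy⟩
  refine ⟨C0 \ Z, Finset.sdiff_subset, ?_, ?_⟩
  · have := Finset.card_sdiff_of_subset hZ0
    omega
  · intro X hXC hX hN
    by_contra hcon
    set Y := (C0 \ Z) \ (X ∪ nb E X) with hY
    have hYne : Y.Nonempty := by
      rw [Finset.nonempty_iff_ne_empty]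
      intro h; apply hcon
      exact Finset.sdiff_eq_empty_iff_subset.1 h
    have hdis : Disjoint X Y := by
      rw [Finset.disjoint_left]; intro a ha hb
      simp only [hY, Finset.mem_sdiff, Finset.mem_union] at hb; tauto
    have hun : X ∪ Y ∪ (nb E X ∩ (C0 \ Z)) = C0 \ Z := by
      ext y
      have := @hXC y
      simp only [hY, Finset.mem_sdiff, Finset.mem_union, Finset.mem_inter] at this ⊢; tauto
    rcases le_total X.card Y.card with h | h
    · exact key X Y _ hun hX h hdis hN (Finset.Subset.refl _)
    · refine key Y X _ (by rw [Finset.union_comm Y X]; exact hun) hYne h hdis.symm hN ?_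
      intro y hy
      simp only [Finset.mem_inter] at hy ⊢
      refine ⟨?_, hy.2⟩
      obtain ⟨hy1, z, hz, hzy⟩ := mem_nb.1 hy.1
      by_contra hyn
      have hyX : y ∈ X := by
        by_contra hyX
        apply hy1
        simp only [hY, Finset.mem_sdiff, Finset.mem_union] at hy ⊢; tauto
      simp only [hY, Finset.mem_sdiff, Finset.mem_union, not_or] at hz
      exact hz.2.2 (mem_nb.2 ⟨hz.2.1, y, hyX, by rwa [Sym2.eq_swap]⟩)

def Inv (E : Finset (Sym2 V)) (C : Finset V) (k : ℕ) : Prop :=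
  ∀ A : Finset V, A.Nonempty → Disjoint A C → k ≤ (nb E A).card

def mins (E : Finset (Sym2 V)) (C : Finset V) (k : ℕ) : Finset (Finset V) :=
  Finset.univ.filter (fun A => A.Nonempty ∧ Disjoint A C ∧ (nb E A).card ≤ k ∧
    ∀ B ⊆ A, B.Nonempty → (nb E B).card ≤ k → B = A)

lemma mins_disj {E : Finset (Sym2 V)} {C : Finset V} {k : ℕ} (hI : Inv E C k) {A B : Finset V}
    (hA : A ∈ mins E C k) (hB : B ∈ mins E C k) (hAB : A ≠ B) : Disjoint A B := by
  simp only [mins, Finset.mem_filter, Finset.mem_univ, true_and] at hA hB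
  rw [Finset.disjoint_iff_inter_eq_empty]
  by_contra hne
  have hne' : (A ∩ B).Nonempty := Finset.nonempty_iff_ne_empty.2 hne
  have h1 := nb_submod E A B
  have h2 := hI (A ∪ B) (hA.1.mono Finset.subset_union_left)
    (Finset.disjoint_union_left.2 ⟨hA.2.1, hB.2.1⟩)
  have h3 : (nb E (A ∩ B)).card ≤ k := by have := hA.2.2.1; have := hB.2.2.1; omega
  have h4 := hA.2.2.2 _ Finset.inter_subset_left hne' h3
  have h5 := hB.2.2.2 _ Finset.inter_subset_right hne' h3
  exact hAB (h4.symm.trans h5)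

lemma mins_card {E : Finset (Sym2 V)} {C : Finset V} {k M : ℕ} (hI : Inv E C k)
    (hM : ∀ A ∈ mins E C k, M ≤ A.card) : (mins E C k).card * M ≤ Fintype.card V := by
  have h1 : ((mins E C k).biUnion id).card = ∑ A ∈ mins E C k, A.card := by
    apply Finset.card_biUnion
    intro A hA B hB hAB
    exact mins_disj hI hA hB hAB
  have h2 : ((mins E C k).biUnion id).card ≤ Fintype.card V := Finset.card_le_univ _
  have h3 : (mins E C k).card * M ≤ ∑ A ∈ mins E C k, A.card := by
    rw [← smul_eq_mul]; exact Finset.card_nsmul_le_sum _ _ _ hM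
  omega

lemma exists_min {E : Finset (Sym2 V)} {C : Finset V} {k : ℕ} {B : Finset V} (hB : B.Nonempty)
    (hBC : Disjoint B C) (hk : (nb E B).card ≤ k) : ∃ A ∈ mins E C k, A ⊆ B := by
  obtain ⟨A, hA, hmin⟩ := Finset.exists_min_image
    (B.powerset.filter (fun A => A.Nonempty ∧ (nb E A).card ≤ k)) Finset.card
    ⟨B, by simp [hB, hk]⟩
  simp only [Finset.mem_filter, Finset.mem_powerset] at hA hmin
  refine ⟨A, ?_, hA.1⟩
  simp only [mins, Finset.mem_filter, Finset.mem_univ, true_and]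
  refine ⟨hA.2.1, Finset.disjoint_of_subset_left hA.1 hBC, hA.2.2, ?_⟩
  intro D hD hDne hDk
  exact Finset.eq_of_subset_of_card_le hD (hmin D ⟨hD.trans hA.1, hDne, hDk⟩)

/-- after attaching every minimal tight set to `C` with `d` neighbours the level goes up. -/
lemma inv_succ {E F : Finset (Sym2 V)} {C : Finset V} {k d : ℕ} (hEF : E ⊆ F)
    (hkd : k < d) (hF : ∀ A ∈ mins E C k, d ≤ (nb F A ∩ C).card) : Inv F C (k + 1) := by
  intro B hB hBC
  by_contra hcon
  push Not at hcon
  have h1 : (nb E B).card ≤ k :=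
    (Finset.card_le_card (nb_mono hEF B)).trans (by omega)
  obtain ⟨A, hA, hAB⟩ := exists_min hB hBC h1
  have h2 := hF A hA
  have h3 : nb F A ∩ C ⊆ nb F B := by
    intro y hy
    rw [Finset.mem_inter, mem_nb] at hy
    obtain ⟨⟨_, x, hx, hxy⟩, hyC⟩ := hy
    exact mem_nb.2 ⟨fun h => Finset.disjoint_left.1 hBC h hyC, x, hAB hx, hxy⟩
  have := Finset.card_le_card h3
  omega

/-- cut form of `d`-connectivity. -/
def CutConn (d : ℕ) (E : Finset (Sym2 V)) : Prop :=
  ∀ X : Finset V, X.Nonempty → (nb E X).card < d → X ∪ nb E X = Finset.univ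

lemma cutConn_of {d : ℕ} {E : Finset (Sym2 V)} {C : Finset V} (hC : IsCore d E C)
    (hI : Inv E C d) : CutConn d E := by
  intro X hX hN
  by_contra hcon
  set Y := (X ∪ nb E X)ᶜ with hY
  have hYne : Y.Nonempty := by
    rw [Finset.nonempty_iff_ne_empty]
    intro h; exact hcon (Finset.compl_eq_empty_iff _ |>.1 h)
  have hXC : ¬ Disjoint X C := fun h => by have := hI X hX h; omega
  have hne : (X ∩ C).Nonempty := by
    rw [Finset.nonempty_iff_ne_empty]; intro h
    exact hXC (Finset.disjoint_iff_inter_eq_empty.2 h)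
  have h1 : nb E (X ∩ C) ∩ C ⊆ nb E X := by
    intro y hy
    simp only [Finset.mem_inter, mem_nb] at hy ⊢
    obtain ⟨⟨h1, x, hx, hxy⟩, hyC⟩ := hy
    exact ⟨fun h => h1 ⟨h, hyC⟩, x, hx.1, hxy⟩
  have h2 := hC (X ∩ C) Finset.inter_subset_right hne
    (lt_of_le_of_lt (Finset.card_le_card h1) hN)
  have h3 : Disjoint Y C := by
    rw [Finset.disjoint_left]; intro y hy hyC
    have h4 := h2 hyC
    rw [hY, Finset.mem_compl, Finset.mem_union] at hy
    push Not at hy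
    rw [Finset.mem_union] at h4
    rcases h4 with h4 | h4
    · exact hy.1 (Finset.mem_inter.1 h4).1
    · exact hy.2 (h1 (Finset.mem_inter.2 ⟨h4, hyC⟩))
  have h4 := hI Y hYne h3
  have h5 : nb E Y ⊆ nb E X := by
    intro z hz
    obtain ⟨hz1, y, hy, hyz⟩ := mem_nb.1 hz
    rw [hY, Finset.mem_compl, not_not, Finset.mem_union] at hz1
    rcases hz1 with hz1 | hz1
    · exfalso
      rw [hY, Finset.mem_compl, Finset.mem_union] at hy
      push Not at hy
      exact hy.2 (mem_nb.2 ⟨hy.1, z, hz1, by rwa [Sym2.eq_swap]⟩)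
    · exact hz1
  have := Finset.card_le_card h5
  omega

lemma isKConnected_of_cut {d : ℕ} (hd : 1 ≤ d) {E : Finset (Sym2 V)} (hE : CutConn d E)
    (hV : d + 1 ≤ Fintype.card V) (G : SimpleGraph V)
    (hG : ∀ u v, u ≠ v → s(u, v) ∈ E → G.Adj u v) : IsKConnected d G := by
  refine ⟨hV, ?_⟩
  intro S hS
  have hne : ∃ v, v ∉ S := by
    by_contra hcon
    push Not at hcon
    have : S = Finset.univ := Finset.eq_univ_iff_forall.2 hcon
    rw [this, Finset.card_univ] at hS
    omega
  obtain ⟨v, hv⟩ := hne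
  have hv' : v ∈ ((S : Set V)ᶜ) := by simpa using hv
  set K := G.induce ((S : Set V)ᶜ) with hK
  have hreach : ∀ w (hw : w ∈ ((S : Set V)ᶜ)), K.Reachable ⟨v, hv'⟩ ⟨w, hw⟩ := by
    set X : Finset V := Finset.univ.filter
      (fun w => ∃ hw : w ∈ ((S : Set V)ᶜ), K.Reachable ⟨v, hv'⟩ ⟨w, hw⟩) with hX
    have hvX : v ∈ X := by
      rw [hX, Finset.mem_filter]; exact ⟨Finset.mem_univ _, hv', SimpleGraph.Reachable.refl _⟩
    have hNS : nb E X ⊆ S := by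
      intro y hy
      obtain ⟨hyX, x, hx, hxy⟩ := mem_nb.1 hy
      by_contra hyS
      apply hyX
      rw [hX, Finset.mem_filter] at hx ⊢
      obtain ⟨_, hxS, hxr⟩ := hx
      have hyS' : y ∈ ((S : Set V)ᶜ) := by simpa using hyS
      refine ⟨Finset.mem_univ _, hyS', hxr.trans ?_⟩
      apply SimpleGraph.Adj.reachable
      rw [hK, SimpleGraph.comap_adj]
      apply hG _ _ _ hxy
      rintro rfl
      exact hyX (by rw [hX, Finset.mem_filter]; exact ⟨Finset.mem_univ _, hxS, hxr⟩)
    have h1 := hE X ⟨v, hvX⟩ (by have := Finset.card_le_card hNS; omega)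
    intro w hw
    have h2 : w ∈ X ∪ nb E X := by rw [h1]; exact Finset.mem_univ _
    rw [Finset.mem_union] at h2
    rcases h2 with h2 | h2
    · rw [hX, Finset.mem_filter] at h2; exact h2.2.2
    · exact absurd (hNS h2) (by simpa using hw)
  rw [SimpleGraph.connected_iff]
  refine ⟨?_, ⟨⟨v, hv'⟩⟩⟩
  intro a b
  exact (hreach a.1 a.2).symm.trans (hreach b.1 b.2)

end det
end BG

namespace BG

/-- parameters of the strategy -/
structure Prm (V : Type*) where
  d : ℕ
  g : ℕ
  r : ℕ
  T0 : ℕ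
  Ta : ℕ
  Tb : ℕ
  L : ℕ
  C0 : Finset V

def Prm.Tm {V : Type*} (p : Prm V) : ℕ := p.T0 + p.Ta
def Prm.T1 {V : Type*} (p : Prm V) : ℕ := p.Tm + p.Tb
def Prm.tt {V : Type*} (p : Prm V) : ℕ := p.T1 + p.d * p.L

section det
variable {V : Type*} [Fintype V] [DecidableEq V]

def core (p : Prm V) (E : Finset (Sym2 V)) : Finset V :=
  if h : ∃ C ⊆ p.C0, p.C0.card ≤ C.card + p.r ∧ IsCore p.d E C then h.choose else ∅

def rule (p : Prm V) (s : ℕ) (h : ℕ → Finset (Sym2 V)) (x : Sym2 V) : Prop :=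
  if s < p.T0 then ∀ v ∈ x, v ∈ p.C0
  else if s < p.Tm then
    (∀ v ∈ x, dg (h s \ h p.T0) v < p.d) ∧ Sparse p.g (insert x (h s \ h p.T0))
  else if s < p.T1 then
    (∃ v ∈ x, dg (h s \ h p.T0) v < p.d) ∧ Sparse p.g (insert x (h s \ h p.T0))
  else if s < p.tt then
    ∃ A ∈ mins (h (p.T1 + (s - p.T1) / p.L * p.L)) (core p (h p.T0)) ((s - p.T1) / p.L),
      ∃ a ∈ A, ∃ c ∈ core p (h p.T0), x = s(a, c) ∧ c ∉ nb (h s) A ∧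
        (nb (h s) A ∩ core p (h p.T0)).card < p.d
  else False

def hist (p : Prm V) (e : ℕ → Sym2 V) : ℕ → ℕ → Finset (Sym2 V)
  | 0 => fun _ => ∅
  | s + 1 => Function.update (hist p e s) (s + 1)
      (if rule p s (hist p e s) (e s) then insert (e s) (hist p e s s) else hist p e s s)

/-- edges accepted before round `s` -/
def G (p : Prm V) (e : ℕ → Sym2 V) (s : ℕ) : Finset (Sym2 V) := hist p e s s

/-- decision at round `s` -/
def dec (p : Prm V) (e : ℕ → Sym2 V) (s : ℕ) : Prop := rule p s (hist p e s) (e s)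

lemma hist_eq (p : Prm V) (e : ℕ → Sym2 V) {s i : ℕ} (h : i ≤ s) : hist p e s i = G p e i := by
  induction s with
  | zero => obtain rfl : i = 0 := by omega
            rfl
  | succ s ih =>
    rcases Nat.lt_or_ge i (s + 1) with h' | h'
    · rw [hist, Function.update_of_ne (by omega)]; exact ih (by omega)
    · obtain rfl : i = s + 1 := by omega
      rfl

lemma hist_congr (p : Prm V) {e e' : ℕ → Sym2 V} {s : ℕ} (h : ∀ i < s, e i = e' i) :
    hist p e s = hist p e' s := by
  induction s with
  | zero => rfl
  | succ s ih =>
    rw [hist, hist, ih (fun i hi => h i (by omega)), h s (by omega)]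

lemma G_congr (p : Prm V) {e e' : ℕ → Sym2 V} {s : ℕ} (h : ∀ i < s, e i = e' i) :
    G p e s = G p e' s := by rw [G, G, hist_congr p h]

lemma dec_congr (p : Prm V) {e e' : ℕ → Sym2 V} {s : ℕ} (h : ∀ i ≤ s, e i = e' i) :
    dec p e s ↔ dec p e' s := by
  rw [dec, dec, hist_congr p (fun i hi => h i hi.le), h s le_rfl]

lemma G_zero (p : Prm V) (e : ℕ → Sym2 V) : G p e 0 = ∅ := rfl

lemma G_succ (p : Prm V) (e : ℕ → Sym2 V) (s : ℕ) :
    G p e (s + 1) = if dec p e s then insert (e s) (G p e s) else G p e s := by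
  rw [G, hist, Function.update_self]; rfl

lemma G_mono (p : Prm V) (e : ℕ → Sym2 V) : Monotone (G p e) := by
  apply monotone_nat_of_le_succ
  intro s
  rw [G_succ]
  split_ifs
  · exact Finset.subset_insert _ _
  · exact le_rfl

lemma mem_G (p : Prm V) (e : ℕ → Sym2 V) (s : ℕ) (x : Sym2 V) :
    x ∈ G p e s ↔ ∃ i < s, e i = x ∧ dec p e i := by
  induction s with
  | zero => simp [G_zero]
  | succ s ih =>
    rw [G_succ]
    constructor
    · intro h
      split_ifs at h with hd
      · rcases Finset.mem_insert.1 h with h | h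
        · exact ⟨s, by omega, h.symm, hd⟩
        · obtain ⟨i, hi, h2⟩ := ih.1 h
          exact ⟨i, by omega, h2⟩
      · obtain ⟨i, hi, h2⟩ := ih.1 h
        exact ⟨i, by omega, h2⟩
    · rintro ⟨i, hi, h2, h3⟩
      rcases Nat.lt_succ_iff_lt_or_eq.1 hi with h | rfl
      · have := ih.2 ⟨i, h, h2, h3⟩
        split_ifs
        · exact Finset.mem_insert_of_mem this
        · exact this
      · rw [if_pos h3, h2]; exact Finset.mem_insert_self _ _

lemma dec_0 {p : Prm V} {e : ℕ → Sym2 V} {s : ℕ} (h : s < p.T0) :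
    dec p e s ↔ ∀ v ∈ e s, v ∈ p.C0 := by
  rw [dec, rule, if_pos h]

/-- bulk graph -/
def Hs (p : Prm V) (e : ℕ → Sym2 V) (s : ℕ) : Finset (Sym2 V) := G p e s \ G p e p.T0

lemma dec_a {p : Prm V} {e : ℕ → Sym2 V} {s : ℕ} (h0 : p.T0 ≤ s) (h : s < p.Tm) :
    dec p e s ↔ (∀ v ∈ e s, dg (Hs p e s) v < p.d) ∧ Sparse p.g (insert (e s) (Hs p e s)) := by
  rw [dec, rule, if_neg (by omega), if_pos h, hist_eq p e le_rfl, hist_eq p e h0, Hs]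

lemma dec_b {p : Prm V} {e : ℕ → Sym2 V} {s : ℕ} (h0 : p.Tm ≤ s) (h : s < p.T1) :
    dec p e s ↔ (∃ v ∈ e s, dg (Hs p e s) v < p.d) ∧ Sparse p.g (insert (e s) (Hs p e s)) := by
  have h1 : p.T0 ≤ s := by rw [Prm.Tm] at h0; omega
  rw [dec, rule, if_neg (by omega), if_neg (by omega), if_pos h, hist_eq p e le_rfl,
    hist_eq p e h1, Hs]

/-- the core used by the strategy -/
def Cr (p : Prm V) (e : ℕ → Sym2 V) : Finset V := core p (G p e p.T0)

/-- start of level `k` -/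
def sk (p : Prm V) (k : ℕ) : ℕ := p.T1 + k * p.L

lemma dec_c {p : Prm V} {e : ℕ → Sym2 V} {k i : ℕ} (hk : k < p.d) (hi : i < p.L) :
    dec p e (sk p k + i) ↔ ∃ A ∈ mins (G p e (sk p k)) (Cr p e) k,
      ∃ a ∈ A, ∃ c ∈ Cr p e, e (sk p k + i) = s(a, c) ∧ c ∉ nb (G p e (sk p k + i)) A ∧
        (nb (G p e (sk p k + i)) A ∩ Cr p e).card < p.d := by
  have h1 : p.T0 ≤ p.Tm := by rw [Prm.Tm]; omega
  have h2 : p.Tm ≤ p.T1 := by rw [Prm.T1]; omega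
  have h3 : p.T1 ≤ sk p k := by rw [sk]; omega
  have h4 : sk p k + i < p.tt := by
    rw [sk, Prm.tt]
    have : (k + 1) * p.L ≤ p.d * p.L := Nat.mul_le_mul_right _ hk
    linarith
  have h5 : (sk p k + i - p.T1) / p.L = k := by
    have : sk p k + i - p.T1 = i + k * p.L := by rw [sk]; omega
    rw [this, Nat.add_mul_div_right _ _ (by omega), Nat.div_eq_of_lt hi, zero_add]
  have h6 : p.T1 + k * p.L = sk p k := rfl
  rw [dec, rule, if_neg (by omega), if_neg (by omega), if_neg (by omega), if_pos h4, h5, h6,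
    hist_eq p e le_rfl, hist_eq p e (by omega : p.T0 ≤ _), hist_eq p e (by omega : sk p k ≤ _)]
  rfl

/-- the deterministic properties of the proposal sequence that we use -/
structure Good (p : Prm V) (e : ℕ → Sym2 V) (M β : ℕ) : Prop where
  inj : ∀ i < p.tt, ∀ j < p.tt, e i = e j → i = j
  nd : ∀ i < p.tt, ¬ (e i).IsDiag
  a1 : ∀ X Y : Finset V, X ⊆ p.C0 → Y ⊆ p.C0 → Disjoint X Y → p.r ≤ X.card → p.r ≤ Y.card →
      ∃ s < p.T0, ∃ x ∈ X, ∃ y ∈ Y, e s = s(x, y)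
  a2 : ∀ X Y : Finset V, Disjoint X Y → p.r ≤ X.card → p.r ≤ Y.card →
      ∃ s, p.T0 ≤ s ∧ s < p.Tm ∧ ∃ x ∈ X, ∃ y ∈ Y, e s = s(x, y)
  a3 : ∀ v, p.d + 1 ≤ ((Finset.Ico p.Tm p.T1).filter (fun s => v ∈ e s)).card
  a4 : ∀ X : Finset V, X.card ≤ 2 * p.g →
      ((Finset.range p.T1).filter (fun s => ∀ v ∈ e s, v ∈ X)).card ≤ X.card
  a5 : ((Finset.range p.T0).filter (fun s => ∀ v ∈ e s, v ∈ p.C0)).card ≤ β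
  a6 : ∀ k < p.d, Inv (G p e (sk p k)) (Cr p e) k → ∀ A ∈ mins (G p e (sk p k)) (Cr p e) k,
      M ≤ A.card → ∀ D ⊆ Cr p e, D.card = p.d - 1 →
      ∃ i < p.L, ∃ a ∈ A, ∃ c ∈ Cr p e, c ∉ D ∧ e (sk p k + i) = s(a, c)

/-- relations between the parameters -/
structure OK (p : Prm V) (M : ℕ) : Prop where
  hd : 2 ≤ p.d
  hr : 1 ≤ p.r
  hm : 4 * (p.d + 1) * p.r ≤ p.C0.card
  hg : M + p.d ≤ p.g

section
variable {p : Prm V} {e : ℕ → Sym2 V} {M β : ℕ} (ok : OK p M) (gd : Good p e M β)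
include ok gd

lemma core_spec : Cr p e ⊆ p.C0 ∧ p.C0.card ≤ (Cr p e).card + p.r ∧
    IsCore p.d (G p e p.T0) (Cr p e) := by
  have h : ∃ C ⊆ p.C0, p.C0.card ≤ C.card + p.r ∧ IsCore p.d (G p e p.T0) C := by
    apply exists_core (by have := ok.hd; omega) ok.hr ok.hm
    intro X Y hX hY hd h1 h2
    obtain ⟨s, hs, x, hx, y, hy, hxy⟩ := gd.a1 X Y hX hY hd h1 h2
    refine ⟨x, hx, y, hy, (mem_G _ _ _ _).2 ⟨s, hs, hxy, (dec_0 hs).2 ?_⟩⟩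
    rw [hxy]
    intro v hv
    rcases Sym2.mem_iff.1 hv with rfl | rfl
    · exact hX hx
    · exact hY hy
  have : Cr p e = h.choose := by rw [Cr, core, dif_pos h]
  rw [this]
  exact h.choose_spec

lemma not_mem_G {i s : ℕ} (hi : i < p.tt) (hs : s ≤ i) : e i ∉ G p e s := by
  intro h
  obtain ⟨j, hj, h1, _⟩ := (mem_G _ _ _ _).1 h
  have := gd.inj j (by omega) i hi h1
  omega

lemma T1_le : p.T1 ≤ p.tt := by rw [Prm.tt]; omega
lemma T0_le : p.T0 ≤ p.Tm := by rw [Prm.Tm]; omega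
lemma Tm_le : p.Tm ≤ p.T1 := by rw [Prm.T1]; omega

lemma Hs_succ_acc {s : ℕ} (h0 : p.T0 ≤ s) (h : s < p.T1) (hd : dec p e s) :
    Hs p e (s + 1) = insert (e s) (Hs p e s) := by
  have h1 := T1_le ok gd
  rw [Hs, Hs, G_succ, if_pos hd, Finset.insert_sdiff_of_notMem]
  exact not_mem_G ok gd (by omega) h0


lemma Hs_succ_rej {s : ℕ} (hd : ¬ dec p e s) : Hs p e (s + 1) = Hs p e s := by
  rw [Hs, Hs, G_succ, if_neg hd]

lemma Hs_mono {s s' : ℕ} (h : s ≤ s') : Hs p e s ⊆ Hs p e s' :=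
  Finset.sdiff_subset_sdiff (G_mono p e h) le_rfl

lemma Hs_T0 : Hs p e p.T0 = ∅ := by rw [Hs]; simp

lemma not_mem_Hs {i s : ℕ} (hi : i < p.tt) (hs : s ≤ i) : e i ∉ Hs p e s := by
  intro h
  exact not_mem_G ok gd hi hs (Finset.mem_sdiff.1 h).1

lemma dec_sparse {s : ℕ} (h0 : p.T0 ≤ s) (h : s < p.T1) (hd : dec p e s) :
    Sparse p.g (insert (e s) (Hs p e s)) := by
  rcases Nat.lt_or_ge s p.Tm with h1 | h1
  · exact ((dec_a h0 h1).1 hd).2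
  · exact ((dec_b h1 h).1 hd).2

lemma Hs_sparse {s : ℕ} (h0 : p.T0 ≤ s) (h : s ≤ p.T1) : Sparse p.g (Hs p e s) := by
  induction s, h0 using Nat.le_induction with
  | base =>
    rw [Hs_T0 ok gd]
    intro X hX _
    have := hX.card_pos
    simp [eIn]; omega
  | succ s hs ih =>
    by_cases hd : dec p e s
    · rw [Hs_succ_acc ok gd hs (by omega) hd]
      exact dec_sparse ok gd hs (by omega) hd
    · rw [Hs_succ_rej ok gd hd]; exact ih (by omega)

lemma Hs_nd {s : ℕ} (h : s ≤ p.tt) : ∀ x ∈ Hs p e s, ¬ x.IsDiag := by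
  intro x hx
  obtain ⟨j, hj, rfl, _⟩ := (mem_G _ _ _ _).1 (Finset.mem_sdiff.1 hx).1
  exact gd.nd j (by omega)

/-- a rejection because of local sparsity -/
def Rej (p : Prm V) (e : ℕ → Sym2 V) (v : V) : Finset (Sym2 V) :=
  ((Finset.Ico p.T0 p.T1).filter
    (fun s => v ∈ e s ∧ ¬ Sparse p.g (insert (e s) (Hs p e s)))).image e

lemma rej_witness {s : ℕ} (h0 : p.T0 ≤ s) (h : s < p.T1)
    (hs : ¬ Sparse p.g (insert (e s) (Hs p e s))) :
    ∃ X : Finset V, X.card ≤ p.g ∧ (∀ v ∈ e s, v ∈ X) ∧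
      X.card ≤ (eIn (Hs p e p.T1) X).card + 1 := by
  rw [Sparse] at hs
  push Not at hs
  obtain ⟨X, hX, hXg, hXc⟩ := hs
  have h1 := Hs_sparse ok gd h0 h.le X hX hXg
  have h2 : (eIn (Hs p e s) X).card ≤ (eIn (Hs p e p.T1) X).card :=
    Finset.card_le_card (eIn_mono (Hs_mono ok gd h.le) X)
  by_cases hin : ∀ v ∈ e s, v ∈ X
  · refine ⟨X, hXg, hin, ?_⟩
    have h3 : (eIn (insert (e s) (Hs p e s)) X).card ≤ (eIn (Hs p e s) X).card + 1 := by
      rw [eIn, Finset.filter_insert, if_pos hin]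
      exact Finset.card_insert_le _ _
    omega
  · have h3 : eIn (insert (e s) (Hs p e s)) X = eIn (Hs p e s) X := by
      rw [eIn, Finset.filter_insert, if_neg hin]; rfl
    rw [h3] at hXc
    omega

lemma rej_card (v : V) : (Rej p e v).card ≤ 1 := by
  rw [Finset.card_le_one]
  intro x hx y hy
  simp only [Rej, Finset.mem_image, Finset.mem_filter, Finset.mem_Ico] at hx hy
  obtain ⟨i, ⟨⟨hi0, hi1⟩, hvi, hri⟩, rfl⟩ := hx
  obtain ⟨j, ⟨⟨hj0, hj1⟩, hvj, hrj⟩, rfl⟩ := hy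
  by_contra hne
  obtain ⟨X, hXg, hXi, hXc⟩ := rej_witness ok gd hi0 hi1 hri
  obtain ⟨Y, hYg, hYj, hYc⟩ := rej_witness ok gd hj0 hj1 hrj
  set H := Hs p e p.T1 with hH
  have hT := T1_le ok gd
  have hsp := Hs_sparse ok gd (by have := T0_le ok gd; have := Tm_le ok gd; omega) le_rfl
  rw [← hH] at hsp
  have hXY : (X ∩ Y).Nonempty := ⟨v, Finset.mem_inter.2 ⟨hXi v hvi, hYj v hvj⟩⟩
  have h1 := hsp _ hXY ((Finset.card_le_card Finset.inter_subset_left).trans hXg)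
  have h2 := Finset.card_union_add_card_inter X Y
  have h3 := Finset.card_union_add_card_inter (eIn H X) (eIn H Y)
  have h4 : eIn H X ∩ eIn H Y = eIn H (X ∩ Y) := by
    ext x; simp only [eIn, Finset.mem_inter, Finset.mem_filter]; grind
  have h5 : eIn H X ∪ eIn H Y ⊆ eIn H (X ∪ Y) := by
    intro x; simp only [eIn, Finset.mem_union, Finset.mem_filter]; grind
  have h6 := Finset.card_le_card h5
  rw [h4] at h3
  have hnot : ∀ i, p.T0 ≤ i → i < p.T1 → ¬ Sparse p.g (insert (e i) (Hs p e i)) → e i ∉ H := by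
    intro i h0 h1 h2 h3
    obtain ⟨k, hk, hk1, hk2⟩ := (mem_G _ _ _ _).1 (Finset.mem_sdiff.1 h3).1
    obtain rfl := gd.inj k (by omega) i (by omega) hk1
    exact h2 (dec_sparse ok gd h0 h1 hk2)
  have hi' := hnot i hi0 hi1 hri
  have hj' := hnot j hj0 hj1 hrj
  have h7 : (insert (e i) (insert (e j) (eIn H (X ∪ Y)))).card = (eIn H (X ∪ Y)).card + 2 := by
    rw [Finset.card_insert_of_notMem, Finset.card_insert_of_notMem]
    · intro h; exact hj' (Finset.mem_filter.1 h).1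
    · intro h; rcases Finset.mem_insert.1 h with h | h
      · exact hne h
      · exact hi' (Finset.mem_filter.1 h).1
  have h8 : insert (e i) (insert (e j) (eIn H (X ∪ Y))) ⊆
      ((Finset.range p.T1).filter (fun s => ∀ v ∈ e s, v ∈ X ∪ Y)).image e := by
    intro x hx
    simp only [Finset.mem_insert] at hx
    rw [Finset.mem_image]
    rcases hx with rfl | rfl | hx
    · refine ⟨i, ?_, rfl⟩
      rw [Finset.mem_filter, Finset.mem_range]
      exact ⟨hi1, fun v hv => Finset.mem_union_left _ (hXi v hv)⟩
    · refine ⟨j, ?_, rfl⟩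
      rw [Finset.mem_filter, Finset.mem_range]
      exact ⟨hj1, fun v hv => Finset.mem_union_right _ (hYj v hv)⟩
    · obtain ⟨hx1, hx2⟩ := Finset.mem_filter.1 hx
      obtain ⟨k, hk, rfl, hk2⟩ := (mem_G _ _ _ _).1 (Finset.mem_sdiff.1 hx1).1
      refine ⟨k, ?_, rfl⟩
      rw [Finset.mem_filter, Finset.mem_range]
      exact ⟨hk, hx2⟩
  have h9 := (Finset.card_le_card h8).trans Finset.card_image_le
  have h10 := gd.a4 (X ∪ Y) (by omega)
  omega

lemma dg_mono {E F : Finset (Sym2 V)} (h : E ⊆ F) (v : V) : dg E v ≤ dg F v :=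
  Finset.card_le_card (Finset.filter_subset_filter _ h)

/-- after phase b everything is saturated -/
lemma saturated (v : V) : p.d ≤ dg (Hs p e p.T1) v := by
  by_contra hcon
  push Not at hcon
  have hT := T1_le ok gd
  have hT0 := T0_le ok gd
  have h1 : ((Finset.Ico p.Tm p.T1).filter (fun s => v ∈ e s)).image e ⊆
      (Hs p e p.T1).filter (fun x => v ∈ x) ∪ Rej p e v := by
    intro x hx
    obtain ⟨s, hs, rfl⟩ := Finset.mem_image.1 hx
    rw [Finset.mem_filter, Finset.mem_Ico] at hs
    obtain ⟨⟨hs0, hs1⟩, hv⟩ := hs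
    rw [Finset.mem_union]
    by_cases hsp : Sparse p.g (insert (e s) (Hs p e s))
    · left
      have hdec : dec p e s := by
        rw [dec_b hs0 hs1]
        exact ⟨⟨v, hv, lt_of_le_of_lt (dg_mono ok gd (Hs_mono ok gd hs1.le) v) hcon⟩, hsp⟩
      rw [Finset.mem_filter]
      refine ⟨Hs_mono ok gd (Nat.succ_le_of_lt hs1) ?_, hv⟩
      rw [Hs_succ_acc ok gd (by omega) hs1 hdec]
      exact Finset.mem_insert_self _ _
    · right
      rw [Rej, Finset.mem_image]
      refine ⟨s, ?_, rfl⟩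
      rw [Finset.mem_filter, Finset.mem_Ico]
      exact ⟨⟨by omega, hs1⟩, hv, hsp⟩
  have h2 := Finset.card_le_card h1
  rw [Finset.card_image_of_injOn] at h2
  · have h3 := gd.a3 v
    have h4 := Finset.card_union_le ((Hs p e p.T1).filter (fun x => v ∈ x)) (Rej p e v)
    have h5 := rej_card ok gd v
    rw [dg] at hcon
    omega
  · intro i hi j hj hij
    simp only [Finset.coe_filter, Finset.mem_Ico, Set.mem_setOf_eq] at hi hj
    exact gd.inj i (by omega) j (by omega) hij

/-- unsaturated vertices after phase a -/
lemma unsat_card : (Finset.univ.filter (fun v => dg (Hs p e p.Tm) v < p.d)).card ≤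
    (p.d + 1) * (2 * p.r) := by
  set U := Finset.univ.filter (fun v => dg (Hs p e p.Tm) v < p.d) with hU
  have hT := T1_le ok gd
  have hT0 := T0_le ok gd
  have hTm := Tm_le ok gd
  set P : V → V → Prop := fun v w => ∃ s, p.T0 ≤ s ∧ s < p.Tm ∧ e s = s(v, w) with hP
  obtain ⟨I, hIU, hI, hc⟩ := indep_set (D := p.d) P U
    (by rintro v w ⟨s, h1, h2, h3⟩; exact ⟨s, h1, h2, by rw [h3, Sym2.eq_swap]⟩) (by
      intro v hv
      have h1 : (U.filter (fun w => P v w)).image (fun w => s(v, w)) ⊆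
          (Hs p e p.Tm).filter (fun x => v ∈ x) ∪ Rej p e v := by
        intro x hx
        obtain ⟨w, hw, rfl⟩ := Finset.mem_image.1 hx
        rw [Finset.mem_filter] at hw
        obtain ⟨hwU, s, hs0, hs1, hsx⟩ := hw
        rw [hU, Finset.mem_filter] at hv hwU
        rw [← hsx, Finset.mem_union]
        have hvs : v ∈ e s := by rw [hsx]; exact Sym2.mem_mk_left _ _
        by_cases hsp : Sparse p.g (insert (e s) (Hs p e s))
        · left
          have hdec : dec p e s := by
            rw [dec_a hs0 hs1]
            refine ⟨?_, hsp⟩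
            intro u hu
            refine lt_of_le_of_lt (dg_mono ok gd (Hs_mono ok gd hs1.le) u) ?_
            rw [hsx, Sym2.mem_iff] at hu
            rcases hu with rfl | rfl
            · exact hv.2
            · exact hwU.2
          rw [Finset.mem_filter]
          refine ⟨Hs_mono ok gd (Nat.succ_le_of_lt hs1) ?_, hvs⟩
          rw [Hs_succ_acc ok gd (by omega) (by omega) hdec]
          exact Finset.mem_insert_self _ _
        · right
          rw [Rej, Finset.mem_image]
          refine ⟨s, ?_, rfl⟩
          rw [Finset.mem_filter, Finset.mem_Ico]
          exact ⟨⟨by omega, by omega⟩, hvs, hsp⟩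
      have h2 := Finset.card_le_card h1
      rw [Finset.card_image_of_injective _ (fun a b hab => Sym2.congr_right.1 hab)] at h2
      have h4 := Finset.card_union_le ((Hs p e p.Tm).filter (fun x => v ∈ x)) (Rej p e v)
      have h5 := rej_card ok gd v
      rw [hU, Finset.mem_filter, dg] at hv
      omega)
  have hIr : I.card ≤ 2 * p.r := by
    by_contra hcon
    push Not at hcon
    obtain ⟨X, hXI, hXc⟩ := Finset.exists_subset_card_eq (s := I) (n := p.r) (by omega)
    have h1 := Finset.card_sdiff_of_subset hXI
    obtain ⟨s, h0, h2, x, hx, y, hy, hxy⟩ := gd.a2 X (I \ X) Finset.disjoint_sdiff (by omega)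
      (by omega)
    rw [Finset.mem_sdiff] at hy
    exact hI x (hXI hx) y hy.1 (by rintro rfl; exact hy.2 hx) ⟨s, h0, h2, hxy⟩
  exact hc.trans (Nat.mul_le_mul_left _ hIr)

end
end det
end BG

namespace BG
section det3
variable {V : Type*} [Fintype V] [DecidableEq V]

def phi (d : ℕ) (H : Finset (Sym2 V)) : ℕ := ∑ v, min d (dg H v)

lemma dg_insert {x : Sym2 V} {H : Finset (Sym2 V)} (hx : x ∉ H) (v : V) :
    dg (insert x H) v = dg H v + if v ∈ x then 1 else 0 := by
  rw [dg, dg, Finset.filter_insert]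
  split_ifs
  · rw [Finset.card_insert_of_notMem]
    intro h
    exact hx (Finset.mem_filter.1 h).1
  · rfl

lemma phi_insert (d : ℕ) {x : Sym2 V} {H : Finset (Sym2 V)} (hx : x ∉ H) :
    phi d (insert x H) = phi d H + (Finset.univ.filter (fun v => v ∈ x ∧ dg H v < d)).card := by
  rw [phi, phi, Finset.card_filter, ← Finset.sum_add_distrib]
  apply Finset.sum_congr rfl
  intro v _
  rw [dg_insert hx]
  by_cases h1 : v ∈ x <;> by_cases h2 : dg H v < d <;> simp [h1, h2] <;> omega

lemma phi_le (d : ℕ) (H : Finset (Sym2 V)) : phi d H ≤ d * Fintype.card V := by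
  rw [phi, Nat.mul_comm]
  have := Finset.sum_le_card_nsmul (Finset.univ : Finset V) (fun v => min d (dg H v)) d
    (fun v _ => min_le_left _ _)
  simpa using this

lemma phi_ge (d : ℕ) (H : Finset (Sym2 V)) :
    d * Fintype.card V ≤ phi d H + d * (Finset.univ.filter (fun v => dg H v < d)).card := by
  rw [phi, Finset.card_filter, Finset.mul_sum, ← Finset.sum_add_distrib]
  have : ∑ v : V, d = d * Fintype.card V := by simp [Nat.mul_comm]
  rw [← this]
  apply Finset.sum_le_sum
  intro v _
  by_cases h : dg H v < d <;> simp [h]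
  omega

section
variable {p : Prm V} {e : ℕ → Sym2 V} {M β : ℕ} (ok : OK p M) (gd : Good p e M β)
include ok gd

lemma phase_a {s : ℕ} (h0 : p.T0 ≤ s) (h : s ≤ p.Tm) :
    2 * (Hs p e s).card ≤ phi p.d (Hs p e s) := by
  have hT := T1_le ok gd
  have hTm := Tm_le ok gd
  induction s, h0 using Nat.le_induction with
  | base => rw [Hs_T0 ok gd]; simp
  | succ s hs ih =>
    specialize ih (by omega)
    by_cases hd : dec p e s
    · have hn := not_mem_Hs ok gd (i := s) (s := s) (by omega) le_rfl
      rw [Hs_succ_acc ok gd hs (by omega) hd, phi_insert _ hn, Finset.card_insert_of_notMem hn]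
      have h1 := ((dec_a hs (by omega)).1 hd).1
      have h2 := card_mem_nondiag (gd.nd s (by omega))
      have h3 : (Finset.univ.filter (fun v => v ∈ e s ∧ dg (Hs p e s) v < p.d)) =
          Finset.univ.filter (fun v => v ∈ e s) := by
        ext v
        simp only [Finset.mem_filter, Finset.mem_univ, true_and]
        exact ⟨fun h => h.1, fun h => ⟨h, h1 v h⟩⟩
      rw [h3, h2]
      omega
    · rw [Hs_succ_rej ok gd hd]; exact ih

lemma phase_b {s : ℕ} (h0 : p.Tm ≤ s) (h : s ≤ p.T1) :
    (Hs p e s).card + phi p.d (Hs p e p.Tm) ≤ (Hs p e p.Tm).card + phi p.d (Hs p e s) := by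
  have hT := T1_le ok gd
  have hTm := T0_le ok gd
  induction s, h0 using Nat.le_induction with
  | base => exact le_rfl
  | succ s hs ih =>
    specialize ih (by omega)
    by_cases hd : dec p e s
    · have hn := not_mem_Hs ok gd (i := s) (s := s) (by omega) le_rfl
      rw [Hs_succ_acc ok gd (by omega) (by omega) hd, phi_insert _ hn,
        Finset.card_insert_of_notMem hn]
      obtain ⟨v, hv, hv2⟩ := ((dec_b hs (by omega)).1 hd).1
      have : 0 < (Finset.univ.filter (fun v => v ∈ e s ∧ dg (Hs p e s) v < p.d)).card :=
        Finset.card_pos.2 ⟨v, by simp [hv, hv2]⟩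
      omega
    · rw [Hs_succ_rej ok gd hd]; exact ih

lemma Hs_card : 2 * (Hs p e p.T1).card ≤ p.d * Fintype.card V +
    2 * (p.d * ((p.d + 1) * (2 * p.r))) := by
  have h1 := phase_a ok gd (T0_le ok gd) le_rfl
  have h2 := phase_b ok gd (Tm_le ok gd) le_rfl
  have h3 := phi_le p.d (Hs p e p.Tm)
  have h4 := phi_le p.d (Hs p e p.T1)
  have h5 := phi_ge p.d (Hs p e p.Tm)
  have h6 := Nat.mul_le_mul_left p.d (unsat_card ok gd)
  omega

lemma G_T0_card : (G p e p.T0).card ≤ β := by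
  refine le_trans ?_ gd.a5
  refine le_trans (Finset.card_le_card (t := ((Finset.range p.T0).filter
    (fun s => ∀ v ∈ e s, v ∈ p.C0)).image e) ?_) Finset.card_image_le
  intro x hx
  obtain ⟨i, hi, rfl, h⟩ := (mem_G _ _ _ _).1 hx
  refine Finset.mem_image.2 ⟨i, ?_, rfl⟩
  rw [Finset.mem_filter, Finset.mem_range]
  exact ⟨hi, (dec_0 hi).1 h⟩

lemma G_T1_card : (G p e p.T1).card ≤ β + (Hs p e p.T1).card := by
  have h1 := G_T0_card ok gd
  have h2 : G p e p.T1 ⊆ G p e p.T0 ∪ Hs p e p.T1 := by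
    intro x hx
    by_cases h : x ∈ G p e p.T0
    · exact Finset.mem_union_left _ h
    · exact Finset.mem_union_right _ (Finset.mem_sdiff.2 ⟨hx, h⟩)
  have h3 := Finset.card_le_card h2
  have h4 := Finset.card_union_le (G p e p.T0) (Hs p e p.T1)
  omega

lemma mins_big {k : ℕ} (hk : k < p.d) {A : Finset V} (hA : A ∈ mins (G p e (sk p k)) (Cr p e) k) :
    M ≤ A.card := by
  by_contra hcon
  push Not at hcon
  rw [mins, Finset.mem_filter] at hA
  have h1 := frag (d := p.d) (g := p.g) ok.hd (Hs_sparse ok gd (s := p.T1)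
    ((T0_le ok gd).trans (Tm_le ok gd)) le_rfl) (Hs_nd ok gd (T1_le ok gd)) (saturated ok gd)
    hA.2.1 (by have := ok.hg; omega)
  have h2 : Hs p e p.T1 ⊆ G p e (sk p k) :=
    Finset.sdiff_subset.trans (G_mono p e (by rw [sk]; omega))
  have h3 := Finset.card_le_card (nb_mono h2 A)
  omega

lemma Cr_card : p.d ≤ (Cr p e).card := by
  have h1 := (core_spec ok gd).2.1
  have h2 := ok.hm
  have h3 := ok.hr
  nlinarith

lemma sk_lt {k i : ℕ} (hk : k < p.d) (hi : i < p.L) : sk p k + i < p.tt := by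
  rw [sk, Prm.tt]
  have : (k + 1) * p.L ≤ p.d * p.L := Nat.mul_le_mul_right _ hk
  linarith

lemma sk_succ (k : ℕ) : sk p (k + 1) = sk p k + p.L := by rw [sk, sk]; ring

/-- number of acceptances within a level -/
lemma level_card {k : ℕ} (hk : k < p.d) {i : ℕ} (hi : i ≤ p.L) :
    (G p e (sk p k + i)).card ≤ (G p e (sk p k)).card +
      ∑ A ∈ mins (G p e (sk p k)) (Cr p e) k,
        min p.d (nb (G p e (sk p k + i)) A ∩ Cr p e).card := by
  induction i with
  | zero => simp
  | succ i ih =>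
    specialize ih (by omega)
    rw [← Nat.add_assoc, G_succ]
    by_cases hd : dec p e (sk p k + i)
    · rw [if_pos hd]
      obtain ⟨A, hA, a, ha, c, hc, hac, hcn, hlt⟩ := (dec_c hk (by omega)).1 hd
      refine (Finset.card_insert_le _ _).trans ?_
      have : ∑ A ∈ mins (G p e (sk p k)) (Cr p e) k,
          min p.d (nb (G p e (sk p k + i)) A ∩ Cr p e).card <
          ∑ A ∈ mins (G p e (sk p k)) (Cr p e) k,
          min p.d (nb (insert (e (sk p k + i)) (G p e (sk p k + i))) A ∩ Cr p e).card := by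
        apply Finset.sum_lt_sum
        · intro B _
          exact min_le_min le_rfl (Finset.card_le_card (Finset.inter_subset_inter_right
            (nb_mono (Finset.subset_insert _ _) B)))
        · refine ⟨A, hA, ?_⟩
          have hcA : c ∉ A := fun h => by
            rw [mins, Finset.mem_filter] at hA
            exact Finset.disjoint_left.1 hA.2.2.1 h hc
          have h1 : nb (G p e (sk p k + i)) A ∩ Cr p e ⊂
              nb (insert (e (sk p k + i)) (G p e (sk p k + i))) A ∩ Cr p e := by
            rw [Finset.ssubset_iff_of_subset (Finset.inter_subset_inter_right
              (nb_mono (Finset.subset_insert _ _) A))]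
            refine ⟨c, Finset.mem_inter.2 ⟨mem_nb.2 ⟨hcA, a, ha, ?_⟩, hc⟩, ?_⟩
            · rw [hac]; exact Finset.mem_insert_self _ _
            · intro h; exact hcn (Finset.mem_inter.1 h).1
          have h2 := Finset.card_lt_card h1
          omega
      omega
    · rw [if_neg hd]; exact ih

lemma level_end {k : ℕ} (hk : k < p.d) (hI : Inv (G p e (sk p k)) (Cr p e) k) {A : Finset V}
    (hA : A ∈ mins (G p e (sk p k)) (Cr p e) k) :
    p.d ≤ (nb (G p e (sk p (k + 1))) A ∩ Cr p e).card := by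
  by_contra hcon
  push Not at hcon
  obtain ⟨D, hD1, hD2, hD3⟩ := Finset.exists_subsuperset_card_eq (n := p.d - 1)
    (Finset.inter_subset_right : nb (G p e (sk p (k + 1))) A ∩ Cr p e ⊆ Cr p e) (by omega)
    (by have := Cr_card ok gd; omega)
  obtain ⟨i, hi, a, ha, c, hc, hcD, hac⟩ := gd.a6 k hk hI A hA (mins_big ok gd hk hA) D hD2 hD3
  have hcA : c ∉ A := fun h => by
    rw [mins, Finset.mem_filter] at hA
    exact Finset.disjoint_left.1 hA.2.2.1 h hc
  have hcn : c ∉ nb (G p e (sk p (k + 1))) A := fun h => hcD (hD1 (Finset.mem_inter.2 ⟨h, hc⟩))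
  have hmono : nb (G p e (sk p k + i)) A ⊆ nb (G p e (sk p (k + 1))) A :=
    nb_mono (G_mono p e (by rw [sk_succ ok gd]; omega)) A
  have hdec : dec p e (sk p k + i) := by
    rw [dec_c hk hi]
    refine ⟨A, hA, a, ha, c, hc, hac, fun h => hcn (hmono h), lt_of_le_of_lt
      (Finset.card_le_card (Finset.inter_subset_inter_right hmono)) hcon⟩
  apply hcn
  refine mem_nb.2 ⟨hcA, a, ha, ?_⟩
  rw [mem_G]
  exact ⟨sk p k + i, by rw [sk_succ ok gd]; omega, hac, hdec⟩

lemma inv_all {k : ℕ} (hk : k ≤ p.d) : Inv (G p e (sk p k)) (Cr p e) k := by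
  induction k with
  | zero => intro A _ _; exact Nat.zero_le _
  | succ k ih =>
    exact inv_succ (G_mono p e (by rw [sk_succ ok gd]; omega)) (by omega)
      (fun A hA => level_end ok gd (by omega) (ih (by omega)) hA)

lemma mins_number {k : ℕ} (hk : k < p.d) :
    (mins (G p e (sk p k)) (Cr p e) k).card * M ≤ Fintype.card V :=
  mins_card (inv_all ok gd hk.le) (fun _ hA => mins_big ok gd hk hA)

lemma G_sk_card {k : ℕ} (hk : k ≤ p.d) :
    M * (G p e (sk p k)).card ≤ M * (G p e p.T1).card + k * (p.d * Fintype.card V) := by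
  induction k with
  | zero => simp [sk]
  | succ k ih =>
    specialize ih (by omega)
    have h1 := level_card ok gd (by omega : k < p.d) (le_refl p.L)
    rw [← sk_succ ok gd] at h1
    have h2 : ∑ A ∈ mins (G p e (sk p k)) (Cr p e) k,
        min p.d (nb (G p e (sk p (k + 1))) A ∩ Cr p e).card ≤
        (mins (G p e (sk p k)) (Cr p e) k).card * p.d := by
      have := Finset.sum_le_card_nsmul (mins (G p e (sk p k)) (Cr p e) k)
        (fun A => min p.d (nb (G p e (sk p (k + 1))) A ∩ Cr p e).card) p.d
        (fun v _ => min_le_left _ _)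
      simpa using this
    have h3 := mins_number ok gd (by omega : k < p.d)
    nlinarith

theorem conclusion : CutConn p.d (G p e p.tt) ∧
    2 * M * (G p e p.tt).card ≤ M * (2 * β + p.d * Fintype.card V +
      2 * (p.d * ((p.d + 1) * (2 * p.r)))) + 2 * (p.d * (p.d * Fintype.card V)) := by
  have htt : p.tt = sk p p.d := rfl
  constructor
  · refine cutConn_of (C := Cr p e) ?_ (by rw [htt]; exact inv_all ok gd le_rfl)
    intro X hX hne hlt
    have hm : nb (G p e p.T0) X ⊆ nb (G p e p.tt) X :=
      nb_mono (G_mono p e (((T0_le ok gd).trans (Tm_le ok gd)).trans (T1_le ok gd))) X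
    refine ((core_spec ok gd).2.2 X hX hne (lt_of_le_of_lt (Finset.card_le_card
      (Finset.inter_subset_inter_right hm)) hlt)).trans (Finset.union_subset_union_right hm)
  · have h1 := G_sk_card ok gd le_rfl
    rw [← htt] at h1
    have h2 := G_T1_card ok gd
    have h3 := Hs_card ok gd
    have h4 : 2 * (G p e p.T1).card ≤ 2 * β + p.d * Fintype.card V +
      2 * (p.d * ((p.d + 1) * (2 * p.r))) := by omega
    have h5 := Nat.mul_le_mul_left M h4
    nlinarith

end
end det3
end BG

namespace BG
section prob1

section gen
variable {Ω : Type*} [Fintype Ω]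

lemma Pr_nonneg (P : Ω → Prop) : 0 ≤ Pr P := by rw [Pr]; positivity

lemma Pr_eq (P : Ω → Prop) [DecidablePred P] :
    Pr P = ((Finset.univ.filter P).card : ℝ) / (Fintype.card Ω : ℝ) := by
  rw [Pr]; congr!

lemma Pr_mono {P Q : Ω → Prop} (h : ∀ w, P w → Q w) : Pr P ≤ Pr Q := by
  rw [Pr, Pr]
  gcongr with w
  exact h w

lemma Pr_le_one (P : Ω → Prop) : Pr P ≤ 1 := by
  rw [Pr]
  apply div_le_one_of_le₀ _ (by positivity)
  exact_mod_cast Finset.card_le_univ _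

lemma Pr_or (P Q : Ω → Prop) : Pr (fun w => P w ∨ Q w) ≤ Pr P + Pr Q := by
  rw [Pr_eq (fun w => P w ∨ Q w), Pr, Pr, ← add_div]
  gcongr
  rw [Finset.filter_or]
  exact_mod_cast Finset.card_union_le _ _

lemma Pr_compl [Nonempty Ω] (P : Ω → Prop) : 1 - Pr (fun w => ¬ P w) ≤ Pr P := by
  rw [Pr_eq (fun w => ¬ P w), Pr]
  have h0 : (0 : ℝ) < Fintype.card Ω := by exact_mod_cast Fintype.card_pos
  rw [sub_le_iff_le_add, ← add_div, le_div_iff₀ h0, one_mul]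
  have := Finset.card_filter_add_card_filter_not (s := (Finset.univ : Finset Ω)) P
  rw [Finset.card_univ] at this
  exact_mod_cast this.ge

lemma Pr_exists {ι : Type*} (S : Finset ι) (P : ι → Ω → Prop) :
    Pr (fun w => ∃ i ∈ S, P i w) ≤ ∑ i ∈ S, Pr (P i) := by
  induction S using Finset.induction_on with
  | empty => simp [Pr]
  | insert a S ha ih =>
    rw [Finset.sum_insert ha]
    refine le_trans (Pr_mono (Q := fun w => P a w ∨ ∃ i ∈ S, P i w) ?_)
      ((Pr_or _ _).trans (by gcongr))
    intro w h
    obtain ⟨i, hi, h⟩ := h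
    rcases Finset.mem_insert.1 hi with rfl | hi
    · exact Or.inl h
    · exact Or.inr ⟨i, hi, h⟩

lemma Pr_exists_le {ι : Type*} (S : Finset ι) (P : ι → Ω → Prop) {q : ℝ}
    (h : ∀ i ∈ S, Pr (P i) ≤ q) : Pr (fun w => ∃ i ∈ S, P i w) ≤ S.card * q := by
  refine (Pr_exists S P).trans ?_
  have := Finset.sum_le_card_nsmul S _ q h
  simpa using this

lemma Pr_cond {K : Type*} (key : Ω → K) (Ev : Ω → Prop) {q : ℝ} (hq : 0 ≤ q)
    (h : ∀ w0, ((Finset.univ.filter (fun w => key w = key w0 ∧ Ev w)).card : ℝ) ≤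
      q * (Finset.univ.filter (fun w => key w = key w0)).card) : Pr Ev ≤ q := by
  rw [Pr]
  apply div_le_of_le_mul₀ (by positivity) hq
  have h1 := Finset.card_eq_sum_card_fiberwise (s := Finset.univ.filter Ev) (f := key)
    (t := Finset.univ.image key) (by intro w _; simp)
  have h2 := Finset.card_eq_sum_card_fiberwise (s := (Finset.univ : Finset Ω)) (f := key)
    (t := Finset.univ.image key) (by intro w _; simp)
  rw [Finset.card_univ] at h2
  rw [h1, h2]
  push_cast
  rw [Finset.mul_sum]
  apply Finset.sum_le_sum
  intro k hk
  obtain ⟨w0, _, rfl⟩ := Finset.mem_image.1 hk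
  refine le_trans (le_of_eq ?_) (h w0)
  congr 2
  ext w
  simp [and_comm]

end gen

variable {α β : Type*} [Fintype α] [Fintype β] [DecidableEq α] [DecidableEq β]

lemma cnt_step (D : Finset α) (B : Finset (α ≃ β))
    (hB : ∀ σ ∈ B, ∀ e f, e ∉ D → f ∉ D → (Equiv.swap e f).trans σ ∈ B) (T : Finset β) {e : α}
    (he : e ∉ D) : (Fintype.card α - D.card) * (B.filter (fun σ => σ e ∈ T)).card =
      ∑ σ ∈ B, (Finset.univ.filter (fun f => f ∉ D ∧ σ f ∈ T)).card := by
  have h1 : ∀ f ∈ Dᶜ, (B.filter (fun σ => σ f ∈ T)).card = (B.filter (fun σ => σ e ∈ T)).card := by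
    intro f hf
    have hf : f ∉ D := by simpa using hf
    apply Finset.card_nbij' (fun σ => (Equiv.swap e f).trans σ) (fun σ => (Equiv.swap e f).trans σ)
    · intro σ hσ
      simp only [Finset.coe_filter, Set.mem_ofPred_eq] at hσ ⊢
      exact ⟨hB σ hσ.1 e f he hf, by simpa using hσ.2⟩
    · intro σ hσ
      simp only [Finset.coe_filter, Set.mem_ofPred_eq] at hσ ⊢
      exact ⟨hB σ hσ.1 e f he hf, by simpa using hσ.2⟩
    · intro σ _
      ext x; simp
    · intro σ _
      ext x; simp
  have h2 : ∑ f ∈ Dᶜ, (B.filter (fun σ => σ f ∈ T)).card =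
      (Fintype.card α - D.card) * (B.filter (fun σ => σ e ∈ T)).card := by
    rw [Finset.sum_congr rfl h1, Finset.sum_const, smul_eq_mul, Finset.card_compl]
  rw [← h2]
  simp_rw [Finset.card_filter]
  rw [Finset.sum_comm]
  apply Finset.sum_congr rfl
  intro σ _
  rw [← Finset.sum_filter_add_sum_filter_not Finset.univ (fun f => f ∉ D)]
  have h3 : ∑ x ∈ Finset.univ.filter (fun f => ¬ f ∉ D),
      (if x ∉ D ∧ σ x ∈ T then 1 else 0) = 0 := by
    apply Finset.sum_eq_zero
    intro x hx
    simp only [Finset.mem_filter, Finset.mem_univ, true_and] at hx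
    simp [not_not.1 hx]
  rw [h3, add_zero]
  apply Finset.sum_congr
  · ext; simp
  · intro x hx
    simp only [Finset.mem_filter, Finset.mem_univ, true_and] at hx
    simp [hx]

lemma cnt (D : Finset α) (B : Finset (α ≃ β))
    (hB : ∀ σ ∈ B, ∀ e f, e ∉ D → f ∉ D → (Equiv.swap e f).trans σ ∈ B) (T : Finset β) (c : ℕ)
    (hc : ∀ σ ∈ B, (Finset.univ.filter (fun f => f ∉ D ∧ σ f ∈ T)).card ≤ c)
    (Q : Finset α) (hQ : Disjoint Q D) :
    (Fintype.card α - D.card) ^ Q.card * (B.filter (fun σ => ∀ q ∈ Q, σ q ∈ T)).card ≤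
      c ^ Q.card * B.card := by
  induction Q using Finset.induction_on with
  | empty => simp
  | insert e Q he ih =>
    rw [Finset.disjoint_insert_left] at hQ
    specialize ih hQ.2
    set B' := B.filter (fun σ => ∀ q ∈ Q, σ q ∈ T) with hB'
    have hcl : ∀ σ ∈ B', ∀ e f, e ∉ D ∪ Q → f ∉ D ∪ Q → (Equiv.swap e f).trans σ ∈ B' := by
      intro σ hσ x f hx hf
      rw [Finset.mem_union, not_or] at hx hf
      rw [hB', Finset.mem_filter] at hσ ⊢
      refine ⟨hB σ hσ.1 x f hx.1 hf.1, ?_⟩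
      intro q hq
      have h1 : Equiv.swap x f q = q :=
        Equiv.swap_apply_of_ne_of_ne (by rintro rfl; exact hx.2 hq) (by rintro rfl; exact hf.2 hq)
      rw [Equiv.trans_apply, h1]
      exact hσ.2 q hq
    have h1 := cnt_step (D ∪ Q) B' hcl T (e := e) (by
      rw [Finset.mem_union, not_or]; exact ⟨hQ.1, he⟩)
    have h2 : ∀ σ ∈ B', (Finset.univ.filter (fun f => f ∉ D ∪ Q ∧ σ f ∈ T)).card + Q.card ≤ c := by
      intro σ hσ
      rw [hB', Finset.mem_filter] at hσ
      refine le_trans ?_ (hc σ hσ.1)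
      rw [← Finset.card_union_of_disjoint]
      · apply Finset.card_le_card
        intro f hf
        rw [Finset.mem_union, Finset.mem_filter] at hf
        rw [Finset.mem_filter]
        refine ⟨Finset.mem_univ _, ?_⟩
        rcases hf with hf | hf
        · rw [Finset.mem_union, not_or] at hf
          exact ⟨hf.2.1.1, hf.2.2⟩
        · exact ⟨fun h => Finset.disjoint_left.1 hQ.2 hf h, hσ.2 f hf⟩
      · rw [Finset.disjoint_left]
        intro f hf hfQ
        rw [Finset.mem_filter, Finset.mem_union] at hf
        exact hf.2.1 (Or.inr hfQ)
    have h3 : ∑ σ ∈ B', (Finset.univ.filter (fun f => f ∉ D ∪ Q ∧ σ f ∈ T)).card +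
        B'.card * Q.card ≤ B'.card * c := by
      have := Finset.sum_le_card_nsmul B' _ c h2
      rw [Finset.sum_add_distrib, Finset.sum_const, smul_eq_mul, smul_eq_mul] at this
      exact this
    have h4 : (D ∪ Q).card = D.card + Q.card := Finset.card_union_of_disjoint hQ.2.symm
    have h5 : (D ∪ Q).card ≤ Fintype.card α := Finset.card_le_univ _
    have h6 : B.filter (fun σ => ∀ q ∈ insert e Q, σ q ∈ T) = B'.filter (fun σ => σ e ∈ T) := by
      ext σ
      rw [hB', Finset.filter_filter]
      simp only [Finset.mem_filter, Finset.forall_mem_insert]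
      tauto
    have h7 : (B'.filter (fun σ => σ e ∈ T)).card ≤ B'.card := Finset.card_filter_le _ _
    rw [h6, Finset.card_insert_of_notMem he, pow_succ, pow_succ]
    set X := (B'.filter (fun σ => σ e ∈ T)).card
    have h8 : (Fintype.card α - D.card) * X ≤ c * B'.card := by
      have e1 : Fintype.card α - D.card = (Fintype.card α - (D ∪ Q).card) + Q.card := by omega
      rw [e1, add_mul, h1]
      nlinarith
    calc (Fintype.card α - D.card) ^ Q.card * (Fintype.card α - D.card) * X
        = (Fintype.card α - D.card) ^ Q.card * ((Fintype.card α - D.card) * X) := by ring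
      _ ≤ (Fintype.card α - D.card) ^ Q.card * (c * B'.card) := by gcongr
      _ = c * ((Fintype.card α - D.card) ^ Q.card * B'.card) := by ring
      _ ≤ c * (c ^ Q.card * B.card) := by gcongr
      _ = _ := by ring

/-- all of `Q` lands in `T` -/
lemma Pr_into (T : Finset β) (Q : Finset α) :
    Pr (fun σ : α ≃ β => ∀ q ∈ Q, σ q ∈ T) ≤ ((T.card : ℝ) / Fintype.card α) ^ Q.card := by
  rcases Nat.eq_zero_or_pos (Fintype.card α) with h0 | h0
  · have : IsEmpty α := Fintype.card_eq_zero_iff.1 h0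
    have : Q = ∅ := Finset.eq_empty_of_isEmpty Q
    rw [this]
    simpa using Pr_le_one _
  have h := cnt (∅ : Finset α) (Finset.univ : Finset (α ≃ β)) (by simp) T T.card (by
    intro σ _
    rw [← Finset.card_map σ.symm.toEmbedding]
    apply Finset.card_le_card
    intro f hf
    simp at hf
    simp [hf]) Q (by simp)
  rw [Pr_eq, div_pow]
  apply div_le_of_le_mul₀ (by positivity) (by positivity)
  rw [div_mul_eq_mul_div, le_div_iff₀ (by positivity)]
  simp only [Finset.card_empty, Nat.sub_zero, Finset.card_univ] at h
  rw [mul_comm]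
  exact_mod_cast h

lemma key_exp {N D I : ℝ} (hD : 0 ≤ D) (hDN : D < N) (hI : 0 ≤ I) (hDI : D ≤ I) (hIN : I ≤ N)
    (q : ℕ) : ((N - I) / (N - D)) ^ q ≤ Real.exp (-((I - D) * q / N)) := by
  have h1 : (N - I) / (N - D) ≤ Real.exp (-((I - D) / N)) := by
    have h2 : (N - I) / (N - D) = 1 - (I - D) / (N - D) := by
      rw [eq_sub_iff_add_eq, ← add_div, div_eq_one_iff_eq (by linarith)]; ring
    rw [h2]
    have h3 : (I - D) / N ≤ (I - D) / (N - D) :=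
      div_le_div_of_nonneg_left (by linarith) (by linarith) (by linarith)
    have := Real.add_one_le_exp (-((I - D) / N))
    linarith
  calc ((N - I) / (N - D)) ^ q ≤ (Real.exp (-((I - D) / N))) ^ q := by
        gcongr
    _ = _ := by rw [← Real.exp_nat_mul]; congr 1; ring

/-- `J` lands in `I`, `Q` avoids `I` -/
lemma Pr_both (hN : Fintype.card α = Fintype.card β) (I : Finset β) (J Q : Finset α)
    (hJQ : Disjoint Q J) (hJI : J.card ≤ I.card) (hJ : J.card < Fintype.card α) :
    Pr (fun σ : α ≃ β => (∀ q ∈ J, σ q ∈ I) ∧ ∀ q ∈ Q, σ q ∉ I) ≤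
      ((I.card : ℝ) / Fintype.card α) ^ J.card *
        Real.exp (-(((I.card : ℝ) - J.card) * Q.card / Fintype.card α)) := by
  have h1 := Pr_into I J
  set B := Finset.univ.filter (fun σ : α ≃ β => ∀ q ∈ J, σ q ∈ I) with hB
  have h2 := cnt J B (by
    intro σ hσ e f he hf
    rw [hB, Finset.mem_filter] at hσ ⊢
    refine ⟨Finset.mem_univ _, ?_⟩
    intro q hq
    rw [Equiv.trans_apply, Equiv.swap_apply_of_ne_of_ne (by rintro rfl; exact he hq)
      (by rintro rfl; exact hf hq)]
    exact hσ.2 q hq) Iᶜ (Fintype.card α - I.card) (by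
    intro σ _
    rw [hN, ← Finset.card_compl, ← Finset.card_map σ.symm.toEmbedding]
    apply Finset.card_le_card
    intro f hf
    simp at hf
    simp [hf]) Q hJQ
  have hIN : I.card ≤ Fintype.card α := by rw [hN]; exact Finset.card_le_univ _
  have h3 := key_exp (N := Fintype.card α) (D := J.card) (I := I.card) (by positivity)
    (by exact_mod_cast hJ) (by positivity) (by exact_mod_cast hJI) (by exact_mod_cast hIN) Q.card
  have e1 : ((Fintype.card α - J.card : ℕ) : ℝ) = (Fintype.card α : ℝ) - J.card :=
    Nat.cast_sub hJ.le
  have e2 : ((Fintype.card α - I.card : ℕ) : ℝ) = (Fintype.card α : ℝ) - I.card :=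
    Nat.cast_sub hIN
  have hJ' : (0 : ℝ) < (Fintype.card α : ℝ) - J.card := by
    rw [sub_pos]; exact_mod_cast hJ
  have h4 : ((B.filter (fun σ => ∀ q ∈ Q, σ q ∈ Iᶜ)).card : ℝ) ≤
      (((Fintype.card α : ℝ) - I.card) / ((Fintype.card α : ℝ) - J.card)) ^ Q.card * B.card := by
    rw [div_pow, div_mul_eq_mul_div, le_div_iff₀ (by positivity), mul_comm, ← e1, ← e2]
    exact_mod_cast h2
  have h5 : (Finset.univ.filter (fun σ : α ≃ β => (∀ q ∈ J, σ q ∈ I) ∧ ∀ q ∈ Q, σ q ∉ I)) =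
      B.filter (fun σ => ∀ q ∈ Q, σ q ∈ Iᶜ) := by
    rw [hB, Finset.filter_filter]; ext; simp
  rw [Pr_eq, h5]
  rw [Pr_eq, ← hB] at h1
  calc ((B.filter (fun σ => ∀ q ∈ Q, σ q ∈ Iᶜ)).card : ℝ) / (Fintype.card (α ≃ β) : ℝ)
      ≤ (Real.exp (-(((I.card : ℝ) - J.card) * Q.card / Fintype.card α)) * B.card) /
        (Fintype.card (α ≃ β) : ℝ) := by
        gcongr
        exact h4.trans (by gcongr)
    _ = (B.card : ℝ) / (Fintype.card (α ≃ β) : ℝ) *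
        Real.exp (-(((I.card : ℝ) - J.card) * Q.card / Fintype.card α)) := by ring
    _ ≤ _ := by gcongr

lemma Pr_avoid (hN : Fintype.card α = Fintype.card β) (I : Finset β) (Q : Finset α) :
    Pr (fun σ : α ≃ β => ∀ q ∈ Q, σ q ∉ I) ≤
        Real.exp (-((I.card : ℝ) * Q.card / Fintype.card α)) := by
  rcases Nat.eq_zero_or_pos (Fintype.card α) with h0 | h0
  · rw [h0]; simpa using Pr_le_one _
  have := Pr_both hN I ∅ Q (by simp) (by simp) (by simpa using h0)
  simpa using this

/-- upper tail -/
lemma Pr_tail (I : Finset β) (Q : Finset α) (L : ℕ) :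
    Pr (fun σ : α ≃ β => L ≤ (Q.filter (fun q => σ q ∈ I)).card) ≤
      Real.exp (Real.exp 1 * ((Q.card : ℝ) * I.card / Fintype.card α) - L) := by
  have h1 : Pr (fun σ : α ≃ β => L ≤ (Q.filter (fun q => σ q ∈ I)).card) ≤
      (Q.powersetCard L).card * ((I.card : ℝ) / Fintype.card α) ^ L := by
    refine le_trans (Pr_mono (Q := fun σ => ∃ J ∈ Q.powersetCard L, ∀ q ∈ J, σ q ∈ I) ?_)
      (Pr_exists_le _ _ ?_)
    · intro σ h
      obtain ⟨J, hJ, hJc⟩ := Finset.exists_subset_card_eq h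
      refine ⟨J, ?_, ?_⟩
      · rw [Finset.mem_powersetCard]
        exact ⟨hJ.trans (Finset.filter_subset _ _), hJc⟩
      · intro q hq
        exact (Finset.mem_filter.1 (hJ hq)).2
    · intro J hJ
      rw [Finset.mem_powersetCard] at hJ
      rw [← hJ.2]
      exact Pr_into I J
  refine h1.trans ?_
  rw [Finset.card_powersetCard]
  set x : ℝ := (Q.card : ℝ) * I.card / Fintype.card α with hx
  have hx0 : 0 ≤ x := by positivity
  have h2 : ((Q.card.choose L : ℕ) : ℝ) ≤ (Q.card : ℝ) ^ L / L.factorial :=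
    Nat.choose_le_pow_div L Q.card
  have h3 := Real.pow_div_factorial_le_exp (Real.exp 1 * x) (by positivity) L
  rw [mul_pow, ← Real.exp_nat_mul, mul_one] at h3
  calc ((Q.card.choose L : ℕ) : ℝ) * ((I.card : ℝ) / Fintype.card α) ^ L
      ≤ (Q.card : ℝ) ^ L / L.factorial * ((I.card : ℝ) / Fintype.card α) ^ L := by gcongr
    _ = x ^ L / L.factorial := by
        rw [hx, div_mul_eq_mul_div, ← mul_pow, mul_div_assoc]
    _ = (Real.exp L * x ^ L / L.factorial) * Real.exp (-L) := by
        rw [Real.exp_neg]; field_simp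
    _ ≤ Real.exp (Real.exp 1 * x) * Real.exp (-L) := by gcongr
    _ = _ := by rw [← Real.exp_add, sub_eq_add_neg]

/-- adaptive avoidance: conditioned on the first `s` positions -/
lemma cnt_adapt {N : ℕ} (hN : Fintype.card α = N) (s : ℕ) (σ0 : α ≃ Fin N) (I : Finset (Fin N))
    (hI : ∀ i ∈ I, s ≤ (i : ℕ)) (Q : Finset α) (hQ : ∀ q ∈ Q, s ≤ (σ0 q : ℕ)) :
    ((Finset.univ.filter (fun σ : α ≃ Fin N => (∀ x, (σ0 x : ℕ) < s → σ x = σ0 x) ∧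
      ∀ q ∈ Q, σ q ∉ I)).card : ℝ) ≤ Real.exp (-((I.card : ℝ) * Q.card / N)) *
      (Finset.univ.filter (fun σ : α ≃ Fin N => (∀ x, (σ0 x : ℕ) < s → σ x = σ0 x))).card := by
  set B := Finset.univ.filter (fun σ : α ≃ Fin N => (∀ x, (σ0 x : ℕ) < s → σ x = σ0 x)) with hB
  set D := Finset.univ.filter (fun x => (σ0 x : ℕ) < s) with hD
  have hDi : ∀ σ ∈ B, D.map σ.toEmbedding ⊆ Iᶜ := by
    intro σ hσ i hi
    rw [Finset.mem_map] at hi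
    obtain ⟨x, hx, rfl⟩ := hi
    rw [hD, Finset.mem_filter] at hx
    rw [hB, Finset.mem_filter] at hσ
    rw [Finset.mem_compl]
    intro h
    have h1 := hI _ h
    simp only [Equiv.coe_toEmbedding] at h1
    rw [hσ.2 x hx.2] at h1
    omega
  have hDcard : D.card + I.card ≤ N := by
    have hσ0 : σ0 ∈ B := by rw [hB]; simp
    have := Finset.card_le_card (hDi σ0 hσ0)
    rw [Finset.card_map, Finset.card_compl, Fintype.card_fin] at this
    have h2 := Finset.card_le_univ I
    rw [Fintype.card_fin] at h2
    omega
  have h2 := cnt D B (by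
    intro σ hσ e f he hf
    rw [hB, Finset.mem_filter] at hσ ⊢
    refine ⟨Finset.mem_univ _, ?_⟩
    intro q hq
    have hq' : q ∈ D := by rw [hD]; simpa using hq
    rw [Equiv.trans_apply, Equiv.swap_apply_of_ne_of_ne (by rintro rfl; exact he hq')
      (by rintro rfl; exact hf hq')]
    exact hσ.2 q hq) Iᶜ (N - D.card - I.card) (by
    intro σ hσ
    have h1 : (Finset.univ.filter (fun f => f ∉ D ∧ σ f ∈ Iᶜ)).map σ.toEmbedding ⊆
        Iᶜ \ D.map σ.toEmbedding := by
      intro i hi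
      rw [Finset.mem_map] at hi
      obtain ⟨x, hx, rfl⟩ := hi
      rw [Finset.mem_filter] at hx
      rw [Finset.mem_sdiff]
      refine ⟨hx.2.2, ?_⟩
      rw [Finset.mem_map']
      exact hx.2.1
    have h3 := Finset.card_le_card h1
    rw [Finset.card_map, Finset.card_sdiff_of_subset (hDi σ hσ), Finset.card_compl,
      Fintype.card_fin, Finset.card_map] at h3
    omega) Q (by
    rw [Finset.disjoint_left]
    intro q hq hqD
    have := hQ q hq
    rw [hD, Finset.mem_filter] at hqD
    omega)
  rw [hN] at h2
  have h5 : (Finset.univ.filter (fun σ : α ≃ Fin N => (∀ x, (σ0 x : ℕ) < s → σ x = σ0 x) ∧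
      ∀ q ∈ Q, σ q ∉ I)) = B.filter (fun σ => ∀ q ∈ Q, σ q ∈ Iᶜ) := by
    rw [hB, Finset.filter_filter]; ext; simp
  rw [h5]
  rcases Nat.eq_zero_or_pos I.card with hI0 | hI0
  · rw [hI0]
    simp only [Nat.cast_zero, zero_mul, zero_div, neg_zero, Real.exp_zero, one_mul]
    exact_mod_cast Finset.card_filter_le _ _
  have hDN : D.card < N := by omega
  have hd' : (0 : ℝ) < ((N - D.card : ℕ) : ℝ) := by exact_mod_cast (by omega : 0 < N - D.card)
  have h4 : ((B.filter (fun σ => ∀ q ∈ Q, σ q ∈ Iᶜ)).card : ℝ) ≤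
      (((N - D.card - I.card : ℕ) : ℝ) / ((N - D.card : ℕ) : ℝ)) ^ Q.card * B.card := by
    rw [div_pow, div_mul_eq_mul_div, le_div_iff₀ (by positivity), mul_comm]
    exact_mod_cast h2
  refine h4.trans ?_
  gcongr
  have h6 := key_exp (N := ((N - D.card : ℕ) : ℝ)) (D := 0) (I := I.card) le_rfl hd'
    (by positivity) (by positivity) (by exact_mod_cast (by omega : I.card ≤ N - D.card)) Q.card
  rw [sub_zero, sub_zero] at h6
  rw [Nat.cast_sub (by omega : I.card ≤ N - D.card)]
  refine h6.trans ?_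
  rw [Real.exp_le_exp, neg_le_neg_iff]
  gcongr
  omega

end prob1
end BG

namespace BG
section prob2
variable {n : ℕ}

abbrev Ed (n : ℕ) : Type := (completeGraph (Fin n)).edgeSet

lemma card_Ed (n : ℕ) : Fintype.card (Ed n) = numEdges n := rfl

lemma card_Ed_fin (n : ℕ) : Fintype.card (Ed n) = Fintype.card (Fin (numEdges n)) := by
  rw [Fintype.card_fin]; rfl

lemma two_numEdges (n : ℕ) : 2 * numEdges n = n * (n - 1) := by
  have h : numEdges n = n.choose 2 := by
    have := card_edgeFinset_top_eq_card_choose_two (V := Fin n)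
    rw [Fintype.card_fin] at this
    rw [← this, SimpleGraph.edgeFinset, Set.toFinset_card]
    rfl
  rw [h, Nat.choose_two_right]
  exact Nat.mul_div_cancel' (Nat.even_mul_pred_self n).two_dvd

instance (n : ℕ) : Nonempty (EdgeOrdering n) := ⟨Fintype.equivFinOfCardEq rfl⟩

/-- the proposal sequence -/
def sq (x0 : Sym2 (Fin n)) (σ : EdgeOrdering n) (i : ℕ) : Sym2 (Fin n) :=
  if h : i < numEdges n then ((σ.symm ⟨i, h⟩ : Ed n) : Sym2 (Fin n)) else x0

lemma sq_apply (x0 : Sym2 (Fin n)) (σ : EdgeOrdering n) (x : Ed n) : sq x0 σ (σ x) = x := by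
  rw [sq, dif_pos (σ x).2]; simp

lemma sq_lt (x0 : Sym2 (Fin n)) (σ : EdgeOrdering n) {i : ℕ} (h : i < numEdges n) :
    sq x0 σ i = ((σ.symm ⟨i, h⟩ : Ed n) : Sym2 (Fin n)) := by
  rw [sq, dif_pos h]

lemma sq_inj (x0 : Sym2 (Fin n)) (σ : EdgeOrdering n) {i j : ℕ} (hi : i < numEdges n)
    (hj : j < numEdges n) (h : sq x0 σ i = sq x0 σ j) : i = j := by
  rw [sq_lt _ _ hi, sq_lt _ _ hj] at h
  have := σ.symm.injective (Subtype.ext h)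
  simpa using this

lemma Ed_nd (x : Ed n) : ¬ (x : Sym2 (Fin n)).IsDiag :=
  SimpleGraph.not_isDiag_of_mem_edgeSet _ x.2

lemma sq_nd (x0 : Sym2 (Fin n)) (σ : EdgeOrdering n) {i : ℕ} (hi : i < numEdges n) :
    ¬ (sq x0 σ i).IsDiag := by
  rw [sq_lt _ _ hi]; exact Ed_nd _

/-- window of positions -/
def W (n a b : ℕ) : Finset (Fin (numEdges n)) :=
  Finset.univ.filter (fun i => a ≤ (i : ℕ) ∧ (i : ℕ) < b)

lemma mem_W {a b : ℕ} {i : Fin (numEdges n)} : i ∈ W n a b ↔ a ≤ (i : ℕ) ∧ (i : ℕ) < b := by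
  simp [W]

lemma card_W {a b : ℕ} (hb : b ≤ numEdges n) : (W n a b).card = b - a := by
  have : (W n a b).map Fin.valEmbedding = Finset.Ico a b := by
    ext i
    simp only [Finset.mem_map, mem_W, Finset.mem_Ico, Fin.valEmbedding_apply]
    constructor
    · rintro ⟨j, hj, rfl⟩; exact hj
    · intro h; exact ⟨⟨i, by omega⟩, h, rfl⟩
  rw [← Finset.card_map Fin.valEmbedding, this, Nat.card_Ico]

lemma count_eq (x0 : Sym2 (Fin n)) (σ : EdgeOrdering n) {a b : ℕ} (hb : b ≤ numEdges n)
    (P : Sym2 (Fin n) → Prop) :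
    ((Finset.Ico a b).filter (fun s => P (sq x0 σ s))).card =
      ((Finset.univ.filter (fun x : Ed n => P x)).filter (fun q => σ q ∈ W n a b)).card := by
  symm
  apply Finset.card_bij (fun q _ => (σ q : ℕ))
  · intro q hq
    simp only [Finset.mem_filter, Finset.mem_univ, true_and, mem_W] at hq
    rw [Finset.mem_filter, Finset.mem_Ico, sq_apply]
    exact ⟨hq.2, hq.1⟩
  · intro q _ q' _ h
    exact σ.injective (Fin.ext h)
  · intro i hi
    rw [Finset.mem_filter, Finset.mem_Ico] at hi
    have hi' : i < numEdges n := by omega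
    refine ⟨σ.symm ⟨i, hi'⟩, ?_, by simp⟩
    simp only [Finset.mem_filter, Finset.mem_univ, true_and, mem_W, Equiv.apply_symm_apply]
    rw [sq_lt _ _ hi'] at hi
    exact ⟨hi.2, hi.1⟩

def mkE {u v : Fin n} (h : u ≠ v) : Ed n := ⟨s(u, v), by simpa using h⟩

def pairs (X Y : Finset (Fin n)) : Finset (Ed n) :=
  Finset.univ.filter (fun e => ∃ x ∈ X, ∃ y ∈ Y, (e : Sym2 (Fin n)) = s(x, y))

def inside (X : Finset (Fin n)) : Finset (Ed n) :=
  Finset.univ.filter (fun e => ∀ v ∈ (e : Sym2 (Fin n)), v ∈ X)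

def inc (v : Fin n) : Finset (Ed n) :=
  Finset.univ.filter (fun e => v ∈ (e : Sym2 (Fin n)))

lemma card_pairs {X Y : Finset (Fin n)} (h : Disjoint X Y) :
    X.card * Y.card ≤ (pairs X Y).card := by
  rw [← Finset.card_product]
  rw [← Finset.card_map (Function.Embedding.subtype _)]
  have hinj : Set.InjOn (fun q : Fin n × Fin n => s(q.1, q.2)) (X ×ˢ Y : Finset _) := by
    rintro ⟨a, b⟩ hq ⟨a', b'⟩ hq' hh
    simp only [Finset.coe_product, Set.mem_prod, Finset.mem_coe] at hq hq'
    rcases Sym2.eq_iff.1 hh with ⟨h1, h2⟩ | ⟨h1, h2⟩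
    · simp_all
    · simp only at h1 h2
      exact absurd (h1 ▸ hq.1) (fun h3 => Finset.disjoint_left.1 h h3 hq'.2)
  rw [← Finset.card_image_of_injOn hinj]
  apply Finset.card_le_card
  intro x hx
  obtain ⟨⟨a, b⟩, hq, rfl⟩ := Finset.mem_image.1 hx
  rw [Finset.mem_product] at hq
  have hne : a ≠ b := by
    rintro rfl
    exact Finset.disjoint_left.1 h hq.1 hq.2
  rw [Finset.mem_map]
  refine ⟨mkE hne, ?_, rfl⟩
  rw [pairs, Finset.mem_filter]
  exact ⟨Finset.mem_univ _, a, hq.1, b, hq.2, rfl⟩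

lemma card_inside (X : Finset (Fin n)) : (inside X).card ≤ X.card ^ 2 := by
  rw [← Finset.card_map (Function.Embedding.subtype _), pow_two, ← Finset.card_product]
  refine le_trans (Finset.card_le_card (t := (X ×ˢ X).image (fun q => s(q.1, q.2))) ?_)
    Finset.card_image_le
  intro x hx
  rw [Finset.mem_map] at hx
  obtain ⟨e, he, rfl⟩ := hx
  rw [inside, Finset.mem_filter] at he
  obtain ⟨x, hx⟩ := e
  induction x with
  | _ u v =>
  rw [Finset.mem_image]
  exact ⟨(u, v), by simpa using he.2, rfl⟩

lemma map_inc (v : Fin n) : (inc v).map (Function.Embedding.subtype _) =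
    (Finset.univ.erase v).image (fun w => s(v, w)) := by
  ext x
  simp only [Finset.mem_map, inc, Finset.mem_filter, Finset.mem_univ, true_and,
    Finset.mem_image, Finset.mem_erase, and_true]
  constructor
  · rintro ⟨e, he, rfl⟩
    obtain ⟨w, hw⟩ := he
    refine ⟨w, ?_, hw.symm⟩
    rintro rfl
    exact Ed_nd e (by rw [hw]; simp)
  · rintro ⟨w, hw, rfl⟩
    exact ⟨mkE (Ne.symm hw), by simp [mkE], rfl⟩

lemma card_inc (v : Fin n) : (inc v).card = n - 1 := by
  rw [← Finset.card_map (Function.Embedding.subtype _), map_inc,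
    Finset.card_image_of_injective _ (fun a b hab => Sym2.congr_right.1 hab),
    Finset.card_erase_of_mem (Finset.mem_univ _), Finset.card_univ, Fintype.card_fin]

lemma count_inc (x0 : Sym2 (Fin n)) (σ : EdgeOrdering n) {a b : ℕ} (hb : b ≤ numEdges n)
    (v : Fin n) : ((Finset.Ico a b).filter (fun s => v ∈ sq x0 σ s)).card =
      ((inc v).filter (fun q => σ q ∈ W n a b)).card := by
  have h := count_eq x0 σ (a := a) hb (fun x => v ∈ x)
  rw [inc]
  convert h using 3
  ext x
  simp

lemma count_inside (x0 : Sym2 (Fin n)) (σ : EdgeOrdering n) {b : ℕ} (hb : b ≤ numEdges n)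
    (X : Finset (Fin n)) : ((Finset.range b).filter (fun s => ∀ v ∈ sq x0 σ s, v ∈ X)).card =
      ((inside X).filter (fun q => σ q ∈ W n 0 b)).card := by
  have h := count_eq x0 σ (a := 0) hb (fun x => ∀ v ∈ x, v ∈ X)
  rw [Finset.range_eq_Ico, inside]
  convert h using 3
  ext x
  simp

/-! specialised versions -/

lemma EPr_tail (I : Finset (Fin (numEdges n))) (Q : Finset (Ed n)) (L : ℕ) :
    Pr (fun σ : EdgeOrdering n => L ≤ (Q.filter (fun q => σ q ∈ I)).card) ≤
      Real.exp (Real.exp 1 * ((Q.card : ℝ) * I.card / numEdges n) - L) := by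
  have h := Pr_tail I Q L
  rw [card_Ed] at h
  exact h

lemma EPr_into (I : Finset (Fin (numEdges n))) (Q : Finset (Ed n)) :
    Pr (fun σ : EdgeOrdering n => ∀ q ∈ Q, σ q ∈ I) ≤ ((I.card : ℝ) / numEdges n) ^ Q.card := by
  have h := Pr_into I Q
  rw [card_Ed] at h
  exact h

lemma EPr_avoid (I : Finset (Fin (numEdges n))) (Q : Finset (Ed n)) :
    Pr (fun σ : EdgeOrdering n => ∀ q ∈ Q, σ q ∉ I) ≤
        Real.exp (-((I.card : ℝ) * Q.card / numEdges n)) := by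
  have h := Pr_avoid (card_Ed_fin n) I Q
  rw [card_Ed] at h
  exact h

lemma EPr_both (I : Finset (Fin (numEdges n))) (J Q : Finset (Ed n))
    (hJQ : Disjoint Q J) (hJI : J.card ≤ I.card) (hJ : J.card < numEdges n) :
    Pr (fun σ : EdgeOrdering n => (∀ q ∈ J, σ q ∈ I) ∧ ∀ q ∈ Q, σ q ∉ I) ≤
      ((I.card : ℝ) / numEdges n) ^ J.card *
        Real.exp (-(((I.card : ℝ) - J.card) * Q.card / numEdges n)) := by
  have h := Pr_both (card_Ed_fin n) I J Q hJQ hJI (by rw [card_Ed]; exact hJ)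
  rw [card_Ed] at h
  exact h

end prob2
end BG

namespace BG
section prob3
variable {n : ℕ}

lemma ev_pairs (x0 : Sym2 (Fin n)) (C : Finset (Fin n)) (r a b : ℕ) (hab : a ≤ b)
    (hb : b ≤ numEdges n) :
    Pr (fun σ : EdgeOrdering n => ¬ ∀ X Y : Finset (Fin n), X ⊆ C → Y ⊆ C → Disjoint X Y →
      r ≤ X.card → r ≤ Y.card →
      ∃ s, a ≤ s ∧ s < b ∧ ∃ x ∈ X, ∃ y ∈ Y, sq x0 σ s = s(x, y)) ≤
    4 ^ C.card * Real.exp (-(((b : ℝ) - a) * (r : ℝ) ^ 2 / numEdges n)) := by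
  set S := (C.powerset ×ˢ C.powerset).filter
    (fun q => Disjoint q.1 q.2 ∧ r ≤ q.1.card ∧ r ≤ q.2.card) with hS
  refine le_trans (Pr_mono (Q := fun σ => ∃ q ∈ S, ∀ x ∈ pairs q.1 q.2, σ x ∉ W n a b) ?_)
    (le_trans (Pr_exists_le _ _ (q := Real.exp (-(((b : ℝ) - a) * (r : ℝ) ^ 2 / numEdges n))) ?_) ?_)
  · intro σ h
    push Not at h
    obtain ⟨X, Y, hX, hY, hd, h1, h2, h3⟩ := h
    refine ⟨(X, Y), ?_, ?_⟩
    · rw [hS, Finset.mem_filter, Finset.mem_product, Finset.mem_powerset, Finset.mem_powerset]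
      exact ⟨⟨hX, hY⟩, hd, h1, h2⟩
    · intro e he hW
      rw [pairs, Finset.mem_filter] at he
      obtain ⟨_, x, hx, y, hy, hxy⟩ := he
      rw [mem_W] at hW
      exact h3 _ hW.1 hW.2 x hx y hy (by rw [sq_apply, hxy])
  · rintro ⟨X, Y⟩ hq
    rw [hS, Finset.mem_filter] at hq
    obtain ⟨_, hd, h1, h2⟩ := hq
    refine (EPr_avoid _ _).trans ?_
    rw [Real.exp_le_exp, neg_le_neg_iff, card_W hb, Nat.cast_sub hab]
    have h3 : r ^ 2 ≤ (pairs X Y).card := by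
      refine le_trans ?_ (card_pairs hd)
      rw [pow_two]; exact Nat.mul_le_mul h1 h2
    have h4 : (a : ℝ) ≤ b := by exact_mod_cast hab
    have h5 : (0 : ℝ) ≤ (b : ℝ) - a := by linarith
    gcongr
    exact_mod_cast h3
  · gcongr
    have h1 : S.card ≤ 4 ^ C.card := by
      refine (Finset.card_filter_le _ _).trans ?_
      rw [Finset.card_product, Finset.card_powerset, ← mul_pow]; norm_num
    exact_mod_cast h1

lemma ev_deg (v : Fin n) (x0 : Sym2 (Fin n)) (a b L : ℕ) (hb : b ≤ numEdges n) :
    Pr (fun σ : EdgeOrdering n =>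
      L ≤ ((Finset.Ico a b).filter (fun s => v ∈ sq x0 σ s)).card) ≤
    Real.exp (Real.exp 1 * (((n - 1 : ℕ) : ℝ) * ((b - a : ℕ) : ℝ) / numEdges n) - L) := by
  have hT := EPr_tail (W n a b) (inc v) L
  refine le_trans (Pr_mono ?_) (hT.trans ?_)
  · intro σ h
    rw [count_inc x0 σ hb v] at h
    exact h
  · rw [card_inc, card_W hb] 

lemma ev_deg_all (x0 : Sym2 (Fin n)) (b L : ℕ) (hb : b ≤ numEdges n) :
    Pr (fun σ : EdgeOrdering n => ¬ ∀ v,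
      ((Finset.range b).filter (fun s => v ∈ sq x0 σ s)).card ≤ L) ≤
    n * Real.exp (Real.exp 1 * (((n - 1 : ℕ) : ℝ) * (b : ℝ) / numEdges n) - L) := by
  refine le_trans (Pr_mono (Q := fun σ => ∃ v ∈ (Finset.univ : Finset (Fin n)),
      L ≤ ((Finset.Ico 0 b).filter (fun s => v ∈ sq x0 σ s)).card) ?_)
    (le_trans (Pr_exists_le _ _ (fun v _ => ev_deg v x0 0 b L hb)) ?_)
  · intro σ h
    push Not at h
    obtain ⟨v, hv⟩ := h
    refine ⟨v, Finset.mem_univ _, ?_⟩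
    rw [← Finset.range_eq_Ico]
    exact hv.le
  · simp

lemma ev_inside (x0 : Sym2 (Fin n)) (C : Finset (Fin n)) (b L : ℕ) (hb : b ≤ numEdges n) :
    Pr (fun σ : EdgeOrdering n =>
      ¬ ((Finset.range b).filter (fun s => ∀ v ∈ sq x0 σ s, v ∈ C)).card ≤ L) ≤
    Real.exp (Real.exp 1 * ((C.card : ℝ) ^ 2 * (b : ℝ) / numEdges n) - L) := by
  have hT := EPr_tail (W n 0 b) (inside C) L
  refine le_trans (Pr_mono ?_) (hT.trans ?_)
  · intro σ h
    push Not at h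
    rw [count_inside x0 σ hb C] at h
    exact h.le
  · rw [card_W hb, Nat.sub_zero]
    have h1 : ((inside C).card : ℝ) ≤ (C.card : ℝ) ^ 2 := by exact_mod_cast card_inside C
    gcongr

lemma ev_low1 (v : Fin n) (x0 : Sym2 (Fin n)) (a b d : ℕ) (hb : b ≤ numEdges n)
    (hd : d ≤ b - a) (hdN : d < numEdges n) (hdn : d + 1 ≤ n) :
    Pr (fun σ : EdgeOrdering n =>
      ((Finset.Ico a b).filter (fun s => v ∈ sq x0 σ s)).card ≤ d) ≤
    (d + 1) * ((1 + n * ((b - a : ℕ) : ℝ) / numEdges n) ^ d *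
      Real.exp (-((((b - a : ℕ) : ℝ) - d) * ((n : ℝ) - 1 - d) / numEdges n))) := by
  set l : ℝ := n * ((b - a : ℕ) : ℝ) / numEdges n with hl
  have hl0 : 0 ≤ l := by positivity
  set ex := Real.exp (-((((b - a : ℕ) : ℝ) - d) * ((n : ℝ) - 1 - d) / numEdges n)) with hex
  have hN0 : (0 : ℝ) < numEdges n := by exact_mod_cast (by omega : 0 < numEdges n)
  have hone : ∀ j ∈ Finset.range (d + 1), Pr (fun σ : EdgeOrdering n =>
      ∃ J ∈ (inc v).powersetCard j, (∀ q ∈ J, σ q ∈ W n a b) ∧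
        ∀ q ∈ inc v \ J, σ q ∉ W n a b) ≤ (1 + l) ^ d * ex := by
    intro j hj
    rw [Finset.mem_range] at hj
    have hjd : j ≤ d := by omega
    refine (Pr_exists_le _ _ (q := (((b - a : ℕ) : ℝ) / numEdges n) ^ j * ex) ?_).trans ?_
    · intro J hJ
      rw [Finset.mem_powersetCard] at hJ
      refine (EPr_both (W n a b) J (inc v \ J) Finset.sdiff_disjoint
        (by rw [card_W hb]; omega) (by omega)).trans ?_
      rw [card_W hb, hJ.2, Finset.card_sdiff_of_subset hJ.1, card_inc, hJ.2]
      gcongr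
      rw [hex, Real.exp_le_exp, neg_le_neg_iff]
      have h1 : (d : ℝ) ≤ ((b - a : ℕ) : ℝ) := by exact_mod_cast hd
      have h2 : (j : ℝ) ≤ d := by exact_mod_cast hjd
      have h3 : ((n - 1 - j : ℕ) : ℝ) = (n : ℝ) - 1 - j := by
        rw [Nat.cast_sub (by omega), Nat.cast_sub (by omega)]; simp
      have h4 : (d : ℝ) + 1 ≤ n := by exact_mod_cast hdn
      rw [h3]
      have : (0 : ℝ) ≤ (n : ℝ) - 1 - d := by linarith
      have : (0 : ℝ) ≤ ((b - a : ℕ) : ℝ) - j := by linarith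
      gcongr
    · rw [Finset.card_powersetCard, card_inc, ← mul_assoc]
      gcongr
      have h1 : (((n - 1).choose j : ℕ) : ℝ) ≤ (n : ℝ) ^ j := by
        refine le_trans ?_ (pow_le_pow_left₀ (by positivity) (by
          exact_mod_cast Nat.sub_le n 1 : ((n - 1 : ℕ) : ℝ) ≤ n) j)
        exact_mod_cast Nat.choose_le_pow (n - 1) j
      calc (((n - 1).choose j : ℕ) : ℝ) * (((b - a : ℕ) : ℝ) / numEdges n) ^ j
          ≤ (n : ℝ) ^ j * (((b - a : ℕ) : ℝ) / numEdges n) ^ j := by gcongr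
        _ = l ^ j := by rw [hl, ← mul_pow, mul_div_assoc]
        _ ≤ (1 + l) ^ j := by gcongr; linarith
        _ ≤ (1 + l) ^ d := pow_le_pow_right₀ (by linarith) hjd
  have hu := Pr_exists_le _ _ hone
  refine le_trans (Pr_mono ?_) (hu.trans ?_)
  · intro σ h
    rw [count_inc x0 σ hb v] at h
    refine ⟨_, Finset.mem_range.2 (Nat.lt_succ_of_le h),
      (inc v).filter (fun q => σ q ∈ W n a b), ?_, ?_, ?_⟩
    · rw [Finset.mem_powersetCard]
      exact ⟨Finset.filter_subset _ _, rfl⟩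
    · intro q hq; exact (Finset.mem_filter.1 hq).2
    · intro q hq h'
      rw [Finset.mem_sdiff, Finset.mem_filter] at hq
      exact hq.2 ⟨hq.1, h'⟩
  · simp

lemma ev_low (x0 : Sym2 (Fin n)) (a b d : ℕ) (hb : b ≤ numEdges n)
    (hd : d ≤ b - a) (hdN : d < numEdges n) (hdn : d + 1 ≤ n) :
    Pr (fun σ : EdgeOrdering n => ¬ ∀ v,
      d + 1 ≤ ((Finset.Ico a b).filter (fun s => v ∈ sq x0 σ s)).card) ≤
    n * ((d + 1) * ((1 + n * ((b - a : ℕ) : ℝ) / numEdges n) ^ d *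
      Real.exp (-((((b - a : ℕ) : ℝ) - d) * ((n : ℝ) - 1 - d) / numEdges n)))) := by
  refine le_trans (Pr_mono (Q := fun σ => ∃ v ∈ (Finset.univ : Finset (Fin n)),
      ((Finset.Ico a b).filter (fun s => v ∈ sq x0 σ s)).card ≤ d) ?_)
    (le_trans (Pr_exists_le _ _ (fun v _ => ev_low1 v x0 a b d hb hd hdN hdn)) ?_)
  · intro σ h
    push Not at h
    obtain ⟨v, hv⟩ := h
    exact ⟨v, Finset.mem_univ _, by omega⟩
  · simp

lemma ev_sparse (x0 : Sym2 (Fin n)) (b g : ℕ) (hb : b ≤ numEdges n) :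
    Pr (fun σ : EdgeOrdering n => ¬ ∀ X : Finset (Fin n), X.card ≤ g →
      ((Finset.range b).filter (fun s => ∀ v ∈ sq x0 σ s, v ∈ X)).card ≤ X.card) ≤
    (g + 1) * (2 ^ (g ^ 2) * (1 + n * (b : ℝ) / numEdges n) ^ g * ((b : ℝ) / numEdges n)) := by
  set l : ℝ := n * (b : ℝ) / numEdges n with hl
  have hl0 : 0 ≤ l := by positivity
  have hone : ∀ x ∈ Finset.range (g + 1), Pr (fun σ : EdgeOrdering n =>
      ∃ X ∈ (Finset.univ : Finset (Fin n)).powersetCard x, ∃ J ∈ (inside X).powersetCard (x + 1),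
        ∀ q ∈ J, σ q ∈ W n 0 b) ≤
      2 ^ (g ^ 2) * (1 + l) ^ g * ((b : ℝ) / numEdges n) := by
    intro x hx
    rw [Finset.mem_range] at hx
    have hxg : x ≤ g := by omega
    refine (Pr_exists_le _ _ (q := 2 ^ (g ^ 2) * ((b : ℝ) / numEdges n) ^ (x + 1)) ?_).trans ?_
    · intro X hX
      rw [Finset.mem_powersetCard] at hX
      refine (Pr_exists_le _ _ (q := ((b : ℝ) / numEdges n) ^ (x + 1)) ?_).trans ?_
      · intro J hJ
        rw [Finset.mem_powersetCard] at hJ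
        refine (EPr_into (W n 0 b) J).trans ?_
        rw [card_W hb, hJ.2, Nat.sub_zero]
      · gcongr
        have h1 : ((inside X).powersetCard (x + 1)).card ≤ 2 ^ (g ^ 2) := by
          rw [Finset.card_powersetCard]
          refine (Nat.choose_le_two_pow _ _).trans ?_
          refine Nat.pow_le_pow_right (by norm_num) ((card_inside X).trans ?_)
          rw [hX.2]
          exact Nat.pow_le_pow_left hxg 2
        exact_mod_cast h1
    · rw [Finset.card_powersetCard, Finset.card_univ, Fintype.card_fin]
      have h1 : ((n.choose x : ℕ) : ℝ) ≤ (n : ℝ) ^ x := by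
        exact_mod_cast Nat.choose_le_pow n x
      calc ((n.choose x : ℕ) : ℝ) * (2 ^ (g ^ 2) * ((b : ℝ) / numEdges n) ^ (x + 1))
          ≤ (n : ℝ) ^ x * (2 ^ (g ^ 2) * ((b : ℝ) / numEdges n) ^ (x + 1)) := by gcongr
        _ = 2 ^ (g ^ 2) * l ^ x * ((b : ℝ) / numEdges n) := by
            rw [hl, mul_div_assoc, mul_pow, pow_succ]; ring
        _ ≤ 2 ^ (g ^ 2) * (1 + l) ^ x * ((b : ℝ) / numEdges n) := by
            gcongr; linarith
        _ ≤ 2 ^ (g ^ 2) * (1 + l) ^ g * ((b : ℝ) / numEdges n) := by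
            gcongr; linarith
  have hu := Pr_exists_le _ _ hone
  refine le_trans (Pr_mono ?_) (hu.trans ?_)
  · intro σ h
    push Not at h
    obtain ⟨X, hX, hlt⟩ := h
    rw [count_inside x0 σ hb X] at hlt
    obtain ⟨J, hJ, hJc⟩ := Finset.exists_subset_card_eq (Nat.succ_le_of_lt hlt)
    refine ⟨X.card, Finset.mem_range.2 (by omega), X, by simp, J, ?_, ?_⟩
    · rw [Finset.mem_powersetCard]
      exact ⟨hJ.trans (Finset.filter_subset _ _), hJc⟩
    · intro q hq
      exact (Finset.mem_filter.1 (hJ hq)).2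
  · simp

end prob3
end BG

namespace BG
section prob4
variable {n : ℕ}

/-- bad event at level `k` -/
def BadL (p : Prm (Fin n)) (x0 : Sym2 (Fin n)) (M k : ℕ) (σ : EdgeOrdering n) : Prop :=
  3 * (p.d + 1) * p.r ≤ (Cr p (sq x0 σ)).card ∧
  (∀ v, ((Finset.range (sk p k)).filter (fun s => v ∈ sq x0 σ s)).card ≤ p.r) ∧
  Inv (G p (sq x0 σ) (sk p k)) (Cr p (sq x0 σ)) k ∧
  ∃ A ∈ mins (G p (sq x0 σ) (sk p k)) (Cr p (sq x0 σ)) k, M ≤ A.card ∧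
    ∃ D ⊆ Cr p (sq x0 σ), D.card = p.d - 1 ∧
      ∀ i < p.L, ∀ a ∈ A, ∀ c ∈ Cr p (sq x0 σ), c ∉ D → sq x0 σ (sk p k + i) ≠ s(a, c)

def kkey (s : ℕ) (σ : EdgeOrdering n) : Ed n → Option (Fin (numEdges n)) :=
  fun x => if (σ x : ℕ) < s then some (σ x) else none

lemma kkey_agree {s : ℕ} {σ σ0 : EdgeOrdering n} (h : kkey s σ = kkey s σ0) :
    ∀ x, (σ0 x : ℕ) < s → σ x = σ0 x := by
  intro x hx
  have h1 := congrFun h x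
  rw [kkey, kkey, if_pos hx] at h1
  split_ifs at h1 with h2
  exact Option.some.inj h1

lemma kkey_of_agree {s : ℕ} {σ σ0 : EdgeOrdering n}
    (h : ∀ x, (σ0 x : ℕ) < s → σ x = σ0 x) : kkey s σ = kkey s σ0 := by
  funext x
  rw [kkey, kkey]
  by_cases h0 : (σ0 x : ℕ) < s
  · rw [if_pos h0, h x h0, if_pos h0]
  · rw [if_neg h0, if_neg]
    intro h1
    have h2 := h (σ0.symm (σ x)) (by simpa using h1)
    simp only [Equiv.apply_symm_apply, EmbeddingLike.apply_eq_iff_eq] at h2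
    rw [← h2] at h0
    simp at h0
    omega

lemma sq_agree {s : ℕ} {σ σ0 : EdgeOrdering n} (x0 : Sym2 (Fin n))
    (h : ∀ x, (σ0 x : ℕ) < s → σ x = σ0 x) : ∀ i < s, sq x0 σ i = sq x0 σ0 i := by
  intro i hi
  by_cases hN : i < numEdges n
  · have h1 := h (σ0.symm ⟨i, hN⟩) (by simpa using hi)
    rw [Equiv.apply_symm_apply] at h1
    have h2 : σ.symm ⟨i, hN⟩ = σ0.symm ⟨i, hN⟩ := by
      rw [Equiv.symm_apply_eq]; exact h1.symm
    rw [sq_lt _ _ hN, sq_lt _ _ hN, h2]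
  · rw [sq, sq, dif_neg hN, dif_neg hN]

lemma T0_le_sk (p : Prm (Fin n)) (k : ℕ) : p.T0 ≤ sk p k := by
  rw [sk, Prm.T1, Prm.Tm]; omega

lemma ev_level1 {p : Prm (Fin n)} {x0 : Sym2 (Fin n)} {M k : ℕ} (hd : 1 ≤ p.d) (hr : 1 ≤ p.r)
    (hM : 1 ≤ M) (hb : sk p k + p.L ≤ numEdges n) (σ0 : EdgeOrdering n) (h0 : BadL p x0 M k σ0) :
    ((Finset.univ.filter (fun σ : EdgeOrdering n =>
      kkey (sk p k) σ = kkey (sk p k) σ0 ∧ BadL p x0 M k σ)).card : ℝ) ≤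
      (n : ℝ) ^ p.d * Real.exp (-((p.L : ℝ) * (M * p.r) / numEdges n)) *
      (Finset.univ.filter (fun σ : EdgeOrdering n =>
        kkey (sk p k) σ = kkey (sk p k) σ0)).card := by
  set s := sk p k with hs
  set C := Cr p (sq x0 σ0) with hC
  set G0 := G p (sq x0 σ0) s with hG0
  obtain ⟨hCr, hdeg, hI, -⟩ := h0
  set S := ((mins G0 C k).filter (fun A => M ≤ A.card)) ×ˢ (C.powersetCard (p.d - 1)) with hS
  set B := Finset.univ.filter (fun σ : EdgeOrdering n => kkey s σ = kkey s σ0) with hB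
  have hBeq : B = Finset.univ.filter (fun σ : EdgeOrdering n =>
      ∀ x, (σ0 x : ℕ) < s → σ x = σ0 x) := by
    ext σ
    rw [hB, Finset.mem_filter, Finset.mem_filter]
    exact ⟨fun h => ⟨h.1, kkey_agree h.2⟩, fun h => ⟨h.1, kkey_of_agree h.2⟩⟩
  set Q : Finset (Fin n) × Finset (Fin n) → Finset (Ed n) := fun q =>
    (pairs q.1 (C \ q.2)).filter (fun x => s ≤ (σ0 x : ℕ)) with hQ
  set F : Finset (Fin n) × Finset (Fin n) → Finset (EdgeOrdering n) := fun q =>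
    Finset.univ.filter (fun σ : EdgeOrdering n => (∀ x, (σ0 x : ℕ) < s → σ x = σ0 x) ∧
      ∀ x ∈ Q q, σ x ∉ W n s (s + p.L)) with hF
  have hsub : Finset.univ.filter (fun σ : EdgeOrdering n =>
      kkey s σ = kkey s σ0 ∧ BadL p x0 M k σ) ⊆ S.biUnion F := by
    intro σ hσ
    rw [Finset.mem_filter] at hσ
    obtain ⟨-, hk, -, -, -, A, hA, hAM, D, hD, hDc, hno⟩ := hσ
    have hag := kkey_agree hk
    have hsq := sq_agree x0 hag
    have hCe : Cr p (sq x0 σ) = C := by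
      rw [hC, Cr, Cr, G_congr p (fun i hi => hsq i (lt_of_lt_of_le hi (T0_le_sk p k)))]
    have hGe : G p (sq x0 σ) s = G0 := G_congr p hsq
    rw [← hs, hCe, hGe] at hA
    rw [hCe] at hD hno
    rw [Finset.mem_biUnion]
    refine ⟨(A, D), ?_, ?_⟩
    · rw [hS, Finset.mem_product, Finset.mem_filter, Finset.mem_powersetCard]
      exact ⟨⟨hA, hAM⟩, hD, hDc⟩
    · rw [hF, Finset.mem_filter]
      refine ⟨Finset.mem_univ _, hag, ?_⟩
      intro x hx hW
      rw [hQ, Finset.mem_filter, pairs, Finset.mem_filter] at hx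
      obtain ⟨⟨-, a, ha, c, hc, hxac⟩, -⟩ := hx
      rw [Finset.mem_sdiff] at hc
      rw [mem_W] at hW
      obtain ⟨i, hi⟩ := Nat.exists_eq_add_of_le hW.1
      refine hno i (by omega) a ha c hc.1 hc.2 ?_
      rw [← hs, ← hi, sq_apply, hxac]
  have hF1 : ∀ q ∈ S, ((F q).card : ℝ) ≤
      Real.exp (-((p.L : ℝ) * (M * p.r) / numEdges n)) * B.card := by
    rintro ⟨A, D⟩ hq
    rw [hS, Finset.mem_product, Finset.mem_filter, Finset.mem_powersetCard] at hq
    obtain ⟨⟨hA, hAM⟩, hD, hDc⟩ := hq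
    simp only at hA hAM hD hDc
    have hAC : Disjoint A C := by
      rw [mins, Finset.mem_filter] at hA; exact hA.2.2.1
    have h1 := cnt_adapt (card_Ed n) s σ0 (W n s (s + p.L)) (fun i hi => (mem_W.1 hi).1) (Q (A, D))
      (fun x hx => by rw [hQ, Finset.mem_filter] at hx; exact hx.2)
    have hQc : M * p.r ≤ (Q (A, D)).card := by
      have h2 := card_pairs (X := A) (Y := C \ D)
        (Finset.disjoint_of_subset_right Finset.sdiff_subset hAC)
      have h3 : ((pairs A (C \ D)).filter (fun x => s ≤ (σ0 x : ℕ))).card +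
          ((pairs A (C \ D)).filter (fun x => ¬ s ≤ (σ0 x : ℕ))).card = (pairs A (C \ D)).card :=
        Finset.card_filter_add_card_filter_not _
      have h4 : ((pairs A (C \ D)).filter (fun x => ¬ s ≤ (σ0 x : ℕ))).card ≤ A.card * p.r := by
        refine le_trans (Finset.card_le_card (t := A.biUnion (fun a =>
          (inc a).filter (fun x => σ0 x ∈ W n 0 s))) ?_) (Finset.card_biUnion_le_card_mul _ _ _ ?_)
        · intro x hx
          rw [Finset.mem_filter, pairs, Finset.mem_filter] at hx
          obtain ⟨⟨-, a, ha, c, hc, hxac⟩, hlt⟩ := hx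
          rw [Finset.mem_biUnion]
          refine ⟨a, ha, ?_⟩
          rw [Finset.mem_filter, inc, Finset.mem_filter, mem_W, hxac]
          exact ⟨⟨Finset.mem_univ _, by simp⟩, by omega, by omega⟩
        · intro a _
          rw [← count_inc x0 σ0 (by omega) a, ← Finset.range_eq_Ico]
          exact hdeg a
      have h5 : (C \ D).card = C.card - (p.d - 1) := by
        rw [Finset.card_sdiff_of_subset hD, hDc]
      have h6 : p.r + p.r ≤ (C \ D).card := by
        rw [h5]
        have : p.d ≤ p.d * p.r := Nat.le_mul_of_pos_right _ hr
        have h7 : 3 * (p.d + 1) * p.r = 3 * (p.d * p.r) + 3 * p.r := by ring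
        have hCr' : 3 * (p.d + 1) * p.r ≤ C.card := hCr
        omega
      have h8 : A.card * (p.r + p.r) ≤ A.card * (C \ D).card := Nat.mul_le_mul_left _ h6
      have h9 : M * p.r ≤ A.card * p.r := Nat.mul_le_mul_right _ hAM
      have h10 : (Q (A, D)).card = ((pairs A (C \ D)).filter (fun x => s ≤ (σ0 x : ℕ))).card := rfl
      rw [h10]
      rw [mul_add] at h8
      omega
    rw [card_W hb, ← hBeq] at h1
    refine h1.trans ?_
    gcongr
    · omega
    · exact_mod_cast hQc
  have hSc : S.card ≤ n ^ p.d := by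
    rw [hS, Finset.card_product]
    have h1 : ((mins G0 C k).filter (fun A => M ≤ A.card)).card ≤ n := by
      have h2 : ((mins G0 C k)).card * 1 ≤ n := by
        have := mins_card (M := 1) hI (fun A hA => by
          rw [mins, Finset.mem_filter] at hA
          exact hA.2.1.card_pos)
        rwa [Fintype.card_fin] at this
      have := Finset.card_filter_le (mins G0 C k) (fun A => M ≤ A.card)
      omega
    have h3 : (C.powersetCard (p.d - 1)).card ≤ n ^ (p.d - 1) := by
      rw [Finset.card_powersetCard]
      refine (Nat.choose_le_pow _ _).trans (Nat.pow_le_pow_left ?_ _)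
      simpa using Finset.card_le_univ C
    calc _ ≤ n * n ^ (p.d - 1) := Nat.mul_le_mul h1 h3
      _ = n ^ p.d := by rw [← pow_succ', Nat.sub_add_cancel hd]
  have h1 := (Finset.card_le_card hsub).trans Finset.card_biUnion_le
  calc _ ≤ ((∑ q ∈ S, (F q).card : ℕ) : ℝ) := by exact_mod_cast h1
    _ = ∑ q ∈ S, ((F q).card : ℝ) := by push_cast; rfl
    _ ≤ S.card • (Real.exp (-((p.L : ℝ) * (M * p.r) / numEdges n)) * B.card) :=
        Finset.sum_le_card_nsmul _ _ _ hF1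
    _ = (S.card : ℝ) * Real.exp (-((p.L : ℝ) * (M * p.r) / numEdges n)) * B.card := by
        rw [nsmul_eq_mul]; ring
    _ ≤ _ := by
        gcongr
        exact_mod_cast hSc

lemma ev_level {p : Prm (Fin n)} (x0 : Sym2 (Fin n)) {M k : ℕ} (hd : 1 ≤ p.d) (hr : 1 ≤ p.r)
    (hM : 1 ≤ M) (hb : sk p k + p.L ≤ numEdges n) :
    Pr (fun σ : EdgeOrdering n => BadL p x0 M k σ) ≤
      (n : ℝ) ^ p.d * Real.exp (-((p.L : ℝ) * (M * p.r) / numEdges n)) := by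
  apply Pr_cond (kkey (sk p k)) _ (by positivity)
  intro σ0
  by_cases h : ∃ σ1, kkey (sk p k) σ1 = kkey (sk p k) σ0 ∧ BadL p x0 M k σ1
  · obtain ⟨σ1, h1, h2⟩ := h
    have := ev_level1 hd hr hM hb σ1 h2
    rw [h1] at this
    convert this
  · have h1 : (Finset.univ.filter (fun σ : EdgeOrdering n =>
      kkey (sk p k) σ = kkey (sk p k) σ0 ∧ BadL p x0 M k σ)) = ∅ := by
      rw [Finset.filter_eq_empty_iff]
      intro σ _ h2
      exact h ⟨σ, h2⟩
    have h2 : ((Finset.univ.filter (fun σ : EdgeOrdering n =>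
      kkey (sk p k) σ = kkey (sk p k) σ0 ∧ BadL p x0 M k σ)).card : ℝ) = 0 := by
      rw [h1]; simp
    refine le_trans (le_of_eq ?_) (le_trans h2.le (by positivity))
    congr!

end prob4
end BG

namespace BG
section prob5
variable {n : ℕ}

lemma core_card {p : Prm (Fin n)} {e : ℕ → Sym2 (Fin n)} {M : ℕ} (ok : OK p M)
    (a1 : ∀ X Y : Finset (Fin n), X ⊆ p.C0 → Y ⊆ p.C0 → Disjoint X Y → p.r ≤ X.card →
      p.r ≤ Y.card → ∃ s < p.T0, ∃ x ∈ X, ∃ y ∈ Y, e s = s(x, y)) :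
    3 * (p.d + 1) * p.r ≤ (Cr p e).card := by
  have h : ∃ C ⊆ p.C0, p.C0.card ≤ C.card + p.r ∧ IsCore p.d (G p e p.T0) C := by
    apply exists_core (by have := ok.hd; omega) ok.hr ok.hm
    intro X Y hX hY hd h1 h2
    obtain ⟨s, hs, x, hx, y, hy, hxy⟩ := a1 X Y hX hY hd h1 h2
    refine ⟨x, hx, y, hy, (mem_G _ _ _ _).2 ⟨s, hs, hxy, (dec_0 hs).2 ?_⟩⟩
    rw [hxy]
    intro v hv
    rcases Sym2.mem_iff.1 hv with rfl | rfl
    · exact hX hx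
    · exact hY hy
  have h0 : Cr p e = h.choose := by
    rw [Cr, core]
    have h' := h
    convert dif_pos h' using 1
  have h1 := h.choose_spec.2.1
  rw [← h0] at h1
  have h2 := ok.hm
  have h3 : 4 * (p.d + 1) * p.r = 3 * (p.d + 1) * p.r + p.d * p.r + p.r := by ring
  omega

/-- all the good events -/
structure Ev (p : Prm (Fin n)) (x0 : Sym2 (Fin n)) (M β : ℕ) (σ : EdgeOrdering n) : Prop where
  b1 : ∀ X Y : Finset (Fin n), X ⊆ p.C0 → Y ⊆ p.C0 → Disjoint X Y →
      p.r ≤ X.card → p.r ≤ Y.card →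
      ∃ s, 0 ≤ s ∧ s < p.T0 ∧ ∃ x ∈ X, ∃ y ∈ Y, sq x0 σ s = s(x, y)
  b2 : ∀ X Y : Finset (Fin n), X ⊆ Finset.univ → Y ⊆ Finset.univ → Disjoint X Y →
      p.r ≤ X.card → p.r ≤ Y.card →
      ∃ s, p.T0 ≤ s ∧ s < p.Tm ∧ ∃ x ∈ X, ∃ y ∈ Y, sq x0 σ s = s(x, y)
  b3 : ∀ v, p.d + 1 ≤ ((Finset.Ico p.Tm p.T1).filter (fun s => v ∈ sq x0 σ s)).card
  b4 : ∀ X : Finset (Fin n), X.card ≤ 2 * p.g →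
      ((Finset.range p.T1).filter (fun s => ∀ v ∈ sq x0 σ s, v ∈ X)).card ≤ X.card
  b5 : ((Finset.range p.T0).filter (fun s => ∀ v ∈ sq x0 σ s, v ∈ p.C0)).card ≤ β
  b6 : ∀ v, ((Finset.range p.tt).filter (fun s => v ∈ sq x0 σ s)).card ≤ p.r
  b7 : ¬ ∃ k ∈ Finset.range p.d, BadL p x0 M k σ

lemma sk_le_tt (p : Prm (Fin n)) {k : ℕ} (hk : k < p.d) : sk p k + p.L ≤ p.tt := by
  rw [sk, Prm.tt, add_assoc, ← Nat.succ_mul]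
  exact Nat.add_le_add_left (Nat.mul_le_mul_right _ hk) _

lemma good_of_ev {p : Prm (Fin n)} {x0 : Sym2 (Fin n)} {M β : ℕ} (ok : OK p M)
    (htt : p.tt ≤ numEdges n) {σ : EdgeOrdering n} (h : Ev p x0 M β σ) :
    Good p (sq x0 σ) M β := by
  have a1 : ∀ X Y : Finset (Fin n), X ⊆ p.C0 → Y ⊆ p.C0 → Disjoint X Y → p.r ≤ X.card →
      p.r ≤ Y.card → ∃ s < p.T0, ∃ x ∈ X, ∃ y ∈ Y, sq x0 σ s = s(x, y) := by
    intro X Y h1 h2 h3 h4 h5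
    obtain ⟨s, -, hs, h6⟩ := h.b1 X Y h1 h2 h3 h4 h5
    exact ⟨s, hs, h6⟩
  refine ⟨?_, ?_, a1, ?_, ?_, ?_, ?_, ?_⟩
  · intro i hi j hj hij
    exact sq_inj x0 σ (by omega) (by omega) hij
  · intro i hi
    exact sq_nd x0 σ (by omega)
  · intro X Y h1 h2 h3
    exact h.b2 X Y (Finset.subset_univ _) (Finset.subset_univ _) h1 h2 h3
  · intro v
    have := h.b3 v
    convert this
  · intro X hX
    have := h.b4 X hX
    convert this
  · have := h.b5
    convert this
  · intro k hk hI A hA hM D hD hDc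
    by_contra hcon
    push Not at hcon
    apply h.b7
    refine ⟨k, Finset.mem_range.2 hk, core_card ok a1, ?_, hI, A, hA, hM, D, hD, hDc, ?_⟩
    · intro v
      refine le_trans (Finset.card_le_card (Finset.filter_subset_filter _ ?_)) (h.b6 v)
      have := sk_le_tt p hk
      intro i; rw [Finset.mem_range, Finset.mem_range]; omega
    · intro i hi a ha c hc hcD
      exact hcon i hi a ha c hc hcD

lemma prob_ev {p : Prm (Fin n)} (x0 : Sym2 (Fin n)) {M β : ℕ} (ok : OK p M) (hM : 1 ≤ M)
    (htt : p.tt ≤ numEdges n) (hdT : p.d ≤ p.Tb) (hdN : p.d < numEdges n) (hdn : p.d + 1 ≤ n) :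
    Pr (fun σ : EdgeOrdering n => ¬ Ev p x0 M β σ) ≤
      4 ^ p.C0.card * Real.exp (-((p.T0 : ℝ) * (p.r : ℝ) ^ 2 / numEdges n)) +
      (4 ^ n * Real.exp (-((p.Ta : ℝ) * (p.r : ℝ) ^ 2 / numEdges n)) +
      (n * ((p.d + 1) * ((1 + n * (p.Tb : ℝ) / numEdges n) ^ p.d *
        Real.exp (-(((p.Tb : ℝ) - p.d) * ((n : ℝ) - 1 - p.d) / numEdges n)))) +
      (((2 * p.g : ℕ) + 1) * (2 ^ ((2 * p.g) ^ 2) * (1 + n * (p.T1 : ℝ) / numEdges n) ^ (2 * p.g) *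
        ((p.T1 : ℝ) / numEdges n)) +
      (Real.exp (Real.exp 1 * ((p.C0.card : ℝ) ^ 2 * (p.T0 : ℝ) / numEdges n) - β) +
      (n * Real.exp (Real.exp 1 * (((n - 1 : ℕ) : ℝ) * (p.tt : ℝ) / numEdges n) - p.r) +
      p.d * ((n : ℝ) ^ p.d * Real.exp (-((p.L : ℝ) * (M * p.r) / numEdges n)))))))) := by
  have e1 : p.T0 ≤ p.Tm := by rw [Prm.Tm]; omega
  have e2 : p.Tm ≤ p.T1 := by rw [Prm.T1]; omega
  have e3 : p.T1 ≤ p.tt := by rw [Prm.tt]; omega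
  have u1 := ev_pairs x0 p.C0 p.r 0 p.T0 (by omega) (by omega)
  have u2 := ev_pairs x0 Finset.univ p.r p.T0 p.Tm e1 (by omega)
  have u3 := ev_low x0 p.Tm p.T1 p.d (by omega) (by rw [Prm.T1]; omega) hdN hdn
  have u4 := ev_sparse x0 p.T1 (2 * p.g) (by omega)
  have u5 := ev_inside x0 p.C0 p.T0 β (by omega)
  have u6 := ev_deg_all x0 p.tt p.r htt
  have u7 := Pr_exists_le (Finset.range p.d) (fun k (σ : EdgeOrdering n) => BadL p x0 M k σ)
    (fun k hk => ev_level (p := p) x0 (k := k) (by have := ok.hd; omega) ok.hr hM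
      ((sk_le_tt p (Finset.mem_range.1 hk)).trans htt))
  have w2 : ((p.Tm : ℝ) - p.T0) = p.Ta := by rw [Prm.Tm]; push_cast; ring
  have w3 : p.T1 - p.Tm = p.Tb := by rw [Prm.T1]; omega
  rw [w2, Finset.card_univ, Fintype.card_fin] at u2
  rw [w3] at u3
  rw [Nat.cast_zero, sub_zero] at u1
  rw [Finset.card_range] at u7
  refine le_trans (Pr_mono ?_) (le_trans (Pr_or _ _) (add_le_add u1 (le_trans (Pr_or _ _)
    (add_le_add u2 (le_trans (Pr_or _ _) (add_le_add u3 (le_trans (Pr_or _ _) (add_le_add u4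
    (le_trans (Pr_or _ _) (add_le_add u5 (le_trans (Pr_or _ _) (add_le_add u6 u7))))))))))))
  intro σ h
  by_contra hcon
  simp only [not_or] at hcon
  obtain ⟨c1, c2, c3, c4, c5, c6, c7⟩ := hcon
  exact h ⟨not_not.1 c1, not_not.1 c2, not_not.1 c3, not_not.1 c4, not_not.1 c5, not_not.1 c6, c7⟩
end prob5
end BG

namespace BG
section asy

lemma four_pow_le (m : ℕ) : (4 : ℝ) ^ m ≤ Real.exp (3 / 2 * m) := by
  have h : (4 : ℝ) ≤ Real.exp (3 / 2) := by
    have h1 := Real.log_two_lt_d9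
    rw [← Real.log_le_iff_le_exp (by norm_num)]
    have : (4 : ℝ) = 2 ^ 2 := by norm_num
    rw [this, Real.log_pow]
    push_cast
    linarith
  calc (4 : ℝ) ^ m ≤ Real.exp (3 / 2) ^ m := by gcongr
    _ = _ := by rw [← Real.exp_nat_mul]; ring_nf

lemma bd_pairs {m : ℕ} {T r N x : ℝ} (hN : 0 < N) (h : 2 * m * N ≤ T * r ^ 2) (hx : x ≤ m) :
    4 ^ m * Real.exp (-(T * r ^ 2 / N)) ≤ Real.exp (-(x / 2)) := by
  have h1 : 2 * (m : ℝ) ≤ T * r ^ 2 / N := by rwa [le_div_iff₀ hN]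
  calc (4 : ℝ) ^ m * Real.exp (-(T * r ^ 2 / N)) ≤ Real.exp (3 / 2 * m) * Real.exp (-(2 * m)) := by
        gcongr
        exact four_pow_le m
    _ = Real.exp (-(m / 2)) := by rw [← Real.exp_add]; ring_nf
    _ ≤ _ := by gcongr

lemma bd_low {n N l Tb δ : ℝ} {d : ℕ} (hn : 2 ≤ n) (hN : 2 * N = n * (n - 1)) (hl : 0 ≤ l)
    (hnl : n = Real.exp l) (hδ : 0 < δ) (hδ1 : δ ≤ 1) (hTb : (1 + δ / 2) * n * l / 2 ≤ Tb)
    (hTb' : Tb ≤ n * l) (h1 : d ≤ δ * (n * l) / 12) (h2 : 8 * d ≤ δ * (n - 1)) :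
    n * ((d + 1) * ((1 + n * Tb / N) ^ d *
        Real.exp (-((Tb - d) * (n - 1 - d) / N)))) ≤
    (d + 1) * (1 + 4 * l) ^ d * Real.exp (-(δ * l / 6)) := by
  have hN0 : 0 < N := by nlinarith
  have hn0 : 0 ≤ n * l := by positivity
  have hTb0 : 0 ≤ Tb := le_trans (by positivity) hTb
  have e1 : n * Tb / N ≤ 4 * l := by
    rw [div_le_iff₀ hN0]
    have : n * Tb ≤ n * (n * l) := by gcongr
    have h3 : n * n ≤ 4 * N := by nlinarith
    have := mul_le_mul_of_nonneg_right h3 hl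
    linarith
  have e2 : (1 + δ / 6) * l ≤ (Tb - d) * (n - 1 - d) / N := by
    rw [le_div_iff₀ hN0]
    have a1 : (1 + δ / 3) * (n * l) / 2 ≤ Tb - d := by nlinarith
    have a2 : (1 - δ / 8) * (n - 1) ≤ n - 1 - d := by linarith
    have a3 : (1 + δ / 3) * (n * l) / 2 * ((1 - δ / 8) * (n - 1)) ≤ (Tb - d) * (n - 1 - d) := by
      have c1 : 0 ≤ (1 - δ / 8) * (n - 1) := mul_nonneg (by linarith) (by linarith)
      have c2 : 0 ≤ (1 + δ / 3) * (n * l) / 2 := by positivity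
      exact mul_le_mul a1 a2 c1 (c2.trans a1)
    refine le_trans ?_ a3
    have a4 : (1 + δ / 3) * (n * l) / 2 * ((1 - δ / 8) * (n - 1)) =
      (1 + δ / 3) * (1 - δ / 8) * (l * N) := by
        rw [show N = n * (n - 1) / 2 by linarith]; ring
    rw [a4, mul_assoc]
    apply mul_le_mul_of_nonneg_right _ (by positivity)
    nlinarith
  calc _ ≤ n * ((d + 1) * ((1 + 4 * l) ^ d * Real.exp (-((1 + δ / 6) * l)))) := by
        have : 0 ≤ n * Tb / N := by positivity
        gcongr
    _ = (d + 1) * (1 + 4 * l) ^ d * (n * Real.exp (-((1 + δ / 6) * l))) := by ring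
    _ = _ := by
        congr 1
        rw [hnl, ← Real.exp_add]
        ring_nf

lemma bd_sparse {n N l T : ℝ} {g : ℕ} (hn : 2 ≤ n) (hN : 2 * N = n * (n - 1)) (hl : 0 ≤ l)
    (hnl : n = Real.exp l) (hT0 : 0 ≤ T) (hT : T ≤ n * l) :
    ((g : ℝ) + 1) * (2 ^ (g ^ 2) * (1 + n * T / N) ^ g * (T / N)) ≤
    ((g : ℝ) + 1) * (2 ^ (g ^ 2) * (1 + 4 * l) ^ g * (4 * l * Real.exp (-l))) := by
  have hN0 : 0 < N := by nlinarith
  have h3 : n * n ≤ 4 * N := by nlinarith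
  have e1 : n * T / N ≤ 4 * l := by
    rw [div_le_iff₀ hN0]
    have : n * T ≤ n * (n * l) := by gcongr
    have := mul_le_mul_of_nonneg_right h3 hl
    linarith
  have e2 : T / N ≤ 4 * l * Real.exp (-l) := by
    have hn0 : 0 < n := by linarith
    have : T / N = (n * T / N) * Real.exp (-l) := by
      rw [Real.exp_neg, ← hnl]; field_simp
    rw [this]; gcongr
  have : 0 ≤ n * T / N := by positivity
  gcongr

lemma bd_inside {n N m T K δ β : ℝ} (hn : 2 ≤ n) (hK0 : 0 ≤ K) (hN : 2 * N = n * (n - 1))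
    (h : m ^ 2 * T ≤ K * n * n ^ 2) (hK : 192 * K ≤ δ) (hβ : δ * n / 8 - 1 ≤ β) :
    Real.exp (Real.exp 1 * (m ^ 2 * T / N) - β) ≤ Real.exp (1 - δ * n / 16) := by
  have hN0 : 0 < N := by nlinarith
  have h3 : n ^ 2 ≤ 4 * N := by nlinarith
  have he := Real.exp_one_lt_d9
  have e1 : m ^ 2 * T / N ≤ 4 * K * n := by
    rw [div_le_iff₀ hN0]
    have : K * n * n ^ 2 ≤ K * n * (4 * N) := by gcongr
    linarith
  have e2 : Real.exp 1 * (m ^ 2 * T / N) ≤ 3 * (4 * K * n) := by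
    have : 0 ≤ 4 * K * n := by positivity
    have h0 := Real.exp_pos 1
    calc _ ≤ Real.exp 1 * (4 * K * n) := by gcongr
      _ ≤ _ := by gcongr; linarith
  rw [Real.exp_le_exp]
  nlinarith

lemma bd_deg {n N l T r x : ℝ} (hn : 2 ≤ n) (hN : 2 * N = n * (n - 1)) (hl : 0 ≤ l)
    (hnl : n = Real.exp l) (hT : T ≤ n * l) (hr : x ≤ r) :
    n * Real.exp (Real.exp 1 * ((n - 1) * T / N) - r) ≤ Real.exp (7 * l - x) := by
  have hN0 : 0 < N := by nlinarith
  have he := Real.exp_one_lt_d9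
  have e1 : (n - 1) * T / N ≤ 2 * l := by
    rw [div_le_iff₀ hN0]
    have : (n - 1) * T ≤ (n - 1) * (n * l) := by
      apply mul_le_mul_of_nonneg_left hT; linarith
    have : (n - 1) * (n * l) = 2 * l * N := by
      rw [show N = n * (n - 1) / 2 by linarith]; ring
    linarith
  have e2 : Real.exp 1 * ((n - 1) * T / N) ≤ 3 * (2 * l) := by
    have h0 := Real.exp_pos 1
    calc _ ≤ Real.exp 1 * (2 * l) := by gcongr
      _ ≤ _ := by gcongr; linarith
  calc _ ≤ n * Real.exp (6 * l - x) := by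
        apply mul_le_mul_of_nonneg_left _ (by linarith)
        rw [Real.exp_le_exp]; linarith
    _ = _ := by
      nth_rewrite 1 [hnl]
      rw [← Real.exp_add]
      ring_nf

lemma bd_level {n N l L r R δ : ℝ} {d M : ℕ} (hn : 2 ≤ n) (hN : 2 * N = n * (n - 1)) (hl : 0 ≤ l)
    (hnl : n = Real.exp l) (hd : 1 ≤ d) (hR : 0 < R) (hL : δ / (8 * d) * (n * l) ≤ L)
    (hr : n ≤ 2 * R * r) (hM : 8 * d * R * (d + 1) ≤ δ * M) :
    d * (n ^ d * Real.exp (-(L * (M * r) / N))) ≤ d * Real.exp (-l) := by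
  have hN0 : 0 < N := by nlinarith
  have hd0 : (0 : ℝ) < d := by exact_mod_cast hd
  have hr0 : 0 ≤ r := by
    by_contra h
    push Not at h
    have : 2 * R * r < 0 := by apply mul_neg_of_pos_of_neg <;> [positivity; exact h]
    linarith
  have e1 : ((d : ℝ) + 1) * l ≤ L * (M * r) / N := by
    rw [le_div_iff₀ hN0]
    have a1 : δ / (8 * d) * (n * l) * (M * r) ≤ L * (M * r) := by gcongr
    refine le_trans ?_ a1
    have a2 : δ / (8 * d) * (n * l) * (M * r) = (δ * M) * (n * l * r) / (8 * d) := by ring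
    rw [a2, le_div_iff₀ (by positivity)]
    have a3 : 8 * d * R * (d + 1) * (n * l * r) ≤ (δ * M) * (n * l * r) := by gcongr
    refine le_trans ?_ a3
    have a4 : N * 2 ≤ n * (2 * R * r) := by
      calc N * 2 ≤ n * n := by nlinarith
        _ ≤ _ := by gcongr
    have a5 : N ≤ n * R * r := by nlinarith
    calc ((d : ℝ) + 1) * l * N * (8 * d) = 8 * d * (d + 1) * l * N := by ring
      _ ≤ 8 * d * (d + 1) * l * (n * R * r) := by gcongr
      _ = _ := by ring
  calc _ ≤ d * (n ^ d * Real.exp (-(((d : ℝ) + 1) * l))) := by gcongr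
    _ = _ := by
      rw [hnl, ← Real.exp_nat_mul, ← Real.exp_add]
      ring_nf
end asy
end BG

namespace BG
section asy7

/-- the parameters -/
def par (d M R : ℕ) (δ : ℝ) (n : ℕ) : Prm (Fin n) where
  d := d
  g := M + d
  r := n / R
  T0 := 8 * (d + 1) * R * n
  Ta := 4 * R ^ 2 * n
  Tb := ⌈(1 + δ / 2) * n * Real.log n / 2⌉₊
  L := ⌈δ / (8 * d) * (n * Real.log n)⌉₊
  C0 := Finset.univ.filter (fun i : Fin n => (i : ℕ) < 4 * (d + 1) * (n / R))

def bnd (d M R : ℕ) (δ : ℝ) (n : ℕ) : ℝ :=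
  Real.exp (-((n / (2 * R) : ℝ) / 2)) +
  (Real.exp (-((n : ℝ) / 2)) +
  ((d + 1) * (1 + 4 * Real.log n) ^ d * Real.exp (-(δ * Real.log n / 6)) +
  (((2 * (M + d) : ℕ) + 1) * (2 ^ ((2 * (M + d)) ^ 2) *
      (1 + 4 * Real.log n) ^ (2 * (M + d)) * (4 * Real.log n * Real.exp (-Real.log n))) +
  (Real.exp (1 - δ * n / 16) +
  (Real.exp (7 * Real.log n - n / (2 * R)) +
  d * Real.exp (-Real.log n))))))

lemma tz (k : ℕ) {c : ℝ} (hc : 0 < c) :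
    Tendsto (fun l : ℝ => (1 + 4 * l) ^ k * Real.exp (-(c * l))) atTop (nhds 0) := by
  have h1 := tendsto_rpow_mul_exp_neg_mul_atTop_nhds_zero (k : ℝ) (c / 4) (by positivity)
  have h2 : Tendsto (fun l : ℝ => 1 + 4 * l) atTop atTop :=
    tendsto_atTop_add_const_left _ _ (tendsto_id.const_mul_atTop (by norm_num))
  have h3 := (h1.comp h2).mul_const (Real.exp (c / 4))
  rw [zero_mul] at h3
  refine h3.congr ?_
  intro l
  simp only [Function.comp_apply, Real.rpow_natCast]
  rw [mul_assoc, ← Real.exp_add]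
  ring_nf

lemma tlog : Tendsto (fun n : ℕ => Real.log n) atTop atTop :=
  Real.tendsto_log_atTop.comp tendsto_natCast_atTop_atTop

lemma texp {c : ℝ} (hc : 0 < c) : Tendsto (fun l : ℝ => Real.exp (-(c * l))) atTop (nhds 0) := by
  have := tz 0 hc
  simpa using this

lemma bnd_tendsto (d M R : ℕ) (δ : ℝ) (hδ : 0 < δ) (hR : 1 ≤ R) :
    Tendsto (bnd d M R δ) atTop (nhds 0) := by
  have hR0 : (0 : ℝ) < R := by exact_mod_cast hR
  have tn : Tendsto (fun n : ℕ => (n : ℝ)) atTop atTop := tendsto_natCast_atTop_atTop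
  have t1 : Tendsto (fun n : ℕ => Real.exp (-((n / (2 * R) : ℝ) / 2))) atTop (nhds 0) := by
    refine ((texp (c := 1 / (4 * R)) (by positivity)).comp tn).congr ?_
    intro n; simp only [Function.comp_apply]; congr 2; field_simp; ring
  have t2 : Tendsto (fun n : ℕ => Real.exp (-((n : ℝ) / 2))) atTop (nhds 0) := by
    refine ((texp (c := 1 / 2) (by positivity)).comp tn).congr ?_
    intro n; simp only [Function.comp_apply]; congr 2; ring
  have t3 : Tendsto (fun n : ℕ => ((d : ℝ) + 1) * (1 + 4 * Real.log n) ^ d *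
      Real.exp (-(δ * Real.log n / 6))) atTop (nhds 0) := by
    have := (((tz d (c := δ / 6) (by positivity)).comp tlog).const_mul ((d : ℝ) + 1))
    rw [mul_zero] at this
    refine this.congr ?_
    intro n; simp only [Function.comp_apply]; rw [mul_assoc]; congr 4; ring
  have t4 : Tendsto (fun n : ℕ => (((2 * (M + d) : ℕ) : ℝ) + 1) * (2 ^ ((2 * (M + d)) ^ 2) *
      (1 + 4 * Real.log n) ^ (2 * (M + d)) * (4 * Real.log n * Real.exp (-Real.log n))))
      atTop (nhds 0) := by
    have a1 := ((tz (2 * (M + d) + 1) (c := 1) (by positivity)).comp tlog)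
    have a2 := ((tz (2 * (M + d)) (c := 1) (by positivity)).comp tlog)
    have := (a1.sub a2).const_mul ((((2 * (M + d) : ℕ) : ℝ) + 1) * 2 ^ ((2 * (M + d)) ^ 2))
    rw [sub_zero, mul_zero] at this
    refine this.congr ?_
    intro n; simp only [Function.comp_apply, one_mul]; rw [pow_succ]; ring
  have t5 : Tendsto (fun n : ℕ => Real.exp (1 - δ * n / 16)) atTop (nhds 0) := by
    have := (((texp (c := δ / 16) (by positivity)).comp tn).const_mul (Real.exp 1))
    rw [mul_zero] at this
    refine this.congr ?_
    intro n; simp only [Function.comp_apply]; rw [← Real.exp_add]; congr 1; ring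
  have t6 : Tendsto (fun n : ℕ => Real.exp (7 * Real.log n - n / (2 * R))) atTop (nhds 0) := by
    have h1 := (tendsto_rpow_mul_exp_neg_mul_atTop_nhds_zero 7 (1 / (2 * R)) (by positivity)).comp tn
    refine h1.congr' ?_
    filter_upwards [eventually_ge_atTop 1] with n hn
    have hn0 : (0 : ℝ) < n := by exact_mod_cast hn
    simp only [Function.comp_apply]
    rw [Real.rpow_def_of_pos hn0, ← Real.exp_add]
    congr 1; ring
  have t7 : Tendsto (fun n : ℕ => (d : ℝ) * Real.exp (-Real.log n)) atTop (nhds 0) := by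
    have := (((texp (c := 1) (by positivity)).comp tlog).const_mul (d : ℝ))
    rw [mul_zero] at this
    refine this.congr ?_
    intro n; simp only [Function.comp_apply, one_mul]
  have := t1.add (t2.add (t3.add (t4.add (t5.add (t6.add t7)))))
  simp only [add_zero] at this
  exact this

/-- conditions on the constants -/
structure Cst (d M R : ℕ) (δ : ℝ) : Prop where
  hd : 2 ≤ d
  hδ : 0 < δ
  hδ1 : δ ≤ 1
  hR : 24576 * ((d : ℝ) + 1) ^ 3 ≤ δ * R
  hM : 8 * (d : ℝ) * R * (d + 1) ≤ δ * M

lemma exists_cst (d : ℕ) (hd : 2 ≤ d) (δ : ℝ) (hδ : 0 < δ) (hδ1 : δ ≤ 1) :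
    ∃ M R, Cst d M R δ := by
  obtain ⟨R, hR⟩ := exists_nat_ge (24576 * ((d : ℝ) + 1) ^ 3 / δ)
  obtain ⟨M, hM⟩ := exists_nat_ge (8 * (d : ℝ) * R * (d + 1) / δ)
  refine ⟨M, R, hd, hδ, hδ1, ?_, ?_⟩
  · rw [div_le_iff₀ hδ] at hR; linarith
  · rw [div_le_iff₀ hδ] at hM; linarith

/-- conditions on `n` -/
structure Lrg (d R : ℕ) (δ : ℝ) (n : ℕ) : Prop where
  h1 : d + 2 ≤ n
  h2 : R ≤ n
  h3 : (8 * ((d : ℝ) + 1) * R + 4 * R ^ 2) * n + 1 + d ≤ δ * (n * Real.log n) / 8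
  h4 : d ≤ δ * (n * Real.log n) / 12
  h5 : 8 * (d : ℝ) ≤ δ * (n - 1)

lemma ev_lrg (d R : ℕ) (δ : ℝ) (hδ : 0 < δ) : ∀ᶠ n in atTop, Lrg d R δ n := by
  have tn : Tendsto (fun n : ℕ => (n : ℝ)) atTop atTop := tendsto_natCast_atTop_atTop
  have e1 := tlog.eventually_ge_atTop
    (8 * ((8 * ((d : ℝ) + 1) * R + 4 * R ^ 2) + 1 + d) / δ)
  have e2 := tlog.eventually_ge_atTop (12 * d / δ)
  have e3 := tn.eventually_ge_atTop (8 * d / δ + 1)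
  filter_upwards [eventually_ge_atTop (d + 2), eventually_ge_atTop R, e1, e2, e3] with n h1 h2 h3 h4 h5
  have hn1 : (1 : ℝ) ≤ n := by exact_mod_cast (by omega : 1 ≤ n)
  have hn0 : (0 : ℝ) ≤ n := by linarith
  have hd0 : (0 : ℝ) ≤ d := by positivity
  rw [div_le_iff₀ hδ] at h3 h4
  have h5' : 8 * (d : ℝ) / δ ≤ n - 1 := by linarith
  rw [div_le_iff₀ hδ] at h5'
  refine ⟨h1, h2, ?_, ?_, by linarith⟩
  · have := mul_le_mul_of_nonneg_left h3 hn0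
    nlinarith
  · have := mul_le_mul_of_nonneg_left h4 hn0
    nlinarith

section
variable {d M R n : ℕ} {δ : ℝ} (c : Cst d M R δ) (l : Lrg d R δ n)

lemma cst_R (c : Cst d M R δ) : 4 * (d + 1) ≤ R := by
  have h1 := c.hR
  have h2 : δ * R ≤ R := mul_le_of_le_one_left (by positivity) c.hδ1
  have h3 : ((4 * (d + 1) : ℕ) : ℝ) ≤ R := by
    push_cast
    have : (0 : ℝ) ≤ d := by positivity
    have h4 : (d : ℝ) + 1 ≤ (d + 1) ^ 3 := by
      have := pow_le_pow_right₀ (by linarith : (1 : ℝ) ≤ d + 1) (by norm_num : 1 ≤ 3)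
      simpa using this
    nlinarith
  exact_mod_cast h3

lemma cst_M (c : Cst d M R δ) : 1 ≤ M := by
  rcases Nat.eq_zero_or_pos M with h | h
  · have h1 := c.hM
    have h2 := cst_R c
    have h3 : (0 : ℝ) < R := by exact_mod_cast (by omega : 0 < R)
    have h4 : (0 : ℝ) < d := by exact_mod_cast (by have := c.hd; omega : 0 < d)
    rw [h, Nat.cast_zero, mul_zero] at h1
    have : 0 < 8 * (d : ℝ) * R * (d + 1) := by positivity
    linarith
  · exact h

lemma r_spec (c : Cst d M R δ) (l : Lrg d R δ n) : 1 ≤ n / R ∧ R * (n / R) ≤ n ∧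
    n ≤ 2 * (R * (n / R)) := by
  have h2 := cst_R c
  have h0 : 0 < R := by omega
  have h1 : 1 ≤ n / R := (Nat.one_le_div_iff h0).2 l.h2
  refine ⟨h1, Nat.mul_div_le n R, ?_⟩
  have := Nat.lt_mul_div_succ n h0
  rw [Nat.mul_succ] at this
  have h3 : R ≤ R * (n / R) := Nat.le_mul_of_pos_right _ h1
  omega

lemma card_C0 (c : Cst d M R δ) (l : Lrg d R δ n) :
    (par d M R δ n).C0.card = 4 * (d + 1) * (n / R) := by
  have h1 := cst_R c
  have h2 := (r_spec c l).2.1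
  have h3 : 4 * (d + 1) * (n / R) ≤ n := (Nat.mul_le_mul_right _ h1).trans h2
  rw [par]
  simp only
  rw [Fin.card_filter_val_lt]
  omega

lemma par_ok (c : Cst d M R δ) (l : Lrg d R δ n) : OK (par d M R δ n) M where
  hd := c.hd
  hr := (r_spec c l).1
  hm := by rw [card_C0 c l]; rfl
  hg := le_rfl

lemma logn0 (n : ℕ) : 0 ≤ Real.log n := Real.log_natCast_nonneg n

lemma par_Tb (c : Cst d M R δ) : (1 + δ / 2) * n * Real.log n / 2 ≤ (par d M R δ n).Tb ∧
    ((par d M R δ n).Tb : ℝ) ≤ (1 + δ / 2) * n * Real.log n / 2 + 1 := by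
  have := logn0 n
  have := c.hδ
  exact ⟨Nat.le_ceil _, (Nat.ceil_lt_add_one (by positivity)).le⟩

lemma par_L (c : Cst d M R δ) : δ / (8 * d) * (n * Real.log n) ≤ (par d M R δ n).L ∧
    ((par d M R δ n).L : ℝ) ≤ δ / (8 * d) * (n * Real.log n) + 1 := by
  have := logn0 n
  have := c.hδ
  exact ⟨Nat.le_ceil _, (Nat.ceil_lt_add_one (by positivity)).le⟩

lemma par_tt (c : Cst d M R δ) (l : Lrg d R δ n) :
    ((par d M R δ n).tt : ℝ) ≤ (1 + δ) * n * Real.log n / 2 := by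
  have h1 := (par_Tb (n := n) c).2
  have h2 := (par_L (n := n) c).2
  have h3 := l.h3
  have hd0 : (0 : ℝ) < d := by exact_mod_cast (by have := c.hd; omega : 0 < d)
  have e : ((par d M R δ n).tt : ℝ) = 8 * (d + 1) * R * n + 4 * R ^ 2 * n + (par d M R δ n).Tb +
      d * (par d M R δ n).L := by
    rw [Prm.tt, Prm.T1, Prm.Tm]
    push_cast
    rw [show (par d M R δ n).T0 = 8 * (d + 1) * R * n from rfl,
      show (par d M R δ n).Ta = 4 * R ^ 2 * n from rfl, show (par d M R δ n).d = d from rfl]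
    push_cast
    ring
  have h4 : (d : ℝ) * (par d M R δ n).L ≤ δ * (n * Real.log n) / 8 + d := by
    have := mul_le_mul_of_nonneg_left h2 hd0.le
    have e2 : (d : ℝ) * (δ / (8 * d) * (n * Real.log n) + 1) = δ * (n * Real.log n) / 8 + d := by
      field_simp
    linarith
  rw [e]
  nlinarith

lemma budget (c : Cst d M R δ) (l : Lrg d R δ n) {x b : ℕ}
    (hx : 2 * M * x ≤ M * (2 * ⌊δ * n / 8⌋₊ + d * n +
      2 * (d * ((d + 1) * (2 * (n / R))))) + 2 * (d * (d * n)))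
    (hb : (1 + δ) * d * n / 2 ≤ (b : ℝ)) : x ≤ b := by
  have hM0 : (0 : ℝ) < M := by exact_mod_cast cst_M c
  have hδ := c.hδ
  have hd2 : (2 : ℝ) ≤ d := by exact_mod_cast c.hd
  have h1 : (⌊δ * n / 8⌋₊ : ℝ) ≤ δ * n / 8 := Nat.floor_le (by positivity)
  have h2 : (R : ℝ) * ((n / R : ℕ) : ℝ) ≤ n := by exact_mod_cast (r_spec c l).2.1
  set r : ℝ := ((n / R : ℕ) : ℝ) with hr
  have hr0 : 0 ≤ r := by positivity
  have hn0 : (0 : ℝ) ≤ n := by positivity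
  have hR := c.hR
  have hM := c.hM
  have hR1 : (1 : ℝ) ≤ R := by exact_mod_cast (by have := cst_R c; omega : 1 ≤ R)
  have hx' : 2 * (M : ℝ) * x ≤ M * (2 * (⌊δ * n / 8⌋₊ : ℝ) + d * n +
      2 * (d * ((d + 1) * (2 * r)))) + 2 * (d * (d * n)) := by
    rw [hr]; exact_mod_cast hx
  have k1 : 4 * (d : ℝ) * (d + 1) * r ≤ δ * n / 4 := by
    have a1 : 16 * (d : ℝ) * (d + 1) ≤ δ * R := by
      refine le_trans ?_ hR
      have : (d : ℝ) * (d + 1) ≤ (d + 1) ^ 3 := by nlinarith [mul_nonneg (by linarith : (0:ℝ) ≤ d) (by linarith : (0:ℝ) ≤ d)]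
      nlinarith
    have a2 := mul_le_mul_of_nonneg_right a1 hr0
    have a3 := mul_le_mul_of_nonneg_left h2 hδ.le
    nlinarith
  have k2 : 2 * ((d : ℝ) * (d * n)) ≤ M * (δ * n / 4) := by
    have a1 : 8 * (d : ℝ) * d ≤ δ * M := by
      refine le_trans ?_ hM
      have : (d : ℝ) ≤ R * (d + 1) := by nlinarith
      have := mul_le_mul_of_nonneg_left this (by positivity : 0 ≤ 8 * (d : ℝ))
      linarith
    have a2 := mul_le_mul_of_nonneg_right a1 hn0
    nlinarith
  have k3 : 2 * (M : ℝ) * x ≤ M * (2 * b) := by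
    refine hx'.trans ?_
    have : M * (2 * (⌊δ * n / 8⌋₊ : ℝ) + d * n + 2 * (d * ((d + 1) * (2 * r)))) +
        2 * (d * (d * n)) ≤ M * (2 * (δ * n / 8) + d * n + δ * n / 4) + M * (δ * n / 4) := by
      refine add_le_add (mul_le_mul_of_nonneg_left ?_ hM0.le) k2
      linarith
    refine this.trans ?_
    rw [← mul_add]
    apply mul_le_mul_of_nonneg_left _ hM0.le
    have : δ * n * 2 ≤ δ * n * d := by gcongr
    have : 0 ≤ δ * n := by positivity
    nlinarith
  have k4 : (x : ℝ) ≤ b := by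
    have : (M : ℝ) * x ≤ M * b := by linarith
    exact le_of_mul_le_mul_left this hM0
  exact_mod_cast k4
end
end asy7
end BG

namespace BG
section asy8
variable {d M R n : ℕ} {δ : ℝ}

set_option maxHeartbeats 1000000 in
lemma prob_bnd (c : Cst d M R δ) (l : Lrg d R δ n) (x0 : Sym2 (Fin n))
    (htt : (par d M R δ n).tt ≤ numEdges n) :
    Pr (fun σ : EdgeOrdering n => ¬ Ev (par d M R δ n) x0 M ⌊δ * n / 8⌋₊ σ) ≤ bnd d M R δ n := by
  have hδ := c.hδ
  have hn2 : 2 ≤ n := by have := l.h1; omega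
  have hn : (2 : ℝ) ≤ n := by exact_mod_cast hn2
  have hn0 : (0 : ℝ) < n := by linarith
  have hNn := two_numEdges n
  have hN : 2 * (numEdges n : ℝ) = n * ((n : ℝ) - 1) := by
    have : ((2 * numEdges n : ℕ) : ℝ) = ((n * (n - 1) : ℕ) : ℝ) := by rw [hNn]
    push_cast [Nat.cast_sub (by omega : 1 ≤ n)] at this
    exact this
  have hN0 : (0 : ℝ) < numEdges n := by nlinarith
  set ll := Real.log n with hll
  have hl0 : 0 ≤ ll := logn0 n
  have hnl : (n : ℝ) = Real.exp ll := (Real.exp_log hn0).symm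
  obtain ⟨hr1, hr2, hr3⟩ := r_spec c l
  have hR4 := cst_R c
  have hR0 : (0 : ℝ) < R := by exact_mod_cast (by omega : 0 < R)
  have hd2 : (2 : ℝ) ≤ d := by exact_mod_cast c.hd
  have hr2' : (R : ℝ) * ((n / R : ℕ) : ℝ) ≤ n := by exact_mod_cast hr2
  have hr3' : (n : ℝ) ≤ 2 * R * ((n / R : ℕ) : ℝ) := by
    have : (n : ℝ) ≤ 2 * (R * ((n / R : ℕ) : ℝ)) := by exact_mod_cast hr3
    linarith
  have htb := par_Tb (n := n) c
  have hL := par_L (n := n) c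
  have htt' := par_tt c l
  have hT : ((par d M R δ n).tt : ℝ) ≤ n * ll := by
    refine htt'.trans ?_
    have : δ * (n * ll) ≤ 1 * (n * ll) := by gcongr; exact c.hδ1
    linarith
  have e1 : (par d M R δ n).Tb ≤ (par d M R δ n).T1 := by rw [Prm.T1]; omega
  have e3 : (par d M R δ n).T1 ≤ (par d M R δ n).tt := by rw [Prm.tt]; omega
  have e1' : ((par d M R δ n).Tb : ℝ) ≤ (par d M R δ n).T1 := by exact_mod_cast e1
  have e3' : ((par d M R δ n).T1 : ℝ) ≤ (par d M R δ n).tt := by exact_mod_cast e3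
  have hdT : d ≤ (par d M R δ n).Tb := by
    have h4 := l.h4
    have h5 : δ * (n * ll) ≤ 1 * (n * ll) := by gcongr; exact c.hδ1
    have h6 : 0 ≤ δ * (n * ll) := by positivity
    have : (d : ℝ) ≤ (par d M R δ n).Tb := by
      refine le_trans ?_ htb.1
      linarith
    exact_mod_cast this
  have hdN : d < numEdges n := by
    have h1 := l.h1
    have : 2 * (d + 1) ≤ n * (n - 1) := Nat.mul_le_mul hn2 (by omega)
    omega
  have hrx : (n : ℝ) / (2 * R) ≤ ((n / R : ℕ) : ℝ) := by
    rw [div_le_iff₀ (by positivity)]; linarith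
  refine (prob_ev x0 (par_ok c l) (cst_M c) htt hdT hdN (by have := l.h1; show d + 1 ≤ n; omega)).trans ?_
  rw [bnd, card_C0 c l]
  have E0 : ((par d M R δ n).T0 : ℝ) = 8 * (d + 1) * R * n := by
    rw [show (par d M R δ n).T0 = 8 * (d + 1) * R * n from rfl]; push_cast; ring
  have Ea : ((par d M R δ n).Ta : ℝ) = 4 * R ^ 2 * n := by
    rw [show (par d M R δ n).Ta = 4 * R ^ 2 * n from rfl]; push_cast; ring
  have Er : (((par d M R δ n).r : ℕ) : ℝ) = ((n / R : ℕ) : ℝ) := rfl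
  have hr0 : (0 : ℝ) ≤ ((n / R : ℕ) : ℝ) := by positivity
  have hNle : 2 * (numEdges n : ℝ) ≤ n * n := by nlinarith
  refine add_le_add ?_ (add_le_add ?_ (add_le_add ?_ (add_le_add ?_ (add_le_add ?_
    (add_le_add ?_ ?_)))))
  · rw [E0, Er]
    refine bd_pairs hN0 ?_ ?_
    · push_cast
      have a1 : (n : ℝ) * n * ((n / R : ℕ) : ℝ) ≤ n * (2 * R * ((n / R : ℕ) : ℝ)) * ((n / R : ℕ) : ℝ) := by
        gcongr
      have a2 : 2 * (numEdges n : ℝ) * ((n / R : ℕ) : ℝ) ≤ n * n * ((n / R : ℕ) : ℝ) := by gcongr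
      calc _ = 4 * ((d : ℝ) + 1) * (2 * (numEdges n : ℝ) * ((n / R : ℕ) : ℝ)) := by ring
        _ ≤ 4 * ((d : ℝ) + 1) * (n * (2 * R * ((n / R : ℕ) : ℝ)) * ((n / R : ℕ) : ℝ)) := by
          apply mul_le_mul_of_nonneg_left (a2.trans a1) (by positivity)
        _ = _ := by ring
    · push_cast
      refine hrx.trans ?_
      nlinarith
  · rw [Ea, Er]
    refine bd_pairs hN0 ?_ le_rfl
    have a1 : (n : ℝ) * n ≤ (2 * R * ((n / R : ℕ) : ℝ)) * (2 * R * ((n / R : ℕ) : ℝ)) := by gcongr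
    have a2 := mul_le_mul_of_nonneg_left (hNle.trans a1) hn0.le
    nlinarith
  · exact bd_low hn hN hl0 hnl hδ c.hδ1 htb.1 (by linarith) l.h4 l.h5
  · have hh := bd_sparse (T := ((par d M R δ n).T1 : ℝ)) (g := 2 * (M + d)) hn hN hl0 hnl
      (Nat.cast_nonneg _) (e3'.trans hT)
    rw [show (par d M R δ n).g = M + d from rfl]
    exact hh
  · rw [E0]
    refine bd_inside (K := 128 * ((d : ℝ) + 1) ^ 3 / R) hn (by positivity) hN ?_ ?_ ?_
    · push_cast
      have a1 : ((R : ℝ) * ((n / R : ℕ) : ℝ)) ^ 2 ≤ n ^ 2 := by gcongr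
      have a2 : (4 * ((d : ℝ) + 1) * ((n / R : ℕ) : ℝ)) ^ 2 * (8 * ((d : ℝ) + 1) * R * n) =
        128 * ((d : ℝ) + 1) ^ 3 / R * n * ((R : ℝ) * ((n / R : ℕ) : ℝ)) ^ 2 := by
        field_simp; ring
      rw [a2]
      gcongr
    · have := c.hR
      rw [← mul_div_assoc, div_le_iff₀ hR0]
      linarith
    · have := Nat.lt_floor_add_one (δ * n / 8)
      linarith
  · have := bd_deg hn hN hl0 hnl hT hrx
    rw [Nat.cast_sub (by omega : 1 ≤ n), Nat.cast_one]
    exact this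
  · exact bd_level (d := d) hn hN hl0 hnl (by have := c.hd; omega) hR0 hL.1 hr3' c.hM
end asy8
end BG

namespace BG
section fin1
variable {n : ℕ}

lemma range_filter_lt (N t : ℕ) :
    (List.range N).filter (fun i => decide (i < t)) = List.range (min N t) := by
  induction N with
  | zero => simp
  | succ N ih =>
    rw [List.range_succ, List.filter_append, ih]
    by_cases h : N < t
    · rw [min_eq_left (by omega), min_eq_left (by omega), List.range_succ]
      simp [h]
    · rw [min_eq_right (by omega), min_eq_right (by omega)]
      simp [h]

lemma history_eq (x0 : Sym2 (Fin n)) (σ : EdgeOrdering n) (t : ℕ) :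
    history σ t = (List.range (min (numEdges n) t)).map (sq x0 σ) := by
  rw [← range_filter_lt, ← List.map_coe_finRange_eq_range, List.filter_map, List.map_map, history]
  congr 1
  · funext r
    simp only [Function.comp_apply]
    rw [sq_lt x0 σ r.2]

/-- the strategy -/
def stratP (p : Prm (Fin n)) (x0 : Sym2 (Fin n)) (b : ℕ) : Strategy n := fun l =>
  decide (dec p (fun i => l.getD i x0) (l.length - 1) ∧
    (G p (fun i => l.getD i x0) (l.length - 1)).card < b)

lemma stratP_iff (p : Prm (Fin n)) (x0 : Sym2 (Fin n)) (b : ℕ) (σ : EdgeOrdering n) {s : ℕ}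
    (hs : s < numEdges n) : stratP p x0 b (history σ (s + 1)) = true ↔
      dec p (sq x0 σ) s ∧ (G p (sq x0 σ) s).card < b := by
  rw [stratP, decide_eq_true_iff, history_eq x0, min_eq_right (by omega)]
  have hlen : ((List.range (s + 1)).map (sq x0 σ)).length - 1 = s := by simp
  have hi : ∀ i ≤ s, ((List.range (s + 1)).map (sq x0 σ)).getD i x0 = sq x0 σ i := by
    intro i hi
    rw [List.getD_eq_getElem _ _ (by simp; omega)]
    simp
  rw [hlen, dec_congr p hi, G_congr p (fun i h => hi i h.le)]

lemma accepted_le (p : Prm (Fin n)) (x0 : Sym2 (Fin n)) (b : ℕ) (σ : EdgeOrdering n) (t : ℕ) :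
    numAccepted (stratP p x0 b) σ t ≤ b := by
  have key : ∀ s : ℕ, ∃ F : Finset (Sym2 (Fin n)), F.card ≤ b ∧ ∀ i < s, i < numEdges n →
      stratP p x0 b (history σ (i + 1)) = true → sq x0 σ i ∈ F := by
    intro s
    induction s with
    | zero => exact ⟨∅, by simp, by intro i hi; omega⟩
    | succ s ih =>
      by_cases h : s < numEdges n ∧ stratP p x0 b (history σ (s + 1)) = true
      · have h1 := (stratP_iff p x0 b σ h.1).1 h.2
        refine ⟨G p (sq x0 σ) (s + 1), ?_, ?_⟩
        · rw [G_succ, if_pos h1.1]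
          have := Finset.card_insert_le (sq x0 σ s) (G p (sq x0 σ) s)
          omega
        · intro i hi hiN hst
          rw [mem_G]
          exact ⟨i, hi, rfl, ((stratP_iff p x0 b σ hiN).1 hst).1⟩
      · obtain ⟨F, hF, hF2⟩ := ih
        refine ⟨F, hF, ?_⟩
        intro i hi hiN hst
        rcases Nat.lt_succ_iff_lt_or_eq.1 hi with h1 | h1
        · exact hF2 i h1 hiN hst
        · subst h1
          exact absurd ⟨hiN, hst⟩ h
  obtain ⟨F, hF, hF2⟩ := key t
  rw [numAccepted]
  refine le_trans (Finset.card_le_card ?_) hF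
  intro x hx
  rw [Finset.mem_filter, builderGraph, SimpleGraph.edgeSet_fromEdgeSet] at hx
  obtain ⟨r, hrt, hrx, hst⟩ := hx.2.1
  have := hF2 r hrt r.2 hst
  rw [sq_lt x0 σ r.2] at this
  rw [← hrx]
  exact this

lemma kconn_of_good {p : Prm (Fin n)} {x0 : Sym2 (Fin n)} {M β b t : ℕ} {σ : EdgeOrdering n}
    (ok : OK p M) (gd : Good p (sq x0 σ) M β) (hn : p.d + 1 ≤ n) (htN : p.tt ≤ numEdges n)
    (htt : p.tt ≤ t) (hb : (G p (sq x0 σ) p.tt).card ≤ b) :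
    IsKConnected p.d (builderGraph (stratP p x0 b) σ t) := by
  refine isKConnected_of_cut (by have := ok.hd; omega) (conclusion ok gd).1 (by simpa using hn) _ ?_
  intro u v huv hE
  rw [mem_G] at hE
  obtain ⟨i, hi, hie, hdec⟩ := hE
  rw [builderGraph, SimpleGraph.fromEdgeSet_adj]
  refine ⟨⟨⟨i, by omega⟩, by simp only; omega, ?_, ?_⟩, huv⟩
  · rw [← sq_lt x0 σ (by omega), hie]
  · rw [stratP_iff p x0 b σ (by omega)]
    refine ⟨hdec, ?_⟩
    show (G p (sq x0 σ) i).card < b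
    have h1 : G p (sq x0 σ) (i + 1) ⊆ G p (sq x0 σ) p.tt := G_mono p _ hi
    have h2 := Finset.card_le_card h1
    rw [G_succ, if_pos hdec, Finset.card_insert_of_notMem] at h2
    · omega
    · rw [mem_G]
      rintro ⟨j, hj, hje, -⟩
      have := gd.inj j (by omega) i hi hje
      omega
end fin1

theorem main (d : ℕ) (hd : 2 ≤ d) (ε : ℝ) (hε : 0 < ε) (t b : ℕ → ℕ)
    (ht : ∀ n : ℕ, (1 + ε) * n * Real.log n / 2 ≤ (t n : ℝ))
    (ht' : ∀ n, t n ≤ n * (n - 1) / 2)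
    (hb : ∀ n : ℕ, (1 + ε) * d * n / 2 ≤ (b n : ℝ)) :
    ∃ strat : (n : ℕ) → Strategy n,
      (∀ n (σ : EdgeOrdering n), numAccepted (strat n) σ (t n) ≤ b n) ∧
      Tendsto (fun n =>
          Pr (fun σ : EdgeOrdering n =>
            IsKConnected d (builderGraph (strat n) σ (t n))))
        atTop (nhds 1) := by
  obtain ⟨M, R, c⟩ := exists_cst d hd (min ε 1) (lt_min hε one_pos) (min_le_right _ _)
  set δ := min ε 1 with hδ
  have hδε : δ ≤ ε := min_le_left _ _
  have hx : ∀ n : ℕ, ∃ S : Strategy n, (∀ σ : EdgeOrdering n, numAccepted S σ (t n) ≤ b n) ∧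
      (Lrg d R δ n → 1 - bnd d M R δ n ≤ Pr (fun σ : EdgeOrdering n =>
            IsKConnected d (builderGraph S σ (t n)))) := by
    intro n
    by_cases hn : 0 < n
    · set x0 : Sym2 (Fin n) := s(⟨0, hn⟩, ⟨0, hn⟩) with hx0
      refine ⟨stratP (par d M R δ n) x0 (b n), fun σ => accepted_le _ _ _ _ _, ?_⟩
      intro l
      have htt : (par d M R δ n).tt ≤ t n := by
        have h1 := par_tt c l
        have h2 := ht n
        have h3 : (1 + δ) * n * Real.log n / 2 ≤ (1 + ε) * n * Real.log n / 2 := by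
          have := logn0 n
          gcongr
        exact_mod_cast h1.trans (h3.trans h2)
      have htN : (par d M R δ n).tt ≤ numEdges n := by
        have h1 := ht' n
        have h2 := two_numEdges n
        omega
      have hbn : (1 + δ) * d * n / 2 ≤ (b n : ℝ) := by
        refine le_trans ?_ (hb n)
        gcongr
      have h1 := prob_bnd c l x0 htN
      have h2 := Pr_compl (fun σ : EdgeOrdering n => Ev (par d M R δ n) x0 M ⌊δ * n / 8⌋₊ σ)
      have h3 : 1 - bnd d M R δ n ≤
        Pr (fun σ : EdgeOrdering n => Ev (par d M R δ n) x0 M ⌊δ * n / 8⌋₊ σ) := by linarith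
      refine h3.trans (Pr_mono ?_)
      intro σ hσ
      have gd := good_of_ev (par_ok c l) htN hσ
      have h4 := (conclusion (par_ok c l) gd).2
      rw [Fintype.card_fin] at h4
      exact kconn_of_good (par_ok c l) gd (by have := l.h1; show d + 1 ≤ n; omega) htN htt
        (budget c l h4 hbn)
    · refine ⟨fun _ => false, ?_, ?_⟩
      · intro σ
        simp [numAccepted, builderGraph]
      · intro l
        have := l.h1
        omega
  choose S hS1 hS2 using hx
  refine ⟨S, hS1, ?_⟩
  have hlow : Tendsto (fun n => 1 - bnd d M R δ n) atTop (nhds 1) := by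
    have := (bnd_tendsto d M R δ c.hδ (by have := cst_R c; omega)).const_sub 1
    simpa using this
  refine tendsto_of_tendsto_of_tendsto_of_le_of_le' hlow tendsto_const_nhds ?_ ?_
  · filter_upwards [ev_lrg d R δ c.hδ] with n hn
    exact hS2 n hn
  · exact Eventually.of_forall (fun n => Pr_le_one _)
end BG

/-- Let `d ≥ 2` and `ε > 0` be fixed. For every choice of integers
`t = t(n)` and `b = b(n)` with `(1+ε)·n·log n/2 ≤ t ≤ n(n-1)/2` and `b ≥ (1+ε)·d·n/2`,
Builder has a `(t,b)`-strategy such that `G_t` is a.a.s. `d`-connected. -/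
theorem statement1 (d : ℕ) (hd : 2 ≤ d) (ε : ℝ) (hε : 0 < ε) (t b : ℕ → ℕ)
    (ht : ∀ n : ℕ, (1 + ε) * n * Real.log n / 2 ≤ (t n : ℝ))
    (ht' : ∀ n, t n ≤ n * (n - 1) / 2)
    (hb : ∀ n : ℕ, (1 + ε) * d * n / 2 ≤ (b n : ℝ)) :
    ∃ strat : (n : ℕ) → Strategy n,
      (∀ n (σ : EdgeOrdering n), numAccepted (strat n) σ (t n) ≤ b n) ∧
      Tendsto (fun n =>
          Pr (fun σ : EdgeOrdering n =>
            IsKConnected d (builderGraph (strat n) σ (t n))))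
        atTop (nhds 1) := by
  exact BG.main d hd ε hε t b ht ht' hb

end
end

section
/- Fix an integer d ≥ 1. Take d mutually independent uniformly random orderings of the edges of K_n and, for each of them, form the greedy matching obtained by scanning the first ⌊n·log n/ω⌋ edges in order and accepting an edge if and only if it shares no endpoint with a previously accepted edge of that scan. Then asymptotically almost surely the set of vertices of K_n that are left unmatched by at least one of the d greedy matchings has size at most ω³·n/(log n). -/
open Filter SimpleGraph
open scoped Classical

noncomputable section

/-- The greedy matching obtained by scanning the list `l` of edges in order and accepting
an edge if and only if it shares no endpoint with a previously accepted edge. -/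
def greedyMatching {α : Type*} (l : List (Sym2 α)) : List (Sym2 α) :=
  l.foldl (fun acc e => if ∀ f ∈ acc, ∀ x ∈ e, x ∉ f then e :: acc else acc) []

/-- vertices unmatched by the greedy matching -/
def unm {n : ℕ} (l : List (Sym2 (Fin n))) : Finset (Fin n) :=
  Finset.univ.filter (fun v : Fin n => ∀ e ∈ greedyMatching l, v ∉ e)

theorem mem_unm {n : ℕ} (l : List (Sym2 (Fin n))) (v : Fin n) :
    v ∈ unm l ↔ ∀ e ∈ greedyMatching l, v ∉ e := by simp [unm]

theorem greedy_snoc {n : ℕ} (l : List (Sym2 (Fin n))) (e : Sym2 (Fin n)) :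
    greedyMatching (l ++ [e]) =
      if ∀ x ∈ e, x ∈ unm l then e :: greedyMatching l else greedyMatching l := by
  have h : (∀ x ∈ e, x ∈ unm l) ↔ ∀ f ∈ greedyMatching l, ∀ x ∈ e, x ∉ f := by
    simp only [mem_unm]
    exact ⟨fun h f hf x hx => h x hx f hf, fun h x hx f hf => h f hf x hx⟩
  rw [if_congr h rfl rfl]
  unfold greedyMatching
  rw [List.foldl_append]
  simp only [List.foldl_cons, List.foldl_nil]
  congr

theorem unm_snoc_pos {n : ℕ} (l : List (Sym2 (Fin n))) (e : Sym2 (Fin n))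
    (h : ∀ x ∈ e, x ∈ unm l) : unm (l ++ [e]) = (unm l).filter (fun x => x ∉ e) := by
  ext v
  rw [mem_unm, greedy_snoc, if_pos h, Finset.mem_filter, mem_unm]
  simp only [List.mem_cons, forall_eq_or_imp]
  tauto

theorem unm_snoc_neg {n : ℕ} (l : List (Sym2 (Fin n))) (e : Sym2 (Fin n))
    (h : ¬ ∀ x ∈ e, x ∈ unm l) : unm (l ++ [e]) = unm l := by
  ext v
  rw [mem_unm, greedy_snoc, if_neg h, mem_unm]

theorem unm_snoc_card {n : ℕ} (l : List (Sym2 (Fin n))) (e : Sym2 (Fin n)) (he : ¬ e.IsDiag) :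
    ((unm (l ++ [e])).card : ℝ) = (unm l).card - 2 * (if ∀ x ∈ e, x ∈ unm l then 1 else 0) := by
  by_cases h : ∀ x ∈ e, x ∈ unm l
  · rw [unm_snoc_pos l e h, if_pos h]
    have h1 := Finset.card_filter_add_card_filter_not (s := unm l) (fun x => x ∈ e)
    have h2 : ((unm l).filter (fun x => x ∈ e)).card = 2 := by
      induction e using Sym2.ind with
      | _ a b =>
        have hab : a ≠ b := by simpa using he
        have : (unm l).filter (fun x => x ∈ s(a, b)) = {a, b} := by
          ext x
          have ha := h a (by simp)
          have hb := h b (by simp)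
          simp only [Finset.mem_filter, Sym2.mem_iff, Finset.mem_insert, Finset.mem_singleton]
          constructor
          · exact fun h => h.2
          · rintro (rfl | rfl) <;> simp [*]
        rw [this, Finset.card_pair hab]
    have h3 : (((unm l).filter (fun x => x ∈ e)).card : ℝ) + ((unm l).filter (fun x => x ∉ e)).card
        = (unm l).card := by exact_mod_cast h1
    rw [h2] at h3
    push_cast at h3
    linarith
  · rw [unm_snoc_neg l e h, if_neg h]; simp

theorem unm_indep {n : ℕ} (l : List (Sym2 (Fin n))) : ∀ e ∈ l, ¬ ∀ x ∈ e, x ∈ unm l := by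
  induction l using List.reverseRecOn with
  | nil => simp
  | append_singleton l f ih =>
    intro e he hc
    have hsub : unm (l ++ [f]) ⊆ unm l := by
      by_cases h : ∀ x ∈ f, x ∈ unm l
      · rw [unm_snoc_pos l f h]; exact Finset.filter_subset _ _
      · rw [unm_snoc_neg l f h]
    rcases List.mem_append.1 he with he | he
    · exact ih e he fun x hx => hsub (hc x hx)
    · obtain rfl : e = f := by simpa using he
      have h : ∀ x ∈ e, x ∈ unm l := fun x hx => hsub (hc x hx)
      rw [unm_snoc_pos l e h] at hc
      induction e using Sym2.ind with
      | _ a b =>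
        have := hc a (by simp)
        simp at this

theorem history_succ {n : ℕ} (σ : EdgeOrdering n) (t : Fin (numEdges n)) :
    history σ (t + 1) = history σ t ++ [(σ.symm t : Sym2 (Fin n))] := by
  have key : ∀ (N : ℕ) (t : Fin N),
      (List.finRange N).filter (fun r : Fin N => decide ((r : ℕ) < t + 1)) =
      (List.finRange N).filter (fun r : Fin N => decide ((r : ℕ) < t)) ++ [t] := by
    intro N
    induction N with
    | zero => intro t; exact t.elim0
    | succ N ih =>
      intro t
      rw [List.finRange_succ]
      refine Fin.cases ?_ (fun s => ?_) t
      · simp [List.filter_map, Function.comp_def]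
      · have := ih s
        simp only [List.filter_cons, List.filter_map, Function.comp_def, Fin.val_succ, Fin.val_zero]
        simp only [Nat.add_lt_add_iff_right, this]
        simp
  unfold history
  rw [key, List.map_append]
  rfl

theorem mem_history {n : ℕ} (σ : EdgeOrdering n) (t : ℕ) (r : Fin (numEdges n)) (h : (r : ℕ) < t) :
    (σ.symm r : Sym2 (Fin n)) ∈ history σ t := by
  unfold history
  rw [List.mem_map]
  exact ⟨r, by simp [h], rfl⟩

theorem history_swap {n : ℕ} (σ : EdgeOrdering n) (t r : Fin (numEdges n)) (h : (t : ℕ) ≤ r) :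
    history (σ.trans (Equiv.swap t r)) t = history σ t := by
  unfold history
  apply List.map_congr_left
  intro i hi
  have hi : (i : ℕ) < t := by simpa using hi
  have h1 : i ≠ t := by rintro rfl; omega
  have h2 : i ≠ r := by rintro rfl; omega
  simp [Equiv.symm_trans_apply, Equiv.swap_apply_of_ne_of_ne h1 h2]

/-- the edge in position `r` is inside the unmatched set at time `t` -/
def inside {n : ℕ} (σ : EdgeOrdering n) (t : ℕ) (r : Fin (numEdges n)) : Prop :=
  ∀ x ∈ (σ.symm r : Sym2 (Fin n)), x ∈ unm (history σ t)

theorem inside_count {n : ℕ} (t r : Fin (numEdges n)) :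
    ∑ σ : EdgeOrdering n, (if inside σ t r then (1 : ℝ) else 0) ≤
      ∑ σ : EdgeOrdering n, (if inside σ t t then (1 : ℝ) else 0) := by
  by_cases h : (r : ℕ) < t
  · apply Finset.sum_le_sum
    intro σ _
    have hni : ¬ inside σ t r := unm_indep _ _ (mem_history σ t r h)
    rw [if_neg hni]
    split_ifs <;> norm_num
  · push Not at h
    apply le_of_eq
    refine Fintype.sum_equiv (Equiv.equivCongr (Equiv.refl _) (Equiv.swap t r)) _ _ ?_
    intro σ
    have e1 : (Equiv.equivCongr (Equiv.refl _) (Equiv.swap t r)) σ = σ.trans (Equiv.swap t r) := rfl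
    rw [e1]
    refine if_congr ?_ rfl rfl
    unfold inside
    rw [history_swap σ t r h]
    simp [Equiv.symm_trans_apply]

theorem choose_le {n : ℕ} (σ : EdgeOrdering n) (t : ℕ) :
    ((unm (history σ t)).card.choose 2 : ℝ) ≤ ∑ r, (if inside σ t r then (1 : ℝ) else 0) := by
  rw [Finset.sum_boole, ← Sym2.card_image_offDiag]
  norm_cast
  have : ((unm (history σ t)).offDiag.image (Sym2.mk.uncurry)) ⊆
      (Finset.univ.filter (fun r => inside σ t r)).image (fun r => (σ.symm r : Sym2 (Fin n))) := by
    intro e he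
    simp only [Finset.mem_image, Finset.mem_offDiag, Prod.exists] at he
    obtain ⟨a, b, ⟨ha, hb, hab⟩, rfl⟩ := he
    have hE : s(a, b) ∈ (completeGraph (Fin n)).edgeSet := by simpa using hab
    rw [Finset.mem_image]
    refine ⟨σ ⟨_, hE⟩, ?_, by simp [Function.uncurry]⟩
    rw [Finset.mem_filter]
    refine ⟨Finset.mem_univ _, ?_⟩
    intro x hx
    rw [Equiv.symm_apply_apply] at hx
    rcases Sym2.mem_iff.1 hx with rfl | rfl <;> assumption
  exact (Finset.card_le_card this).trans Finset.card_image_le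

theorem numEdges_eq (n : ℕ) : numEdges n = n.choose 2 := by
  unfold numEdges
  have := SimpleGraph.card_edgeFinset_top_eq_card_choose_two (V := Fin n)
  rw [Fintype.card_fin] at this
  rw [← this, SimpleGraph.edgeFinset, Set.toFinset_card]

/-- expected number of unmatched vertices -/
def eU (n t : ℕ) : ℝ :=
  (∑ σ : EdgeOrdering n, ((unm (history σ t)).card : ℝ)) / (Fintype.card (EdgeOrdering n) : ℝ)

theorem card_pos_EO (n : ℕ) : (0 : ℝ) < (Fintype.card (EdgeOrdering n) : ℝ) := by
  have : Nonempty (EdgeOrdering n) := ⟨Fintype.equivFin _⟩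
  exact_mod_cast Fintype.card_pos

theorem eU_step (n : ℕ) (t : Fin (numEdges n)) :
    eU n (t + 1) ≤ eU n t - 2 / (n : ℝ) ^ 2 * (eU n t * (eU n t - 1)) := by
  set M : ℝ := (Fintype.card (EdgeOrdering n) : ℝ) with hM
  have hMp : 0 < M := card_pos_EO n
  set F : ℕ → ℝ := fun t => ∑ σ : EdgeOrdering n, ((unm (history σ t)).card : ℝ) with hF
  set Q : ℝ := ∑ σ : EdgeOrdering n, (if inside σ t t then (1 : ℝ) else 0) with hQ
  have heU : ∀ s, eU n s = F s / M := fun s => rfl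
  have h1 : F (t + 1) = F t - 2 * Q := by
    simp only [hF, hQ, Finset.mul_sum]
    rw [← Finset.sum_sub_distrib]
    refine Finset.sum_congr rfl fun σ _ => ?_
    rw [history_succ, unm_snoc_card]
    · congr 2
      exact if_congr Iff.rfl rfl rfl
    · exact SimpleGraph.not_isDiag_of_mem_edgeSet _ (σ.symm t).2
  have h2 : ∑ σ : EdgeOrdering n, ((unm (history σ t)).card.choose 2 : ℝ) ≤ numEdges n * Q := by
    calc _ ≤ ∑ σ : EdgeOrdering n, ∑ r, (if inside σ t r then (1 : ℝ) else 0) :=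
          Finset.sum_le_sum fun σ _ => choose_le σ t
      _ = ∑ r, ∑ σ : EdgeOrdering n, (if inside σ t r then (1 : ℝ) else 0) := Finset.sum_comm
      _ ≤ ∑ r : Fin (numEdges n), Q := Finset.sum_le_sum fun r _ => inside_count t r
      _ = numEdges n * Q := by simp
  have h3 : ∑ σ : EdgeOrdering n, ((unm (history σ t)).card.choose 2 : ℝ) =
      (∑ σ : EdgeOrdering n, ((unm (history σ t)).card : ℝ) ^ 2 - F t) / 2 := by
    simp only [hF]
    rw [← Finset.sum_sub_distrib, Finset.sum_div]
    refine Finset.sum_congr rfl fun σ _ => ?_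
    rw [Nat.cast_choose_two]; ring
  have h4 : F t ^ 2 ≤ M * ∑ σ : EdgeOrdering n, ((unm (history σ t)).card : ℝ) ^ 2 := by
    have := sq_sum_le_card_mul_sum_sq (s := (Finset.univ : Finset (EdgeOrdering n)))
      (f := fun σ => ((unm (history σ t)).card : ℝ))
    simpa [hF, hM] using this
  have hQ0 : 0 ≤ Q := Finset.sum_nonneg fun σ _ => by split_ifs <;> norm_num
  have hN : (numEdges n : ℝ) ≤ (n : ℝ) ^ 2 / 2 := by
    rw [numEdges_eq, Nat.cast_choose_two]
    have : (0 : ℝ) ≤ n := Nat.cast_nonneg n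
    nlinarith
  have hn : (0 : ℝ) < (n : ℝ) ^ 2 := by
    have : 0 < numEdges n := t.pos
    have : (0 : ℝ) < numEdges n := by exact_mod_cast this
    linarith
  have h5 : F t ^ 2 / M - F t ≤ n ^ 2 * Q := by
    have : F t ^ 2 / M ≤ ∑ σ : EdgeOrdering n, ((unm (history σ t)).card : ℝ) ^ 2 := by
      rw [div_le_iff₀ hMp]; linarith
    nlinarith [mul_le_mul_of_nonneg_right hN hQ0]
  rw [heU, heU, h1]
  have h6 : 2 / (n : ℝ) ^ 2 * (F t / M * (F t / M - 1)) = 2 / (n : ℝ) ^ 2 * (F t ^ 2 / M - F t) / M := by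
    field_simp
  have h7 : 2 / (n : ℝ) ^ 2 * (F t ^ 2 / M - F t) ≤ 2 * Q := by
    rw [div_mul_eq_mul_div, div_le_iff₀ hn]; linarith
  have h8 := div_le_div_of_nonneg_right h7 hMp.le
  rw [h6, sub_div]
  linarith

theorem eU_bound (n t : ℕ) (hn : 0 < n) (ht : t ≤ numEdges n) :
    2 / (n : ℝ) ^ 2 * t * (eU n t - 1) ≤ 1 := by
  induction t with
  | zero => simp
  | succ t ih =>
    have ih := ih (by omega)
    have hs := eU_step n ⟨t, by omega⟩
    simp only at hs
    have hnr : (0 : ℝ) < n := by exact_mod_cast hn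
    set c : ℝ := 2 / (n : ℝ) ^ 2 with hc
    have hcp : 0 < c := by positivity
    have hu0 : 0 ≤ eU n t := div_nonneg (Finset.sum_nonneg fun σ _ => Nat.cast_nonneg _) (card_pos_EO n).le
    by_cases hw : eU n (t + 1) ≤ 1
    · have : c * ((t + 1 : ℕ) : ℝ) * (1 - eU n (t + 1)) ≥ 0 :=
        mul_nonneg (by positivity) (by linarith)
      linarith
    push Not at hw
    set u := eU n t
    set u' := eU n (t + 1)
    have htp : (0 : ℝ) ≤ t := Nat.cast_nonneg t
    have hu1 : 1 < u := by
      by_contra hcon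
      push Not at hcon
      -- u ≤ 1, c ≤ ... use monotonicity of the process
      have hm : u' ≤ u := by
        show eU n (t + 1) ≤ eU n t
        unfold eU
        apply div_le_div_of_nonneg_right _ (card_pos_EO n).le
        apply Finset.sum_le_sum
        intro σ _
        have := history_succ σ ⟨t, by omega⟩
        simp only at this
        rw [this, unm_snoc_card]
        · split_ifs <;> linarith
        · exact SimpleGraph.not_isDiag_of_mem_edgeSet _ (σ.symm ⟨t, by omega⟩).2
      linarith
    set w := u - 1 with hwdef
    have hw0 : 0 < w := by linarith
    have h1 : u' - 1 ≤ w * (1 - c * w) := by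
      have : c * (u * w) ≥ c * (w * w) := by
        apply mul_le_mul_of_nonneg_left _ hcp.le
        nlinarith
      nlinarith
    have h2 : 0 < 1 - c * w := by
      by_contra hcon
      push Not at hcon
      have : w * (1 - c * w) ≤ 0 := mul_nonpos_of_nonneg_of_nonpos hw0.le hcon
      linarith
    push_cast
    calc c * (t + 1) * (u' - 1) ≤ c * (t + 1) * (w * (1 - c * w)) := by gcongr
      _ = (c * t * w) * (1 - c * w) + c * w * (1 - c * w) := by ring
      _ ≤ 1 * (1 - c * w) + c * w * (1 - c * w) := by gcongr
      _ ≤ 1 := by nlinarith [sq_nonneg (c * w)]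

theorem sum_pi_eval {A : Type*} [Fintype A] (d : ℕ) (j : Fin d) (f : A → ℝ) :
    (∑ σ : Fin d → A, f (σ j)) * Fintype.card A = (∑ a, f a) * Fintype.card (Fin d → A) := by
  have e := Equiv.funSplitAt j A
  have hs : (∑ σ : Fin d → A, f (σ j)) = ∑ p : A × ({i // i ≠ j} → A), f p.1 :=
    Fintype.sum_equiv (Equiv.funSplitAt j A) _ _ (fun σ => rfl)
  have hc : Fintype.card (Fin d → A) = Fintype.card A * Fintype.card ({i // i ≠ j} → A) := by
    rw [Fintype.card_congr (Equiv.funSplitAt j A), Fintype.card_prod]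
  rw [hs, hc, Fintype.sum_prod_type]
  simp only [Finset.sum_const, Finset.card_univ, nsmul_eq_mul, ← Finset.mul_sum]
  push_cast
  ring

theorem main_bound (d n t : ℕ) (a : ℝ) (ha : 0 < a) :
    1 - d * eU n t / a ≤ Pr (fun σ : Fin d → EdgeOrdering n =>
          ((Finset.univ.filter (fun v : Fin n => ∃ j : Fin d,
              ∀ e ∈ greedyMatching (history (σ j) t), v ∉ e)).card : ℝ) ≤ a) := by
  set X : (Fin d → EdgeOrdering n) → ℝ := fun σ =>
    ((Finset.univ.filter (fun v : Fin n => ∃ j : Fin d,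
              ∀ e ∈ greedyMatching (history (σ j) t), v ∉ e)).card : ℝ) with hX
  have hM := card_pos_EO n
  have hK : (0 : ℝ) < (Fintype.card (Fin d → EdgeOrdering n) : ℝ) := by
    have : Nonempty (EdgeOrdering n) := ⟨Fintype.equivFin _⟩
    exact_mod_cast Fintype.card_pos
  have h1 : ∀ σ, X σ ≤ ∑ j, ((unm (history (σ j) t)).card : ℝ) := by
    intro σ
    have : (Finset.univ.filter (fun v : Fin n => ∃ j : Fin d,
              ∀ e ∈ greedyMatching (history (σ j) t), v ∉ e)) ⊆
        Finset.univ.biUnion (fun j => unm (history (σ j) t)) := by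
      intro v hv
      simpa [mem_unm] using hv
    have := (Finset.card_le_card this).trans Finset.card_biUnion_le
    simp only [hX]
    exact_mod_cast this
  have h2 : ∑ σ, X σ ≤ d * eU n t * Fintype.card (Fin d → EdgeOrdering n) := by
    calc ∑ σ, X σ ≤ ∑ σ : Fin d → EdgeOrdering n, ∑ j, ((unm (history (σ j) t)).card : ℝ) :=
          Finset.sum_le_sum fun σ _ => h1 σ
      _ = ∑ j : Fin d, ∑ σ : Fin d → EdgeOrdering n, ((unm (history (σ j) t)).card : ℝ) :=
          Finset.sum_comm
      _ = ∑ j : Fin d, eU n t * Fintype.card (Fin d → EdgeOrdering n) := by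
          refine Finset.sum_congr rfl fun j _ => ?_
          have := sum_pi_eval d j (fun s : EdgeOrdering n => ((unm (history s t)).card : ℝ))
          unfold eU
          rw [div_mul_eq_mul_div, eq_div_iff hM.ne']
          exact this
      _ = _ := by simp; ring
  have h3 : (Fintype.card (Fin d → EdgeOrdering n) : ℝ) - (Finset.univ.filter (fun σ => X σ ≤ a)).card
      ≤ (∑ σ, X σ) / a := by
    rw [le_div_iff₀ ha]
    have e1 : (Fintype.card (Fin d → EdgeOrdering n) : ℝ) - (Finset.univ.filter (fun σ => X σ ≤ a)).card
       = ∑ σ, (1 - if X σ ≤ a then (1 : ℝ) else 0) := by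
      rw [Finset.sum_sub_distrib, Finset.sum_boole]; simp
    rw [e1, Finset.sum_mul]
    refine Finset.sum_le_sum fun σ _ => ?_
    split_ifs with h
    · simp [hX]
    · push Not at h; simp; exact h.le
  unfold Pr
  rw [le_div_iff₀ hK]
  have h4 := div_le_div_of_nonneg_right h2 ha.le
  have e2 : (1 - d * eU n t / a) * (Fintype.card (Fin d → EdgeOrdering n) : ℝ) =
    (Fintype.card (Fin d → EdgeOrdering n) : ℝ) -
      d * eU n t * (Fintype.card (Fin d → EdgeOrdering n) : ℝ) / a := by ring
  rw [e2]
  have e3 : ((Finset.univ.filter (fun σ => X σ ≤ a)).card : ℝ) ≥ 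
    (Fintype.card (Fin d → EdgeOrdering n) : ℝ) -
      d * eU n t * (Fintype.card (Fin d → EdgeOrdering n) : ℝ) / a := by linarith
  convert e3 using 2

theorem Pr_le_one {α : Type*} [Fintype α] (P : α → Prop) : Pr P ≤ 1 := by
  unfold Pr
  apply div_le_one_of_le₀ _ (Nat.cast_nonneg _)
  exact_mod_cast Finset.card_le_univ _

/-- Fix `d ≥ 1`. Take `d` mutually independent uniformly random orderings of
the edges of `K_n` and form, for each, the greedy matching among the first
`⌊n·log n/ω⌋` edges. Then a.a.s. the set of vertices left unmatched by at least one
of the `d` greedy matchings has size at most `ω³·n/log n`. -/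
theorem statement4 (d : ℕ) (hd : 1 ≤ d) (ω : ℕ → ℝ)
    (hω : Tendsto ω atTop atTop)
    (hω' : Tendsto (fun n : ℕ => Real.log (ω n) / Real.log (Real.log n)) atTop (nhds 0)) :
    Tendsto (fun n =>
        Pr (fun σ : Fin d → EdgeOrdering n =>
          ((Finset.univ.filter (fun v : Fin n => ∃ j : Fin d,
              ∀ e ∈ greedyMatching (history (σ j) ⌊(n : ℝ) * Real.log n / ω n⌋₊),
                v ∉ e)).card : ℝ)
            ≤ ω n ^ 3 * n / Real.log n))
      atTop (nhds 1) := by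
  have hlim : Tendsto (fun n => 1 - 2 * (d : ℝ) / ω n ^ 2) atTop (nhds 1) := by
    have h1 : Tendsto (fun n => ω n ^ 2) atTop atTop :=
      (tendsto_pow_atTop (by norm_num)).comp hω
    have h2 := (tendsto_const_nhds (x := 2 * (d : ℝ))).div_atTop h1
    simpa using tendsto_const_nhds (x := (1 : ℝ)).sub h2
  refine tendsto_of_tendsto_of_tendsto_of_le_of_le' hlim tendsto_const_nhds ?_
    (Eventually.of_forall fun n => Pr_le_one _)
  have hlog : Tendsto (fun n : ℕ => Real.log n) atTop atTop :=
    Real.tendsto_log_atTop.comp tendsto_natCast_atTop_atTop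
  have hll : Tendsto (fun n : ℕ => Real.log (Real.log n)) atTop atTop :=
    Real.tendsto_log_atTop.comp hlog
  have hsmall : ∀ᶠ n : ℕ in atTop, Real.log n ≤ 1 / 4 * n := by
    have := (Real.isLittleO_log_id_atTop.comp_tendsto tendsto_natCast_atTop_atTop).bound
      (show (0 : ℝ) < 1 / 4 by norm_num)
    filter_upwards [this] with n hn
    simp only [Function.comp, id, Real.norm_eq_abs, Nat.abs_cast] at hn
    exact (le_abs_self _).trans hn
  filter_upwards [hω.eventually_ge_atTop 1, hlog.eventually_ge_atTop 1, hll.eventually_ge_atTop 1,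
    hω'.eventually_le_const (show (0 : ℝ) < 1 by norm_num), hsmall, eventually_ge_atTop 2]
    with n h1 h2 h3 h4 h5 h6
  have hn2 : (2 : ℝ) ≤ n := by exact_mod_cast h6
  have hωp : 0 < ω n := by linarith
  have hLp : 0 < Real.log n := by linarith
  have hωL : ω n ≤ Real.log n := by
    rw [div_le_one (by linarith)] at h4
    exact (Real.log_le_log_iff hωp hLp).1 h4
  set L := Real.log n
  set x := (n : ℝ) * L / ω n with hx
  have hxn : (n : ℝ) ≤ x := by
    rw [hx, le_div_iff₀ hωp]; gcongr
  have hTlow : x / 2 ≤ (⌊x⌋₊ : ℝ) := by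
    have := Nat.lt_floor_add_one x
    linarith
  have hThigh : ⌊x⌋₊ ≤ numEdges n := by
    rw [numEdges_eq]
    apply Nat.floor_le_of_le
    rw [Nat.cast_choose_two]
    have : x ≤ n * L := div_le_self (by positivity) h1
    nlinarith
  have hb := eU_bound n ⌊x⌋₊ (by omega) hThigh
  have ha : 0 < ω n ^ 3 * n / L := by positivity
  refine le_trans ?_ (main_bound d n ⌊x⌋₊ _ ha)
  have hu : eU n ⌊x⌋₊ ≤ 2 * (n * ω n / L) := by
    have hone : 1 ≤ n * ω n / L := by
      rw [le_div_iff₀ hLp]; nlinarith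
    by_cases hc : eU n ⌊x⌋₊ ≤ 1
    · linarith
    push Not at hc
    have h7 : 2 / (n : ℝ) ^ 2 * (x / 2) * (eU n ⌊x⌋₊ - 1) ≤ 1 := by
      refine le_trans ?_ hb
      have : 0 ≤ eU n ⌊x⌋₊ - 1 := by linarith
      gcongr
    have h8 : 2 / (n : ℝ) ^ 2 * (x / 2) = 1 / (n * ω n / L) := by
      rw [hx]; field_simp
    rw [h8, div_mul_eq_mul_div, div_le_one (by positivity)] at h7
    linarith
  have : d * eU n ⌊x⌋₊ / (ω n ^ 3 * n / L) ≤ 2 * d / ω n ^ 2 := by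
    calc d * eU n ⌊x⌋₊ / (ω n ^ 3 * n / L) ≤ d * (2 * (n * ω n / L)) / (ω n ^ 3 * n / L) := by gcongr
      _ = 2 * d / ω n ^ 2 := by field_simp
  linarith

end
end

section
/- Let d ≥ 2 be an integer and let G be a finite graph with maximum degree at most d. Let H be an induced subgraph of G such that: (i) every vertex of G of degree at most d−2 in G belongs to V(H); (ii) every vertex of degree exactly 1 in H has degree d in G; and (iii) every neighbour in G of a vertex of V(H) ∖ L(H) belongs to V(H), where L(H) denotes the set of vertices of degree 1 in H. Let G' be the induced subgraph of G on the vertex set V(G) ∖ (V(H) ∖ L(H)). Then every vertex of G' has degree d−1 or d in G', and the number of vertices of degree d−1 in G' is at most |L(H)| + |{v ∈ V(G) : deg_G(v) = d−1}|. -/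
open Finset

/-- Let `d ≥ 2` and let `G` be a finite graph of maximum degree at most `d`.
Let `H` be the induced subgraph of `G` on a vertex set `W` such that: (i) every vertex of
degree at most `d−2` in `G` lies in `W`; (ii) every vertex of degree `1` in `H` has degree
`d` in `G`; (iii) every `G`-neighbour of a vertex of `W ∖ L(H)` lies in `W`, where `L(H)`
is the set of vertices of degree `1` in `H`.  Let `G'` be the induced subgraph of `G` on
`V(G) ∖ (W ∖ L(H))`.  Then every vertex of `G'` has degree `d−1` or `d` in `G'`, and the
number of vertices of degree `d−1` in `G'` is at most `|L(H)| + #{v : deg_G v = d−1}`.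
(Degrees in the induced subgraphs are expressed by counting neighbours inside the
corresponding vertex set.) -/
theorem statement5 {V : Type*} [Fintype V] [DecidableEq V] (d : ℕ) (hd : 2 ≤ d)
    (G : SimpleGraph V) [DecidableRel G.Adj]
    (hmax : ∀ v, (Finset.univ.filter (fun u => G.Adj v u)).card ≤ d)
    (W : Finset V)
    (hi : ∀ v, (Finset.univ.filter (fun u => G.Adj v u)).card ≤ d - 2 → v ∈ W)
    (L : Finset V)
    (hL : L = W.filter (fun v => (W.filter (fun u => G.Adj v u)).card = 1))
    (hii : ∀ v ∈ L, (Finset.univ.filter (fun u => G.Adj v u)).card = d)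
    (hiii : ∀ v ∈ W \ L, ∀ u, G.Adj v u → u ∈ W) :
    (∀ v ∈ Finset.univ \ (W \ L),
        ((Finset.univ \ (W \ L)).filter (fun u => G.Adj v u)).card = d - 1 ∨
        ((Finset.univ \ (W \ L)).filter (fun u => G.Adj v u)).card = d) ∧
    ((Finset.univ \ (W \ L)).filter
        (fun v => ((Finset.univ \ (W \ L)).filter (fun u => G.Adj v u)).card = d - 1)).card
      ≤ L.card +
        (Finset.univ.filter
          (fun v => (Finset.univ.filter (fun u => G.Adj v u)).card = d - 1)).card := by
  have hsum : ∀ v, ((Finset.univ \ (W \ L)).filter (fun u => G.Adj v u)).card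
      + ((W \ L).filter (fun u => G.Adj v u)).card
      = (Finset.univ.filter (fun u => G.Adj v u)).card := by
    intro v
    rw [← Finset.card_union_of_disjoint]
    · congr 1
      ext u
      simp only [Finset.mem_union, Finset.mem_filter, Finset.mem_sdiff, Finset.mem_univ]
      tauto
    · rw [Finset.disjoint_left]
      intro u
      simp only [Finset.mem_filter, Finset.mem_sdiff, Finset.mem_univ]
      tauto
  have hLone : ∀ v ∈ L, ((W \ L).filter (fun u => G.Adj v u)).card ≤ 1 := by
    intro v hv
    have h1 : (W.filter (fun u => G.Adj v u)).card = 1 := by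
      rw [hL] at hv
      exact (Finset.mem_filter.mp hv).2
    rw [← h1]
    exact Finset.card_le_card (Finset.filter_subset_filter _ Finset.sdiff_subset)
  have hout : ∀ v, v ∉ W → ((W \ L).filter (fun u => G.Adj v u)).card = 0 := by
    intro v hv
    rw [Finset.card_eq_zero, Finset.filter_eq_empty_iff]
    intro u hu huv
    exact hv (hiii u hu v huv.symm)
  have hcase : ∀ v ∈ Finset.univ \ (W \ L), v ∈ L ∨ v ∉ W := by
    intro v hv
    simp only [Finset.mem_sdiff, Finset.mem_univ] at hv
    tauto
  refine ⟨?_, ?_⟩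
  · intro v hv
    have h := hsum v
    rcases hcase v hv with hl | hw
    · have h1 := hLone v hl
      have h2 := hii v hl
      omega
    · have h1 := hout v hw
      have h2 := hmax v
      have h3 := mt (hi v) hw
      omega
  · refine le_trans (Finset.card_le_card ?_) (Finset.card_union_le _ _)
    intro v hv
    rw [Finset.mem_filter] at hv
    rw [Finset.mem_union]
    rcases hcase v hv.1 with hl | hw
    · exact Or.inl hl
    · right
      rw [Finset.mem_filter]
      refine ⟨Finset.mem_univ _, ?_⟩
      rw [← hsum v, hout v hw, hv.2, add_zero]
end

section
/- Let d ≥ 2 be an integer and let G be a finite graph on a vertex set V with |V| ≥ d+1. Suppose that every nonempty U ⊆ V with |N_G(U)| ≤ d−1 and U ∪ N_G(U) ≠ V satisfies |U| ≤ 6, and let B ⊆ V be the union of all such sets U. If G' is a graph on the same vertex set V with E(G) ⊆ E(G') in which every vertex of B has degree at least d+5, then G' is d-connected. -/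
open Finset SimpleGraph
open scoped Classical

noncomputable section

/-- The external neighbourhood `N_G(U) = (⋃_{u ∈ U} N_G(u)) ∖ U` of a vertex set `U`. -/
def extNbhd {V : Type*} [Fintype V] [DecidableEq V] (G : SimpleGraph V) (U : Finset V) :
    Finset V :=
  Finset.univ.filter (fun v => v ∉ U ∧ ∃ u ∈ U, G.Adj u v)

/-- Let `d ≥ 2` and let `G` be a finite graph on a vertex set `V` with
`|V| ≥ d + 1`.  Suppose that every nonempty `U ⊆ V` with `|N_G(U)| ≤ d − 1` and
`U ∪ N_G(U) ≠ V` satisfies `|U| ≤ 6`, and let `B` be the union of all such sets `U`.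
If `G'` is a graph on the same vertex set containing all edges of `G` in which every
vertex of `B` has degree at least `d + 5`, then `G'` is `d`-connected. -/
theorem statement7 {V : Type*} [Fintype V] [DecidableEq V] (d : ℕ) (hd : 2 ≤ d)
    (G G' : SimpleGraph V) (hcard : d + 1 ≤ Fintype.card V)
    (hsmall : ∀ U : Finset V, U.Nonempty → (extNbhd G U).card ≤ d - 1 →
      U ∪ extNbhd G U ≠ Finset.univ → U.card ≤ 6)
    (B : Finset V)
    (hB : ∀ v, v ∈ B ↔ ∃ U : Finset V, U.Nonempty ∧ (extNbhd G U).card ≤ d - 1 ∧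
      U ∪ extNbhd G U ≠ Finset.univ ∧ v ∈ U)
    (hle : G ≤ G')
    (hdeg : ∀ v ∈ B, d + 5 ≤ (Finset.univ.filter (fun u => G'.Adj v u)).card) :
    IsKConnected d G' := by
  refine ⟨hcard, fun S hS => ?_⟩
  have hne : ∃ a, a ∉ S := by
    by_contra h
    push Not at h
    have h2 : S = Finset.univ := Finset.eq_univ_iff_forall.2 h
    rw [h2, Finset.card_univ] at hS
    omega
  obtain ⟨a, ha⟩ := hne
  haveI : Nonempty ↑((↑S : Set V)ᶜ) := ⟨⟨a, by simpa using ha⟩⟩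
  refine SimpleGraph.Connected.mk ?_
  intro x y
  by_contra hxy
  let U : Finset V := Finset.univ.filter
    (fun v => ∃ h : v ∈ ((↑S : Set V)ᶜ), (G'.induce ((↑S : Set V)ᶜ)).Reachable x ⟨v, h⟩)
  have hU : ∀ v, v ∈ U ↔ ∃ h : v ∈ ((↑S : Set V)ᶜ),
      (G'.induce ((↑S : Set V)ᶜ)).Reachable x ⟨v, h⟩ := by
    intro v
    simp [U]
  have hxU : x.1 ∈ U := (hU _).2 ⟨x.2, SimpleGraph.Reachable.refl _⟩
  have hclosed : ∀ u ∈ U, ∀ v, G'.Adj u v → v ∈ U ∨ v ∈ S := by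
    intro u hu v huv
    by_cases hv : v ∈ S
    · exact Or.inr hv
    · left
      obtain ⟨h, hr⟩ := (hU u).1 hu
      have hv' : v ∈ ((↑S : Set V)ᶜ) := by simpa using hv
      refine (hU v).2 ⟨hv', hr.trans (SimpleGraph.Adj.reachable ?_)⟩
      simpa using huv
  have hsub : extNbhd G U ⊆ S := by
    intro v hv
    obtain ⟨hvU, u, hu, huv⟩ := (Finset.mem_filter.1 hv).2
    exact (hclosed u hu v (hle huv)).resolve_left hvU
  have hNc : (extNbhd G U).card ≤ d - 1 := (Finset.card_le_card hsub).trans hS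
  have hyS : y.1 ∉ S := fun h => y.2 (Finset.mem_coe.2 h)
  have hneq : U ∪ extNbhd G U ≠ Finset.univ := by
    intro h
    have hy : y.1 ∈ U ∪ extNbhd G U := by rw [h]; exact Finset.mem_univ _
    rcases Finset.mem_union.1 hy with hy | hy
    · obtain ⟨_, hr⟩ := (hU _).1 hy
      exact hxy hr
    · exact hyS (hsub hy)
  have h6 := hsmall U ⟨_, hxU⟩ hNc hneq
  have hdx := hdeg x.1 ((hB _).2 ⟨U, ⟨_, hxU⟩, hNc, hneq, hxU⟩)
  have hs2 : Finset.univ.filter (fun u => G'.Adj x.1 u) ⊆ U.erase x.1 ∪ S := by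
    intro v hv
    have hadj := (Finset.mem_filter.1 hv).2
    rcases hclosed _ hxU v hadj with h | h
    · exact Finset.mem_union_left _ (Finset.mem_erase.2 ⟨hadj.ne', h⟩)
    · exact Finset.mem_union_right _ h
  have h1 := Finset.card_le_card hs2
  have h2 := Finset.card_union_le (U.erase x.1) S
  have h3 := Finset.card_erase_of_mem hxU
  omega

end
end
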